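/- arXiv:2601.01853 — 3 statements merged into one kernel-verified Lean document; each statement's English description precedes it below -/
import Mathlib

section
/- Sufficient descent inequality for AdaGrad-Norm: there exists a sequence of real-valued random variables (X̂_n)_{n≥1} with X̂_n 𝓕_n-measurable, integrable, and E[X̂_n | 𝓕_{n−1}] = 0 almost surely, such that almost surely for every n ≥ 1, ĝ(θ_{n+1}) − ĝ(θ_n) ≤ −(α₀/4)·ζ(n) + C_{Γ,1}·Γ_n + C_{Γ,2}·Γ_n/√S_n + α₀·X̂_n. -/
open MeasureTheory Filter

/-- The quadratic upper bound for a function with Lipschitz gradient. -/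
theorem le_add_inner_gradient_add_sq {E : Type*} [NormedAddCommGroup E] [InnerProductSpace ℝ E]
    [CompleteSpace E] {g : E → ℝ} {L : ℝ} (hg : Differentiable ℝ g)
    (hL : ∀ x y, ‖gradient g x - gradient g y‖ ≤ L * ‖x - y‖) (x v : E) :
    g (x + v) ≤ g x + inner ℝ (gradient g x) v + L / 2 * ‖v‖ ^ 2 := by
  let h : ℝ → ℝ := fun t =>
    g (x + t • v) - (t * inner ℝ (gradient g x) v + L / 2 * ‖v‖ ^ 2 * t ^ 2)
  have hd : ∀ t, HasDerivAt h (inner ℝ (gradient g (x + t • v)) v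
      - (inner ℝ (gradient g x) v + L * ‖v‖ ^ 2 * t)) t := by
    intro t
    have h1 : HasDerivAt (fun t : ℝ => x + t • v) v t := by
      simpa using ((hasDerivAt_id t).smul_const v).const_add x
    have h2 := (hg (x + t • v)).hasFDerivAt.comp_hasDerivAt t h1
    rw [← inner_gradient_left] at h2
    have h3 : HasDerivAt (fun t : ℝ => t * inner ℝ (gradient g x) v + L / 2 * ‖v‖ ^ 2 * t ^ 2)
        (inner ℝ (gradient g x) v + L * ‖v‖ ^ 2 * t) t := by
      refine (((hasDerivAt_id' t).mul_const (inner ℝ (gradient g x) v)).add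
        ((hasDerivAt_pow 2 t).const_mul (L / 2 * ‖v‖ ^ 2))).congr_deriv ?_
      push_cast
      ring
    exact h2.sub h3
  have hanti : AntitoneOn h (Set.Icc 0 1) := by
    refine antitoneOn_of_deriv_nonpos (convex_Icc 0 1)
      (fun t _ => (hd t).continuousAt.continuousWithinAt)
      (fun t _ => (hd t).differentiableAt.differentiableWithinAt) fun t ht => ?_
    rw [interior_Icc] at ht
    rw [(hd t).deriv]
    have h1 := hL (x + t • v) x
    rw [add_sub_cancel_left, norm_smul, Real.norm_of_nonneg ht.1.le] at h1
    have h2 := real_inner_le_norm (gradient g (x + t • v) - gradient g x) v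
    rw [inner_sub_left] at h2
    nlinarith [mul_le_mul_of_nonneg_right h1 (norm_nonneg v)]
  have := hanti (Set.left_mem_Icc.2 zero_le_one) (Set.right_mem_Icc.2 zero_le_one) zero_le_one
  simp only [h, one_smul, zero_smul, add_zero] at this
  linarith

/-- The conditional Cauchy-Schwarz inequality. -/
theorem condExp_mul_sq_le {Ω : Type*} {m m0 : MeasurableSpace Ω} {μ : Measure Ω}
    {X Y : Ω → ℝ} (hX : MemLp X 2 μ) (hY : MemLp Y 2 μ) :
    ∀ᵐ ω ∂μ, (μ[fun ω => X ω * Y ω | m]) ω ^ 2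
      ≤ (μ[fun ω => X ω ^ 2 | m]) ω * (μ[fun ω => Y ω ^ 2 | m]) ω := by
  have hXY : Integrable (fun ω => X ω * Y ω) μ := hX.integrable_mul hY
  have hq : ∀ᵐ ω ∂μ, ∀ q : ℚ, 0 ≤ (μ[fun ω => X ω ^ 2 | m]) ω * (q * q)
      + (-2 * (μ[fun ω => X ω * Y ω | m]) ω) * q + (μ[fun ω => Y ω ^ 2 | m]) ω := by
    refine ae_all_iff.2 fun q => ?_
    have hsum := (condExp_add ((hX.integrable_sq.smul ((q : ℝ) * q)).add
      (hXY.smul (-2 * (q : ℝ)))) hY.integrable_sq m).trans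
      ((condExp_add (hX.integrable_sq.smul ((q : ℝ) * q)) (hXY.smul (-2 * (q : ℝ))) m).add
        EventuallyEq.rfl)
    have hnonneg : 0 ≤ᵐ[μ] μ[((q : ℝ) * q) • (fun ω => X ω ^ 2)
        + (-2 * (q : ℝ)) • (fun ω => X ω * Y ω) + fun ω => Y ω ^ 2 | m] := by
      refine condExp_nonneg (Eventually.of_forall fun ω => ?_)
      simp only [Pi.zero_apply, Pi.add_apply, Pi.smul_apply, smul_eq_mul]
      nlinarith [sq_nonneg (q * X ω - Y ω)]
    filter_upwards [hsum, hnonneg, condExp_smul ((q : ℝ) * q) (fun ω => X ω ^ 2) m,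
      condExp_smul (-2 * (q : ℝ)) (fun ω => X ω * Y ω) m] with ω h1 h2 h3 h4
    simp only [Pi.zero_apply, Pi.add_apply, Pi.smul_apply, smul_eq_mul] at h1 h2 h3 h4
    rw [h1, h3, h4] at h2
    linarith
  filter_upwards [hq] with ω hω
  have hall : ∀ x : ℝ, 0 ≤ (μ[fun ω => X ω ^ 2 | m]) ω * (x * x)
      + (-2 * (μ[fun ω => X ω * Y ω | m]) ω) * x + (μ[fun ω => Y ω ^ 2 | m]) ω := by
    intro x
    refine Rat.isDenseEmbedding_coe_real.dense.induction_on (p := fun x : ℝ =>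
      0 ≤ (μ[fun ω => X ω ^ 2 | m]) ω * (x * x)
      + (-2 * (μ[fun ω => X ω * Y ω | m]) ω) * x + (μ[fun ω => Y ω ^ 2 | m]) ω) x
      (isClosed_le (by fun_prop) (by fun_prop)) fun q => hω q
  have := discrim_le_zero hall
  rw [discrim] at this
  linarith

/-- The descent inequality for one AdaGrad-Norm step, before compensating the noise term. -/
theorem adagrad_pointwise_descent {α σ σ₁ L r s₀ s₁ a b c p g₀ g₁ : ℝ} (hα : 0 < α)
    (hσ : 0 ≤ σ) (hσ₁ : 0 ≤ σ₁) (hr : 0 < r) (hs₀ : r ≤ s₀) (hs₁ : 0 < s₁)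
    (hs : s₁ ^ 2 = s₀ ^ 2 + c ^ 2) (hb : 0 ≤ b)
    (hp : p ≤ a * c) (hba : b ≤ a + L * (α / s₁ * c))
    (hg : g₁ ≤ g₀ + -(α / s₁ * p) + L / 2 * (α / s₁ * c) ^ 2) :
    (g₁ + σ * α / 2 * (b ^ 2 / s₁)) - (g₀ + σ * α / 2 * (a ^ 2 / s₀))
      ≤ -(α / 4) * (a ^ 2 / s₀) + (α * σ₁ / (2 * r) + L * α ^ 2 / 2) * (c ^ 2 / s₁ ^ 2)
        + (σ * (2 * σ + 1) * α ^ 3 * L ^ 2 / 2) * (c ^ 2 / s₁ ^ 2 / s₁)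
        + α * (-(p / s₀) + a / s₀ * (c * (1 - s₀ / s₁))
          - (σ * a ^ 2 + σ₁) / (2 * s₀) * (1 - s₀ / s₁) ^ 2 + a ^ 2 / s₀ / 2) := by
  have h0 : 0 < s₀ := hr.trans_le hs₀
  have h01 : s₀ ≤ s₁ := by nlinarith [sq_nonneg c]
  obtain ⟨T, hT⟩ : ∃ T, T = 1 - s₀ / s₁ := ⟨_, rfl⟩
  have hTs : s₁ * T = s₁ - s₀ := by rw [hT]; field_simp
  have hT0 : 0 ≤ T := by rw [hT, sub_nonneg, div_le_one hs₁]; exact h01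
  have hT1 : T ≤ 1 := by rw [hT]; linarith [div_pos h0 hs₁]
  have hTc : T ≤ c ^ 2 / s₁ ^ 2 := by
    rw [le_div_iff₀ (by positivity)]
    nlinarith
  have hxy : 1 / s₁ = 1 / s₀ - T / s₀ := by rw [hT]; field_simp; ring
  rw [← hT]
  have e1 : -(α / s₁ * p) ≤ α * (-(p / s₀) + a / s₀ * (c * T)) := by
    have : α * (-(p / s₀) + a / s₀ * (c * T)) + α / s₁ * p = α * (T / s₀) * (a * c - p) := by
      rw [div_eq_mul_one_div α s₁, hxy]; field_simp; ring
    have h2 : 0 ≤ α * (T / s₀) * (a * c - p) := mul_nonneg (by positivity) (by linarith [hp])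
    linarith
  have hTT : T ^ 2 ≤ T := by nlinarith
  have e2 : α * (σ₁ / (2 * s₀) * T ^ 2) ≤ α * σ₁ / (2 * r) * (c ^ 2 / s₁ ^ 2) := by
    have h1 : σ₁ / (2 * s₀) ≤ σ₁ / (2 * r) := by gcongr
    calc α * (σ₁ / (2 * s₀) * T ^ 2) ≤ α * (σ₁ / (2 * r) * (c ^ 2 / s₁ ^ 2)) := by
          gcongr; exact hTT.trans hTc
      _ = _ := by ring
  have e3 : α * (σ * a ^ 2 / (2 * s₀) * T ^ 2)
      ≤ σ * α / 2 * (a ^ 2 / s₀) - σ * α / 2 * (a ^ 2 / s₁) := by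
    calc α * (σ * a ^ 2 / (2 * s₀) * T ^ 2) ≤ α * (σ * a ^ 2 / (2 * s₀) * T) := by gcongr
      _ = _ := by rw [div_eq_mul_one_div (a ^ 2) s₁, hxy]; field_simp; ring
  have e4 : σ * α / 2 * (b ^ 2 / s₁) ≤ σ * α / 2 * (a ^ 2 / s₁) + α / 4 * (a ^ 2 / s₁)
      + (σ * (2 * σ + 1) * α ^ 3 * L ^ 2 / 2) * (c ^ 2 / s₁ ^ 2 / s₁) := by
    have h1 : b ^ 2 ≤ (a + L * (α / s₁ * c)) ^ 2 := by gcongr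
    have h2 : σ * α / 2 * (b ^ 2 / s₁) ≤ σ * α / 2 * ((a + L * (α / s₁ * c)) ^ 2 / s₁) := by gcongr
    have h3 : σ * α / 2 * (a ^ 2 / s₁) + α / 4 * (a ^ 2 / s₁)
      + (σ * (2 * σ + 1) * α ^ 3 * L ^ 2 / 2) * (c ^ 2 / s₁ ^ 2 / s₁)
      - σ * α / 2 * ((a + L * (α / s₁ * c)) ^ 2 / s₁)
      = α / s₁ * (a / 2 - σ * L * (α / s₁ * c)) ^ 2 := by field_simp; ring
    have h4 : 0 ≤ α / s₁ * (a / 2 - σ * L * (α / s₁ * c)) ^ 2 := by positivity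
    linarith
  have e5 : α / 4 * (a ^ 2 / s₁) ≤ α / 4 * (a ^ 2 / s₀) := by gcongr
  have e6 : L / 2 * (α / s₁ * c) ^ 2 = L * α ^ 2 / 2 * (c ^ 2 / s₁ ^ 2) := by ring
  have e7 : (σ * a ^ 2 + σ₁) / (2 * s₀) * T ^ 2
      = σ * a ^ 2 / (2 * s₀) * T ^ 2 + σ₁ / (2 * s₀) * T ^ 2 := by ring
  rw [e7]
  linarith

/-- The noise term of one AdaGrad-Norm step is integrable, and its conditional expectation
absorbs half of the descent. -/
theorem condExp_adagrad_noise_le {Ω E : Type*} [NormedAddCommGroup E] [InnerProductSpace ℝ E]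
    [CompleteSpace E] {m m0 : MeasurableSpace Ω} {P : Measure Ω} [IsFiniteMeasure P]
    (hm : m ≤ m0) {u G : Ω → E} {s T : Ω → ℝ} {σ σ₁ r C : ℝ} (hσ : 0 ≤ σ) (hσ₁ : 0 ≤ σ₁)
    (hr : 0 < r) (hu : StronglyMeasurable[m] u) (hs : StronglyMeasurable[m] s)
    (hT : AEStronglyMeasurable T P) (hC : ∀ ω, ‖u ω‖ ≤ C) (hrs : ∀ ω, r ≤ s ω)
    (hT1 : ∀ ω, |T ω| ≤ 1) (hG : Integrable G P) (hG2 : Integrable (fun ω => ‖G ω‖ ^ 2) P)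
    (hmean : P[G | m] =ᵐ[P] u)
    (hvar : ∀ᵐ ω ∂P, (P[fun ω => ‖G ω‖ ^ 2 | m]) ω ≤ σ * ‖u ω‖ ^ 2 + σ₁) :
    Integrable (fun ω => -(inner ℝ (u ω) (G ω) / s ω) + ‖u ω‖ / s ω * (‖G ω‖ * T ω)
      - (σ * ‖u ω‖ ^ 2 + σ₁) / (2 * s ω) * T ω ^ 2) P ∧
    ∀ᵐ ω ∂P, (P[fun ω => -(inner ℝ (u ω) (G ω) / s ω) + ‖u ω‖ / s ω * (‖G ω‖ * T ω)
      - (σ * ‖u ω‖ ^ 2 + σ₁) / (2 * s ω) * T ω ^ 2 | m]) ω ≤ -(‖u ω‖ ^ 2 / s ω / 2) := by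
  have hs0 : ∀ ω, 0 < s ω := fun ω => hr.trans_le (hrs ω)
  have hsm : Measurable[m] s := hs.measurable
  have hum : Measurable[m] fun ω => ‖u ω‖ := hu.norm.measurable
  let v : Ω → E := fun ω => (-(s ω)⁻¹) • u ω
  let a : Ω → ℝ := fun ω => ‖u ω‖ / s ω
  let k : Ω → ℝ := fun ω => (σ * ‖u ω‖ ^ 2 + σ₁) / (2 * s ω)
  have hv : StronglyMeasurable[m] v := hsm.inv.neg.stronglyMeasurable.smul hu
  have ha : StronglyMeasurable[m] a := (hum.div hsm).stronglyMeasurable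
  have hk : StronglyMeasurable[m] k :=
    ((((hum.pow_const 2).const_mul σ).add_const σ₁).div (hsm.const_mul 2)).stronglyMeasurable
  have habd : ∀ ω, ‖a ω‖ ≤ C / r := fun ω => by
    have hC0 := (norm_nonneg _).trans (hC ω)
    rw [Real.norm_of_nonneg (div_nonneg (norm_nonneg _) (hs0 ω).le)]
    exact div_le_div₀ hC0 (hC ω) hr (hrs ω)
  have hvbd : ∀ ω, ‖v ω‖ ≤ C / r := fun ω => by
    refine le_trans (le_of_eq ?_) (habd ω)
    simp only [v, a, norm_smul, norm_neg, norm_inv, norm_div, norm_norm]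
    ring
  have hkbd : ∀ ω, ‖k ω‖ ≤ (σ * C ^ 2 + σ₁) / (2 * r) := fun ω => by
    have hC0 := (norm_nonneg _).trans (hC ω)
    have := hs0 ω
    rw [Real.norm_of_nonneg (by positivity)]
    have := hC ω
    have := hrs ω
    simp only [k]
    gcongr
  have hTL : MemLp T 2 P := MemLp.of_bound hT 1 (Eventually.of_forall hT1)
  have hGL : MemLp (fun ω => ‖G ω‖) 2 P :=
    ((memLp_two_iff_integrable_sq_norm hG.aestronglyMeasurable).2 hG2).norm
  have hGT : Integrable (fun ω => ‖G ω‖ * T ω) P := hGL.integrable_mul hTL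
  have hT2 : Integrable (fun ω => T ω ^ 2) P := hTL.integrable_sq
  have hi1 : Integrable (fun ω => innerSL ℝ (v ω) (G ω)) P :=
    (innerSL ℝ).integrable_of_bilin_of_bdd_left (C / r) (hv.mono hm).aestronglyMeasurable
      (Eventually.of_forall hvbd) hG
  have hi2 : Integrable (a * fun ω => ‖G ω‖ * T ω) P :=
    hGT.bdd_mul (ha.mono hm).aestronglyMeasurable (Eventually.of_forall habd)
  have hi3 : Integrable (k * fun ω => T ω ^ 2) P :=
    hT2.bdd_mul (hk.mono hm).aestronglyMeasurable (Eventually.of_forall hkbd)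
  have hW : (fun ω => -(inner ℝ (u ω) (G ω) / s ω) + ‖u ω‖ / s ω * (‖G ω‖ * T ω)
      - (σ * ‖u ω‖ ^ 2 + σ₁) / (2 * s ω) * T ω ^ 2)
      = ((fun ω => innerSL ℝ (v ω) (G ω)) + (a * fun ω => ‖G ω‖ * T ω))
        - (k * fun ω => T ω ^ 2) := by
    ext ω
    simp only [Pi.sub_apply, Pi.add_apply, Pi.mul_apply, v, a, k, innerSL_apply_apply,
      real_inner_smul_left]
    ring
  rw [hW]
  refine ⟨(hi1.add hi2).sub hi3, ?_⟩
  filter_upwards [condExp_sub (hi1.add hi2) hi3 m, condExp_add hi1 hi2 m,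
    condExp_bilin_of_stronglyMeasurable_left (innerSL ℝ) hv hi1 hG,
    condExp_mul_of_stronglyMeasurable_left ha hi2 hGT,
    condExp_mul_of_stronglyMeasurable_left hk hi3 hT2,
    condExp_mul_sq_le (m := m) hGL hTL, hmean, hvar,
    condExp_nonneg (m := m) (μ := P) (f := fun ω => T ω ^ 2)
      (Eventually.of_forall fun ω => sq_nonneg (T ω))] with ω h1 h2 h3 h4 h5 h6 h7 h8 h9
  simp only [Pi.sub_apply, Pi.add_apply, Pi.mul_apply, Pi.zero_apply] at h1 h2 h4 h5 h9
  have hinner : innerSL ℝ (v ω) (u ω) = -(s ω)⁻¹ * ‖u ω‖ ^ 2 := by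
    rw [innerSL_apply_apply, real_inner_smul_left, real_inner_self_eq_norm_sq]
  rw [h1, h2, h3, h4, h5, h7, hinner]
  simp only [a, k]
  have hs := hs0 ω
  set A := (P[fun ω => ‖G ω‖ * T ω | m]) ω
  set D := (P[fun ω => T ω ^ 2 | m]) ω
  have h10 : A ^ 2 ≤ (σ * ‖u ω‖ ^ 2 + σ₁) * D := h6.trans (mul_le_mul_of_nonneg_right h8 h9)
  rw [← sub_nonpos]
  have h11 : -(s ω)⁻¹ * ‖u ω‖ ^ 2 + ‖u ω‖ / s ω * A - (σ * ‖u ω‖ ^ 2 + σ₁) / (2 * s ω) * D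
      - -(‖u ω‖ ^ 2 / s ω / 2)
      = -((‖u ω‖ - A) ^ 2 + ((σ * ‖u ω‖ ^ 2 + σ₁) * D - A ^ 2)) / (2 * s ω) := by
    field_simp; ring
  rw [h11]
  exact div_nonpos_of_nonpos_of_nonneg (by nlinarith [sq_nonneg (‖u ω‖ - A)]) (by positivity)

/-- Sufficient descent inequality for AdaGrad-Norm (Lemma 3.1). -/
theorem adagrad_norm_sufficient_descent
    {d : ℕ} {Ω : Type*} {m0 : MeasurableSpace Ω} (P : Measure Ω) [IsProbabilityMeasure P]
    (ℱ : Filtration ℕ m0)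
    (g : EuclideanSpace ℝ (Fin d) → ℝ)
    (L σ₀ σ₁ α₀ S₀ : ℝ)
    (hL : 0 < L) (hσ₀ : 0 ≤ σ₀) (hσ₁ : 0 ≤ σ₁) (hα₀ : 0 < α₀) (hS₀ : 0 < S₀)
    (hg_diff : ContDiff ℝ 1 g)
    (hg_nonneg : ∀ x, 0 ≤ g x)
    (hg_smooth : ∀ x y, ‖gradient g x - gradient g y‖ ≤ L * ‖x - y‖)
    (θ₁ : EuclideanSpace ℝ (Fin d))
    (G θ : ℕ → Ω → EuclideanSpace ℝ (Fin d))
    (S : ℕ → Ω → ℝ)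
    (hG_meas : ∀ n, 1 ≤ n → StronglyMeasurable[ℱ n] (G n))
    (hG_int : ∀ n, 1 ≤ n → Integrable (G n) P)
    (hG_sq_int : ∀ n, 1 ≤ n → Integrable (fun ω => ‖G n ω‖ ^ 2) P)
    (hθ_adapted : ∀ n, 1 ≤ n → StronglyMeasurable[ℱ (n - 1)] (θ n))
    (hθ_init : ∀ ω, θ 1 ω = θ₁)
    (hS_init : ∀ ω, S 0 ω = S₀)
    (hS_rec : ∀ n, 1 ≤ n → ∀ ω, S n ω = S (n - 1) ω + ‖G n ω‖ ^ 2)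
    (hθ_rec : ∀ n, 1 ≤ n → ∀ ω,
      θ (n + 1) ω = θ n ω - (α₀ / Real.sqrt (S n ω)) • G n ω)
    (hG_unbiased : ∀ n, 1 ≤ n →
      P[G n | ℱ (n - 1)] =ᵐ[P] fun ω => gradient g (θ n ω))
    (hG_var : ∀ n, 1 ≤ n → ∀ᵐ ω ∂P,
      (P[fun ω => ‖G n ω‖ ^ 2 | ℱ (n - 1)]) ω ≤ σ₀ * ‖gradient g (θ n ω)‖ ^ 2 + σ₁) :
    ∃ Xhat : ℕ → Ω → ℝ,
      (∀ n, 1 ≤ n → StronglyMeasurable[ℱ n] (Xhat n)) ∧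
      (∀ n, 1 ≤ n → Integrable (Xhat n) P) ∧
      (∀ n, 1 ≤ n → P[Xhat n | ℱ (n - 1)] =ᵐ[P] 0) ∧
      (∀ᵐ ω ∂P, ∀ n, 1 ≤ n →
        (g (θ (n + 1) ω)
            + σ₀ * α₀ / 2 * (‖gradient g (θ (n + 1) ω)‖ ^ 2 / Real.sqrt (S n ω)))
          - (g (θ n ω)
            + σ₀ * α₀ / 2 * (‖gradient g (θ n ω)‖ ^ 2 / Real.sqrt (S (n - 1) ω)))
        ≤ -(α₀ / 4) * (‖gradient g (θ n ω)‖ ^ 2 / Real.sqrt (S (n - 1) ω))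
          + (α₀ * σ₁ / (2 * Real.sqrt S₀) + L * α₀ ^ 2 / 2) * (‖G n ω‖ ^ 2 / S n ω)
          + (σ₀ * (2 * σ₀ + 1) * α₀ ^ 3 * L ^ 2 / 2)
              * (‖G n ω‖ ^ 2 / S n ω / Real.sqrt (S n ω))
          + α₀ * Xhat n ω) := by
  have hSpos : ∀ n ω, S₀ ≤ S n ω := by
    intro n ω
    induction n with
    | zero => exact (hS_init ω).ge
    | succ n ih =>
      rw [hS_rec (n + 1) (by omega) ω, Nat.add_sub_cancel]
      linarith [sq_nonneg ‖G (n + 1) ω‖]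
  have hSmeas : ∀ n, Measurable[ℱ n] (S n) := by
    intro n
    induction n with
    | zero => rw [funext hS_init]; exact measurable_const
    | succ n ih =>
      rw [funext (hS_rec (n + 1) (by omega)), Nat.add_sub_cancel]
      exact (ih.mono (ℱ.mono n.le_succ) le_rfl).add
        ((hG_meas (n + 1) (by omega)).norm.measurable.pow_const 2)
  have hgrad : Continuous (gradient g) :=
    (LipschitzWith.of_dist_le_mul (K := L.toNNReal) fun x y => by
      simpa [dist_eq_norm, hL.le] using hg_smooth x y).continuous
  have hsqrt : ∀ n ω, 0 < √(S n ω) := fun n ω => Real.sqrt_pos.2 (hS₀.trans_le (hSpos n ω))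
  have hstep : ∀ n, 1 ≤ n → ∀ ω, ‖θ (n + 1) ω - θ n ω‖ = α₀ / √(S n ω) * ‖G n ω‖ := by
    intro n hn ω
    rw [hθ_rec n hn ω, sub_sub_cancel_left, norm_neg, norm_smul,
      Real.norm_of_nonneg (div_nonneg hα₀.le (hsqrt n ω).le)]
  have hGS : ∀ n, 1 ≤ n → ∀ ω, ‖G n ω‖ ≤ √(S n ω) := by
    intro n hn ω
    refine Real.le_sqrt_of_sq_le ?_
    rw [hS_rec n hn ω]
    linarith [hSpos (n - 1) ω]
  have hbdd : ∀ n, 1 ≤ n → ∃ C, ∀ ω, ‖gradient g (θ n ω)‖ ≤ C := by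
    intro n hn
    induction n, hn using Nat.le_induction with
    | base => exact ⟨‖gradient g θ₁‖, fun ω => by rw [hθ_init]⟩
    | succ n hn ih =>
      obtain ⟨C, hC⟩ := ih
      refine ⟨C + L * α₀, fun ω => ?_⟩
      have h1 : ‖θ (n + 1) ω - θ n ω‖ ≤ α₀ := by
        rw [hstep n hn ω, div_mul_eq_mul_div, div_le_iff₀ (hsqrt n ω)]
        exact mul_le_mul_of_nonneg_left (hGS n hn ω) hα₀.le
      have h2 := norm_le_norm_add_norm_sub (gradient g (θ n ω)) (gradient g (θ (n + 1) ω))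
      have h3 := (hg_smooth (θ (n + 1) ω) (θ n ω)).trans (mul_le_mul_of_nonneg_left h1 hL.le)
      rw [norm_sub_rev] at h3
      linarith [hC ω]
  have key : ∀ n, 1 ≤ n → ∃ X : Ω → ℝ, StronglyMeasurable[ℱ n] X ∧ Integrable X P ∧
      P[X | ℱ (n - 1)] =ᵐ[P] 0 ∧ ∀ᵐ ω ∂P,
        (g (θ (n + 1) ω)
            + σ₀ * α₀ / 2 * (‖gradient g (θ (n + 1) ω)‖ ^ 2 / Real.sqrt (S n ω)))
          - (g (θ n ω)
            + σ₀ * α₀ / 2 * (‖gradient g (θ n ω)‖ ^ 2 / Real.sqrt (S (n - 1) ω)))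
        ≤ -(α₀ / 4) * (‖gradient g (θ n ω)‖ ^ 2 / Real.sqrt (S (n - 1) ω))
          + (α₀ * σ₁ / (2 * Real.sqrt S₀) + L * α₀ ^ 2 / 2) * (‖G n ω‖ ^ 2 / S n ω)
          + (σ₀ * (2 * σ₀ + 1) * α₀ ^ 3 * L ^ 2 / 2)
              * (‖G n ω‖ ^ 2 / S n ω / Real.sqrt (S n ω))
          + α₀ * X ω := by
    intro n hn
    obtain ⟨C, hC⟩ := hbdd n hn
    have hle : ℱ (n - 1) ≤ ℱ n := ℱ.mono (Nat.sub_le n 1)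
    have hu : StronglyMeasurable[ℱ (n - 1)] fun ω => gradient g (θ n ω) :=
      hgrad.comp_stronglyMeasurable (hθ_adapted n hn)
    have hs : Measurable[ℱ (n - 1)] fun ω => √(S (n - 1) ω) := (hSmeas (n - 1)).sqrt
    have hs' : Measurable[ℱ n] fun ω => √(S (n - 1) ω) := hs.mono hle le_rfl
    have hu' : Measurable[ℱ n] fun ω => ‖gradient g (θ n ω)‖ := (hu.mono hle).norm.measurable
    have hT : Measurable[ℱ n] fun ω => 1 - √(S (n - 1) ω) / √(S n ω) :=
      (hs'.div (hSmeas n).sqrt).const_sub 1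
    have hT1 : ∀ ω, |1 - √(S (n - 1) ω) / √(S n ω)| ≤ 1 := fun ω => by
      have h1 : √(S (n - 1) ω) / √(S n ω) ≤ 1 := by
        rw [div_le_one (hsqrt n ω), hS_rec n hn ω]
        exact Real.sqrt_le_sqrt (by linarith [sq_nonneg ‖G n ω‖])
      have h2 := div_pos (hsqrt (n - 1) ω) (hsqrt n ω)
      rw [abs_le]
      constructor <;> linarith
    have hmeas : StronglyMeasurable[ℱ n] fun ω =>
        -(inner ℝ (gradient g (θ n ω)) (G n ω) / √(S (n - 1) ω))
        + ‖gradient g (θ n ω)‖ / √(S (n - 1) ω) * (‖G n ω‖ * (1 - √(S (n - 1) ω) / √(S n ω)))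
        - (σ₀ * ‖gradient g (θ n ω)‖ ^ 2 + σ₁) / (2 * √(S (n - 1) ω))
          * (1 - √(S (n - 1) ω) / √(S n ω)) ^ 2 := by
      have hin : Measurable[ℱ n] fun ω => inner ℝ (gradient g (θ n ω)) (G n ω) :=
        ((hu.mono hle).inner (hG_meas n hn)).measurable
      exact (((hin.div hs').neg.add ((hu'.div hs').mul ((hG_meas n hn).norm.measurable.mul hT))).sub
        (((((hu'.pow_const 2).const_mul σ₀).add_const σ₁).div (hs'.const_mul 2)).mul
          (hT.pow_const 2))).stronglyMeasurable
    obtain ⟨hWint, hWle⟩ := condExp_adagrad_noise_le (ℱ.le (n - 1)) hσ₀ hσ₁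
      (Real.sqrt_pos.2 hS₀) hu hs.stronglyMeasurable
      (hT.stronglyMeasurable.mono (ℱ.le n)).aestronglyMeasurable hC
      (fun ω => Real.sqrt_le_sqrt (hSpos (n - 1) ω)) hT1 (hG_int n hn) (hG_sq_int n hn)
      (hG_unbiased n hn) (hG_var n hn)
    set W : Ω → ℝ := fun ω =>
        -(inner ℝ (gradient g (θ n ω)) (G n ω) / √(S (n - 1) ω))
        + ‖gradient g (θ n ω)‖ / √(S (n - 1) ω) * (‖G n ω‖ * (1 - √(S (n - 1) ω) / √(S n ω)))
        - (σ₀ * ‖gradient g (θ n ω)‖ ^ 2 + σ₁) / (2 * √(S (n - 1) ω))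
          * (1 - √(S (n - 1) ω) / √(S n ω)) ^ 2
    refine ⟨W - P[W | ℱ (n - 1)], hmeas.sub (stronglyMeasurable_condExp.mono hle),
      hWint.sub integrable_condExp, ?_, ?_⟩
    · refine (condExp_sub hWint integrable_condExp _).trans ?_
      rw [condExp_of_stronglyMeasurable (ℱ.le (n - 1)) stronglyMeasurable_condExp
        integrable_condExp, sub_self]
    · filter_upwards [hWle] with ω hω
      have hsq : ∀ k, √(S k ω) ^ 2 = S k ω := fun k =>
        Real.sq_sqrt (hS₀.le.trans (hSpos k ω))
      have hsub : θ (n + 1) ω = θ n ω + -(α₀ / √(S n ω)) • G n ω := by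
        rw [hθ_rec n hn ω, neg_smul, sub_eq_add_neg]
      have hnorm : ‖-(α₀ / √(S n ω)) • G n ω‖ = α₀ / √(S n ω) * ‖G n ω‖ := by
        rw [← hstep n hn ω, hsub, add_sub_cancel_left]
      have hdesc := le_add_inner_gradient_add_sq (hg_diff.differentiable one_ne_zero) hg_smooth
        (θ n ω) (-(α₀ / √(S n ω)) • G n ω)
      rw [← hsub, hnorm, real_inner_smul_right, neg_mul] at hdesc
      have hba : ‖gradient g (θ (n + 1) ω)‖
          ≤ ‖gradient g (θ n ω)‖ + L * (α₀ / √(S n ω) * ‖G n ω‖) := by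
        have h1 := norm_le_norm_add_norm_sub' (gradient g (θ (n + 1) ω)) (gradient g (θ n ω))
        have h2 := hg_smooth (θ (n + 1) ω) (θ n ω)
        rw [hstep n hn ω] at h2
        linarith
      have hmain := adagrad_pointwise_descent hα₀ hσ₀ hσ₁ (Real.sqrt_pos.2 hS₀)
        (Real.sqrt_le_sqrt (hSpos (n - 1) ω)) (hsqrt n ω)
        (by rw [hsq, hsq, hS_rec n hn ω]) (norm_nonneg _)
        (real_inner_le_norm (gradient g (θ n ω)) (G n ω)) hba hdesc
      rw [hsq n] at hmain
      refine hmain.trans ?_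
      have hX : W ω + ‖gradient g (θ n ω)‖ ^ 2 / √(S (n - 1) ω) / 2
          ≤ (W - P[W | ℱ (n - 1)]) ω := by
        rw [Pi.sub_apply]; linarith
      exact add_le_add_right (mul_le_mul_of_nonneg_left hX hα₀.le) _
  choose! X hX using key
  exact ⟨X, fun n hn => (hX n hn).1, fun n hn => (hX n hn).2.1, fun n hn => (hX n hn).2.2.1,
    ae_all_iff.2 fun n => eventually_imp_distrib_left.2 fun hn => (hX n hn).2.2.2⟩
end

section
/- Stability of iterates for AdaGrad-Norm: if in addition g is coercive (g(θ) → +∞ as ‖θ‖ → +∞), then sup_{n≥1} ‖θ_n‖ < +∞ almost surely. -/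
open MeasureTheory Filter

theorem ae_bddAbove_partialSums_of_integral_le {Ω : Type*} {m0 : MeasurableSpace Ω}
    {P : Measure Ω} {f : ℕ → Ω → ℝ} {C : ℝ}
    (hf0 : ∀ k, 0 ≤ᵐ[P] f k) (hfi : ∀ k, Integrable (f k) P)
    (hC : ∀ n, ∑ k ∈ Finset.range n, ∫ ω, f k ω ∂P ≤ C) :
    ∀ᵐ ω ∂P, ∃ B : ℝ, ∀ n, ∑ k ∈ Finset.range n, f k ω ≤ B := by
  have hle : ∑' k, ∫⁻ ω, ENNReal.ofReal (f k ω) ∂P ≤ ENNReal.ofReal C := by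
    refine ENNReal.tsum_le_of_sum_range_le fun n => ?_
    simp_rw [← fun k => ofReal_integral_eq_lintegral_ofReal (hfi k) (hf0 k)]
    rw [← ENNReal.ofReal_sum_of_nonneg fun k _ => integral_nonneg_of_ae (hf0 k)]
    exact ENNReal.ofReal_le_ofReal (hC n)
  rw [← lintegral_tsum fun k => (hfi k).1.aemeasurable.ennreal_ofReal] at hle
  have hfin := ae_lt_top' (AEMeasurable.tsum
    fun k => (hfi k).1.aemeasurable.ennreal_ofReal) (hle.trans_lt ENNReal.ofReal_lt_top).ne
  filter_upwards [hfin, ae_all_iff.2 hf0] with ω hω h0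
  refine ⟨(∑' k, ENNReal.ofReal (f k ω)).toReal, fun n => ?_⟩
  rw [← ENNReal.ofReal_le_iff_le_toReal hω.ne, ENNReal.ofReal_sum_of_nonneg fun k _ => h0 k]
  exact ENNReal.sum_le_tsum _

theorem integral_mul_condExp_of_stronglyMeasurable {Ω : Type*} {m m0 : MeasurableSpace Ω}
    {P : Measure Ω} [IsFiniteMeasure P] (hm : m ≤ m0) {f h : Ω → ℝ} (hf : StronglyMeasurable[m] f)
    (hfb : MemLp f ⊤ P) (hh : Integrable h P) :
    ∫ ω, f ω * (P[h | m]) ω ∂P = ∫ ω, f ω * h ω ∂P := by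
  rw [← integral_condExp hm (f := fun ω => f ω * h ω)]
  refine integral_congr_ae ?_
  exact (condExp_mul_of_stronglyMeasurable_left hf (hh.mul_of_top_right hfb) hh).symm

theorem ae_bdd_sum_sub_condExp {Ω : Type*} {m0 : MeasurableSpace Ω}
    {P : Measure Ω} [IsProbabilityMeasure P] (ℱ : Filtration ℕ m0) {Y : ℕ → Ω → ℝ} {C : ℝ}
    (hYm : ∀ k, StronglyMeasurable[ℱ (k + 1)] (Y k)) (hYb : ∀ k, MemLp (Y k) ⊤ P)
    (hC : ∀ n, ∑ k ∈ Finset.range n, ∫ ω, Y k ω ^ 2 ∂P ≤ C) :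
    ∀ᵐ ω ∂P, ∃ B : ℝ, ∀ n, |∑ k ∈ Finset.range n, (Y k ω - (P[Y k | ℱ k]) ω)| ≤ B := by
  have top_int : ∀ {f : Ω → ℝ}, MemLp f ⊤ P → Integrable f P := fun h => h.integrable le_top
  have hRb : ∀ k, MemLp (P[Y k | ℱ k]) ⊤ P := fun k => (hYb k).condExp le_top
  have hYi : ∀ k, Integrable (Y k) P := fun k => top_int (hYb k)
  set M : ℕ → Ω → ℝ := fun n ω => ∑ k ∈ Finset.range n, (Y k ω - (P[Y k | ℱ k]) ω) with hM
  have hMsucc : ∀ n ω, M (n + 1) ω = M n ω + (Y n ω - (P[Y n | ℱ n]) ω) := fun n ω =>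
    Finset.sum_range_succ _ _
  have hMm : ∀ n, StronglyMeasurable[ℱ n] (M n) := fun n =>
    Finset.stronglyMeasurable_fun_sum _ fun k hk =>
      ((hYm k).mono (ℱ.mono (Finset.mem_range.1 hk))).sub
        (stronglyMeasurable_condExp.mono (ℱ.mono (Finset.mem_range.1 hk).le))
  have hMb : ∀ n, MemLp (M n) ⊤ P := fun n =>
    memLp_finsetSum _ fun k _ => (hYb k).sub (hRb k)
  have hmart : Martingale M ℱ P := by
    refine martingale_of_condExp_sub_eq_zero_nat hMm (fun n => top_int (hMb n)) fun n => ?_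
    have h1 : M (n + 1) - M n = Y n - P[Y n | ℱ n] := by
      ext ω; simp [hMsucc]
    rw [h1]
    refine (condExp_sub (hYi n) (top_int (hRb n)) _).trans ?_
    rw [condExp_of_stronglyMeasurable (ℱ.le n) stronglyMeasurable_condExp (top_int (hRb n))]
    simp
  have hsq : ∀ n, ∫ ω, M n ω ^ 2 ∂P ≤ ∑ k ∈ Finset.range n, ∫ ω, Y k ω ^ 2 ∂P := by
    intro n
    induction n with
    | zero => simp [hM]
    | succ n ih =>
      rw [Finset.sum_range_succ]
      have hNb : MemLp (fun ω => M n ω - (P[Y n | ℱ n]) ω) ⊤ P := (hMb n).sub (hRb n)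
      have hNm : StronglyMeasurable[ℱ n] (fun ω => M n ω - (P[Y n | ℱ n]) ω) :=
        (hMm n).sub stronglyMeasurable_condExp
      have hpull := integral_mul_condExp_of_stronglyMeasurable (ℱ.le n) hNm hNb (hYi n)
      have mulI : ∀ {f h : Ω → ℝ}, MemLp f ⊤ P → MemLp h ⊤ P →
          Integrable (fun ω => f ω * h ω) P := fun hf hh => (top_int hh).mul_of_top_right hf
      calc ∫ ω, M (n + 1) ω ^ 2 ∂P
          = ∫ ω, ((M n ω - (P[Y n | ℱ n]) ω) * (M n ω - (P[Y n | ℱ n]) ω)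
              + 2 * ((M n ω - (P[Y n | ℱ n]) ω) * Y n ω) + Y n ω * Y n ω) ∂P := by
            congr 1; ext ω; rw [hMsucc]; ring
        _ = ∫ ω, (M n ω - (P[Y n | ℱ n]) ω) * (M n ω - (P[Y n | ℱ n]) ω) ∂P
              + 2 * ∫ ω, (M n ω - (P[Y n | ℱ n]) ω) * (P[Y n | ℱ n]) ω ∂P
              + ∫ ω, Y n ω * Y n ω ∂P := by
            have h12 : Integrable (fun ω => (M n ω - (P[Y n | ℱ n]) ω) * (M n ω - (P[Y n | ℱ n]) ω)
                + 2 * ((M n ω - (P[Y n | ℱ n]) ω) * Y n ω)) P :=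
              (mulI hNb hNb).add ((mulI hNb (hYb n)).const_mul 2)
            rw [integral_add h12 (mulI (hYb n) (hYb n)), integral_add (mulI hNb hNb)
              ((mulI hNb (hYb n)).const_mul 2), integral_const_mul, hpull]
        _ = ∫ ω, (M n ω * M n ω - (P[Y n | ℱ n]) ω * (P[Y n | ℱ n]) ω) ∂P
              + ∫ ω, Y n ω * Y n ω ∂P := by
            rw [← integral_const_mul, ← integral_add (mulI hNb hNb)
              ((mulI hNb (hRb n)).const_mul 2)]
            congr 2; ext ω; ring
        _ ≤ ∫ ω, M n ω ^ 2 ∂P + ∫ ω, Y n ω ^ 2 ∂P := by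
            rw [integral_sub (mulI (hMb n) (hMb n)) (mulI (hRb n) (hRb n))]
            have : 0 ≤ ∫ ω, (P[Y n | ℱ n]) ω * (P[Y n | ℱ n]) ω ∂P :=
              integral_nonneg fun ω => mul_self_nonneg _
            simp only [pow_two]; linarith
        _ ≤ _ := by linarith
  have hL1 : ∀ n, eLpNorm (M n) 1 P ≤ (Real.toNNReal (1 + C) : ENNReal) := by
    intro n
    rw [eLpNorm_one_eq_lintegral_enorm, ← ofReal_integral_norm_eq_lintegral_enorm (top_int (hMb n))]
    refine ENNReal.ofReal_le_ofReal ?_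
    have hi : Integrable (fun ω => M n ω ^ 2) P := by
      simp only [pow_two]; exact (top_int (hMb n)).mul_of_top_right (hMb n)
    calc ∫ ω, ‖M n ω‖ ∂P ≤ ∫ ω, (1 + M n ω ^ 2) ∂P := by
          refine integral_mono (top_int (hMb n)).norm ((integrable_const 1).add hi) fun ω => ?_
          simp only [Real.norm_eq_abs]
          nlinarith [sq_abs (M n ω), sq_nonneg (|M n ω| - 1)]
      _ = 1 + ∫ ω, M n ω ^ 2 ∂P := by rw [integral_add (integrable_const 1) hi]; simp
      _ ≤ 1 + C := by linarith [hsq n, hC n]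
  filter_upwards [hmart.submartingale.exists_ae_tendsto_of_bdd hL1] with ω ⟨c, hc⟩
  obtain ⟨B, hB⟩ := (Metric.isBounded_range_of_tendsto _ hc).exists_norm_le
  exact ⟨B, fun n => hB _ ⟨n, rfl⟩⟩

theorem MeasureTheory.MemLp.fun_mul_top {Ω : Type*} {m0 : MeasurableSpace Ω} {P : Measure Ω}
    {f h : Ω → ℝ} (hf : MemLp f ⊤ P) (hh : MemLp h ⊤ P) : MemLp (fun ω => f ω * h ω) ⊤ P :=
  hh.mul hf

theorem half_mul_sq_le_condExp_add {Ω : Type*} {m m0 : MeasurableSpace Ω}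
    {P : Measure Ω} [IsFiniteMeasure P] (hm : m ≤ m0) {p b a c W W' Γ : Ω → ℝ}
    {B σ₀ σ₁ : ℝ} (hσ₀ : 0 ≤ σ₀) (hσ₁ : 0 < σ₁)
    (hpm : StronglyMeasurable[m] p) (hbm : StronglyMeasurable[m] b)
    (hWm : StronglyMeasurable[m] W)
    (hW'm : AEStronglyMeasurable W' P) (hΓm : AEStronglyMeasurable Γ P)
    (hp0 : ∀ ω, 0 ≤ p ω) (hp1 : ∀ ω, p ω ≤ 1) (hpb : ∀ ω, p ω * b ω ^ 2 ≤ B)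
    (hb : MemLp b ⊤ P) (hW : MemLp W ⊤ P)
    (hc : Integrable c P) (ha : Integrable (fun ω => a ω ^ 2) P)
    (hcab : ∀ ω, |c ω| ≤ b ω * a ω)
    (hΓ0 : ∀ ω, 0 ≤ Γ ω) (hΓ1 : ∀ ω, Γ ω ≤ 1) (hW'0 : ∀ ω, 0 ≤ W' ω)
    (hW'W : ∀ ω, W' ω ≤ W ω) (hWΓ : ∀ ω, W ω - W' ω ≤ Γ ω * W ω)
    (hcond : P[c | m] =ᵐ[P] fun ω => b ω ^ 2)
    (hvar : ∀ᵐ ω ∂P, (P[fun ω => a ω ^ 2 | m]) ω ≤ σ₀ * b ω ^ 2 + σ₁) :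
    ∀ᵐ ω ∂P, 1 / 2 * (p ω * W ω * b ω ^ 2) ≤ (P[fun ω => p ω * c ω * W' ω | m]) ω
      + (B * σ₀ + σ₁) / 2 * (P[fun ω => Γ ω * W ω | m]) ω := by
  have top_int : ∀ {f : Ω → ℝ}, MemLp f ⊤ P → Integrable f P := fun h => h.integrable le_top
  have hW0 : ∀ ω, 0 ≤ W ω := fun ω => (hW'0 ω).trans (hW'W ω)
  have hpt : MemLp p ⊤ P := memLp_top_of_bound (hpm.mono hm).aestronglyMeasurable 1
    (ae_of_all _ fun ω => by simpa [abs_of_nonneg (hp0 ω)] using hp1 ω)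
  have hΓt : MemLp Γ ⊤ P := memLp_top_of_bound hΓm 1
    (ae_of_all _ fun ω => by simpa [abs_of_nonneg (hΓ0 ω)] using hΓ1 ω)
  have hW't : MemLp W' ⊤ P := hW.mono hW'm (ae_of_all _ fun ω => by
    simpa [abs_of_nonneg (hW'0 ω), abs_of_nonneg (hW0 ω)] using hW'W ω)
  set l : Ω → ℝ := fun ω => b ω ^ 2 / (2 * (σ₀ * b ω ^ 2 + σ₁)) with hl
  have hD : ∀ ω, 0 < σ₀ * b ω ^ 2 + σ₁ := fun ω => by positivity
  have hlm : StronglyMeasurable[m] l :=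
    (hbm.pow 2).div (((hbm.pow 2).const_mul σ₀).add_const σ₁ |>.const_mul 2)
  have hb2 : MemLp (fun ω => 1 / (2 * σ₁) * (b ω * b ω)) ⊤ P :=
    (hb.fun_mul_top hb).const_mul _
  have hlt : MemLp l ⊤ P := hb2.mono (hlm.mono hm).aestronglyMeasurable
    (ae_of_all _ fun ω => by
      have h1 : 0 ≤ l ω := by have := hD ω; positivity
      have h2 : l ω ≤ 1 / (2 * σ₁) * (b ω * b ω) := by
        have h3 : 0 ≤ σ₀ * b ω ^ 2 := by positivity
        rw [one_div_mul_eq_div, ← pow_two]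
        exact div_le_div_of_nonneg_left (sq_nonneg _) (by positivity) (by linarith)
      rw [Real.norm_of_nonneg h1, Real.norm_of_nonneg (h1.trans h2)]
      exact h2)
  have hpW : MemLp (fun ω => p ω * W ω) ⊤ P := hpt.fun_mul_top hW
  have hpWm : StronglyMeasurable[m] (fun ω => p ω * W ω) := hpm.mul hWm
  have hlpW : MemLp (fun ω => l ω * (p ω * W ω)) ⊤ P := hlt.fun_mul_top hpW
  have hlpWm : StronglyMeasurable[m] (fun ω => l ω * (p ω * W ω)) := hlm.mul hpWm
  have i1 : Integrable (fun ω => p ω * W ω * c ω) P := hc.mul_of_top_right hpW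
  have i2 : Integrable (fun ω => l ω * (p ω * W ω) * a ω ^ 2) P := ha.mul_of_top_right hlpW
  have i3 : Integrable (fun ω => (B * σ₀ + σ₁) / 2 * (Γ ω * W ω)) P :=
    (top_int (hΓt.fun_mul_top hW)).const_mul _
  have i4 : Integrable (fun ω => p ω * c ω * W' ω) P := by
    have : Integrable (fun ω => p ω * W' ω * c ω) P :=
      hc.mul_of_top_right (hpt.fun_mul_top hW't)
    exact this.congr (ae_of_all _ fun ω => by ring)
  have key : (fun ω => p ω * W ω * c ω) ≤ᵐ[P] (fun ω => p ω * c ω * W' ω)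
      + ((fun ω => l ω * (p ω * W ω) * a ω ^ 2)
      + fun ω => (B * σ₀ + σ₁) / 2 * (Γ ω * W ω)) := by
    refine ae_of_all _ fun ω => ?_
    simp only [Pi.add_apply]
    have hy : b ω * a ω * Γ ω ≤ l ω * a ω ^ 2 + (σ₀ * b ω ^ 2 + σ₁) / 2 * Γ ω ^ 2 := by
      have hDω := hD ω
      have : l ω * a ω ^ 2 + (σ₀ * b ω ^ 2 + σ₁) / 2 * Γ ω ^ 2 - b ω * a ω * Γ ω
          = (b ω * a ω - (σ₀ * b ω ^ 2 + σ₁) * Γ ω) ^ 2 / (2 * (σ₀ * b ω ^ 2 + σ₁)) := by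
        simp only [hl]; field_simp; ring
      have h2 : 0 ≤ (b ω * a ω - (σ₀ * b ω ^ 2 + σ₁) * Γ ω) ^ 2 / (2 * (σ₀ * b ω ^ 2 + σ₁)) := by
        positivity
      linarith
    have hpD : p ω * (σ₀ * b ω ^ 2 + σ₁) ≤ B * σ₀ + σ₁ := by
      nlinarith [mul_le_mul_of_nonneg_right (hpb ω) hσ₀, mul_le_mul_of_nonneg_right (hp1 ω) hσ₁.le]
    have hc1 : c ω * (W ω - W' ω) ≤ b ω * a ω * (Γ ω * W ω) := by
      have h0 : 0 ≤ b ω * a ω := (abs_nonneg _).trans (hcab ω)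
      calc c ω * (W ω - W' ω) ≤ b ω * a ω * (W ω - W' ω) :=
            mul_le_mul_of_nonneg_right ((le_abs_self _).trans (hcab ω)) (by linarith [hW'W ω])
        _ ≤ _ := mul_le_mul_of_nonneg_left (hWΓ ω) h0
    have hc2 : p ω * (c ω * (W ω - W' ω)) ≤ p ω * W ω * (b ω * a ω * Γ ω) :=
      (mul_le_mul_of_nonneg_left hc1 (hp0 ω)).trans_eq (by ring)
    have hc3 := mul_le_mul_of_nonneg_left hy (mul_nonneg (hp0 ω) (hW0 ω))
    have hc4 : p ω * (σ₀ * b ω ^ 2 + σ₁) * (W ω * Γ ω ^ 2) ≤ (B * σ₀ + σ₁) * (Γ ω * W ω) := by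
      have h0 : 0 ≤ B * σ₀ + σ₁ := (mul_nonneg (hp0 ω) (hD ω).le).trans hpD
      have h5 : W ω * Γ ω ^ 2 ≤ Γ ω * W ω := by
        nlinarith [mul_nonneg (mul_nonneg (hW0 ω) (hΓ0 ω)) (sub_nonneg.2 (hΓ1 ω))]
      exact mul_le_mul hpD h5 (mul_nonneg (hW0 ω) (sq_nonneg _)) h0
    nlinarith
  have hmono := condExp_mono (m := m) i1 (i4.add (i2.add i3)) key
  filter_upwards [hmono, condExp_add i4 (i2.add i3) m, condExp_add i2 i3 m,
    condExp_mul_of_stronglyMeasurable_left (g := c) hpWm i1 hc,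
    condExp_mul_of_stronglyMeasurable_left (g := fun ω => a ω ^ 2) hlpWm i2 ha,
    condExp_smul ((B * σ₀ + σ₁) / 2) (fun ω => Γ ω * W ω) m (μ := P), hcond, hvar]
    with ω h1 h2 h3 h4 h5 h6 h7 h8
  have h4' : (P[fun ω => p ω * W ω * c ω | m]) ω = p ω * W ω * (P[c | m]) ω := h4
  have h5' : (P[fun ω => l ω * (p ω * W ω) * a ω ^ 2 | m]) ω
    = l ω * (p ω * W ω) * (P[fun ω => a ω ^ 2 | m]) ω := h5
  have h6' : (P[fun ω => (B * σ₀ + σ₁) / 2 * (Γ ω * W ω) | m]) ω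
    = (B * σ₀ + σ₁) / 2 * (P[fun ω => Γ ω * W ω | m]) ω := h6
  rw [h2, Pi.add_apply, h3, Pi.add_apply, h4', h5', h6', h7] at h1
  have hl0 : 0 ≤ l ω := by have := hD ω; positivity
  have h9 := mul_le_mul_of_nonneg_left h8 (mul_nonneg hl0 (mul_nonneg (hp0 ω) (hW0 ω)))
  have h10 : l ω * (p ω * W ω) * (σ₀ * b ω ^ 2 + σ₁) = 1 / 2 * (p ω * W ω * b ω ^ 2) := by
    have := hD ω
    simp only [hl]; field_simp
  linarith

/-- A real-valued abstraction of AdaGrad-Norm: `u` is a nonnegative potential of the iterates, `p`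
its derivative with respect to the objective, `b` the gradient norm, `a` the norm of the stochastic
gradient, `c` its inner product with the gradient, and `S` the accumulated step-size
denominator. -/
structure IsAdaGradPotential {Ω : Type*} {m0 : MeasurableSpace Ω} (P : Measure Ω)
    (ℱ : Filtration ℕ m0) (u p b a c S : ℕ → Ω → ℝ) (α γ B σ₀ σ₁ s : ℝ) : Prop where
  α_pos : 0 < α
  γ_nonneg : 0 ≤ γ
  B_nonneg : 0 ≤ B
  σ₀_nonneg : 0 ≤ σ₀
  σ₁_pos : 0 < σ₁
  s_pos : 0 < s
  meas_p : ∀ k, StronglyMeasurable[ℱ k] (p k)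
  meas_b : ∀ k, StronglyMeasurable[ℱ k] (b k)
  meas_S : ∀ k, StronglyMeasurable[ℱ k] (S k)
  meas_a : ∀ k, StronglyMeasurable[ℱ (k + 1)] (a k)
  meas_c : ∀ k, StronglyMeasurable[ℱ (k + 1)] (c k)
  u_bdd : ∀ k, MemLp (u k) ⊤ P
  b_bdd : ∀ k, MemLp (b k) ⊤ P
  u_nonneg : ∀ k ω, 0 ≤ u k ω
  p_nonneg : ∀ k ω, 0 ≤ p k ω
  p_le_one : ∀ k ω, p k ω ≤ 1
  b_nonneg : ∀ k ω, 0 ≤ b k ω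
  p_mul_sq_le : ∀ k ω, p k ω * b k ω ^ 2 ≤ B
  a_nonneg : ∀ k ω, 0 ≤ a k ω
  abs_c_le : ∀ k ω, |c k ω| ≤ b k ω * a k ω
  s_le : ∀ k ω, s ≤ S k ω
  S_succ : ∀ k ω, S (k + 1) ω = S k ω + a k ω ^ 2
  u_succ_le : ∀ k ω, u (k + 1) ω ≤ u k ω - α * (p k ω * c k ω * (√(S (k + 1) ω))⁻¹)
    + γ * (p k ω * (a k ω ^ 2 / S (k + 1) ω))
  integrable_c : ∀ k, Integrable (c k) P
  integrable_sq : ∀ k, Integrable (fun ω => a k ω ^ 2) P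
  condExp_c : ∀ k, P[c k | ℱ k] =ᵐ[P] fun ω => b k ω ^ 2
  condExp_sq_le : ∀ k, ∀ᵐ ω ∂P, (P[fun ω => a k ω ^ 2 | ℱ k]) ω ≤ σ₀ * b k ω ^ 2 + σ₁

namespace IsAdaGradPotential

theorem inv_sub_inv_eq {S S' x : ℝ} (hS : 0 < S) (h : S' = S + x ^ 2) :
    S⁻¹ - S'⁻¹ = x ^ 2 / S' * S⁻¹ := by
  have : 0 < S' := by rw [h]; positivity
  field_simp
  linarith

theorem inv_sqrt_sub_le {S S' x : ℝ} (hS : 0 < S) (h : S' = S + x ^ 2) :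
    (√S)⁻¹ - (√S')⁻¹ ≤ x ^ 2 / S' * (√S)⁻¹ := by
  have hS' : 0 < S' := by rw [h]; positivity
  have h1 := Real.sq_sqrt hS.le
  have h2 := Real.sq_sqrt hS'.le
  have h3 := Real.sqrt_pos.2 hS
  have h4 := Real.sqrt_pos.2 hS'
  have h5 : √S ≤ √S' := Real.sqrt_le_sqrt (by rw [h]; nlinarith)
  have e : x ^ 2 / S' = (√S' ^ 2 - √S ^ 2) / √S' ^ 2 := by rw [h1, h2, h]; ring
  rw [e]
  generalize √S = r at *
  generalize √S' = t at *
  have : (t ^ 2 - r ^ 2) / t ^ 2 * r⁻¹ - (r⁻¹ - t⁻¹) = (t - r) / t ^ 2 := by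
    field_simp; ring
  have : 0 ≤ (t - r) / t ^ 2 := div_nonneg (by linarith) (by positivity)
  linarith

theorem div_mul_inv_sqrt_le {S S' x : ℝ} (hS : 0 < S) (h : S' = S + x ^ 2) :
    x ^ 2 / S' * (√S)⁻¹ ≤ 2 * ((√S)⁻¹ - (√S')⁻¹) := by
  have hS' : 0 < S' := by rw [h]; positivity
  have h1 := Real.sq_sqrt hS.le
  have h2 := Real.sq_sqrt hS'.le
  have h3 := Real.sqrt_pos.2 hS
  have h4 := Real.sqrt_pos.2 hS'
  have e : x ^ 2 / S' = (√S' ^ 2 - √S ^ 2) / √S' ^ 2 := by rw [h1, h2, h]; ring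
  rw [e]
  generalize √S = r at *
  generalize √S' = t at *
  have : 2 * (r⁻¹ - t⁻¹) - (t ^ 2 - r ^ 2) / t ^ 2 * r⁻¹ = (t - r) ^ 2 / (t ^ 2 * r) := by
    field_simp; ring
  have : 0 ≤ (t - r) ^ 2 / (t ^ 2 * r) := by positivity
  linarith

variable {Ω : Type*} {m0 : MeasurableSpace Ω} {P : Measure Ω}
  {ℱ : Filtration ℕ m0} {u p b a c S : ℕ → Ω → ℝ} {α γ B σ₀ σ₁ s : ℝ}

section

variable (h : IsAdaGradPotential P ℱ u p b a c S α γ B σ₀ σ₁ s) (k : ℕ)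
include h

theorem S_pos (ω : Ω) : 0 < S k ω := h.s_pos.trans_le (h.s_le k ω)

theorem S_le_succ (ω : Ω) : S k ω ≤ S (k + 1) ω := by
  rw [h.S_succ]; linarith [sq_nonneg (a k ω)]

theorem ratio_nonneg (ω : Ω) : 0 ≤ a k ω ^ 2 / S (k + 1) ω :=
  div_nonneg (sq_nonneg _) (h.S_pos _ ω).le

theorem ratio_le_one (ω : Ω) : a k ω ^ 2 / S (k + 1) ω ≤ 1 := by
  rw [div_le_one (h.S_pos _ ω), h.S_succ]
  linarith [h.S_pos k ω]

theorem inv_succ_le (ω : Ω) : (S (k + 1) ω)⁻¹ ≤ (S k ω)⁻¹ :=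
  inv_anti₀ (h.S_pos k ω) (h.S_le_succ k ω)

theorem inv_sqrt_succ_le (ω : Ω) : (√(S (k + 1) ω))⁻¹ ≤ (√(S k ω))⁻¹ :=
  inv_anti₀ (Real.sqrt_pos.2 (h.S_pos k ω)) (Real.sqrt_le_sqrt (h.S_le_succ k ω))

theorem meas_inv : StronglyMeasurable[ℱ k] fun ω => (S k ω)⁻¹ :=
  (h.meas_S k).measurable.inv.stronglyMeasurable

theorem meas_inv_sqrt : StronglyMeasurable[ℱ k] fun ω => (√(S k ω))⁻¹ :=
  (h.meas_S k).measurable.sqrt.inv.stronglyMeasurable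

theorem memLp_inv : MemLp (fun ω => (S k ω)⁻¹) ⊤ P :=
  memLp_top_of_bound ((h.meas_inv k).mono (ℱ.le k)).aestronglyMeasurable s⁻¹
    (ae_of_all _ fun ω => by
      rw [Real.norm_of_nonneg (inv_nonneg.2 (h.S_pos k ω).le)]
      exact inv_anti₀ h.s_pos (h.s_le k ω))

theorem memLp_inv_sqrt : MemLp (fun ω => (√(S k ω))⁻¹) ⊤ P :=
  memLp_top_of_bound ((h.meas_inv_sqrt k).mono (ℱ.le k)).aestronglyMeasurable (√s)⁻¹
    (ae_of_all _ fun ω => by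
      rw [Real.norm_of_nonneg (inv_nonneg.2 (Real.sqrt_nonneg _))]
      exact inv_anti₀ (Real.sqrt_pos.2 h.s_pos) (Real.sqrt_le_sqrt (h.s_le k ω)))

theorem meas_ratio : StronglyMeasurable[ℱ (k + 1)] fun ω => a k ω ^ 2 / S (k + 1) ω :=
  ((h.meas_a k).measurable.pow_const 2 |>.div (h.meas_S (k + 1)).measurable).stronglyMeasurable

theorem memLp_ratio : MemLp (fun ω => a k ω ^ 2 / S (k + 1) ω) ⊤ P :=
  memLp_top_of_bound ((h.meas_ratio k).mono (ℱ.le _)).aestronglyMeasurable 1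
    (ae_of_all _ fun ω => by
      rw [Real.norm_of_nonneg (h.ratio_nonneg k ω)]
      exact h.ratio_le_one k ω)

theorem memLp_p : MemLp (p k) ⊤ P :=
  memLp_top_of_bound ((h.meas_p k).mono (ℱ.le _)).aestronglyMeasurable 1
    (ae_of_all _ fun ω => by
      rw [Real.norm_of_nonneg (h.p_nonneg k ω)]
      exact h.p_le_one k ω)

theorem integral_p_sq_step [IsProbabilityMeasure P] :
    (∫ ω, (u (k + 1) ω * (√(S (k + 1) ω))⁻¹ + 2 * γ * (√(S (k + 1) ω))⁻¹
        + α * (B * σ₀ + σ₁) / 2 * (S (k + 1) ω)⁻¹) ∂P)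
      + α / 2 * ∫ ω, p k ω * (S k ω)⁻¹ * b k ω ^ 2 ∂P
    ≤ ∫ ω, (u k ω * (√(S k ω))⁻¹ + 2 * γ * (√(S k ω))⁻¹
        + α * (B * σ₀ + σ₁) / 2 * (S k ω)⁻¹) ∂P := by
  have top_int : ∀ {f : Ω → ℝ}, MemLp f ⊤ P → Integrable f P := fun h => h.integrable le_top
  set K := B * σ₀ + σ₁ with hK
  have hdrift := half_mul_sq_le_condExp_add (P := P) (ℱ.le k) (W := fun ω => (S k ω)⁻¹)
    (W' := fun ω => (S (k + 1) ω)⁻¹) (Γ := fun ω => a k ω ^ 2 / S (k + 1) ω)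
    h.σ₀_nonneg h.σ₁_pos (h.meas_p k) (h.meas_b k) (h.meas_inv k)
    (h.memLp_inv (k + 1)).1 (h.memLp_ratio k).1 (h.p_nonneg k) (h.p_le_one k) (h.p_mul_sq_le k)
    (h.b_bdd k) (h.memLp_inv k) (h.integrable_c k) (h.integrable_sq k) (h.abs_c_le k)
    (h.ratio_nonneg k) (h.ratio_le_one k) (fun ω => inv_nonneg.2 (h.S_pos _ ω).le)
    (h.inv_succ_le k) (fun ω => (inv_sub_inv_eq (h.S_pos k ω) (h.S_succ k ω)).le)
    (h.condExp_c k) (h.condExp_sq_le k)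
  have ib : Integrable (fun ω => p k ω * (S k ω)⁻¹ * b k ω ^ 2) P := by
    have := top_int (((h.memLp_p k).fun_mul_top (h.memLp_inv k)).fun_mul_top
      ((h.b_bdd k).fun_mul_top (h.b_bdd k)))
    simpa only [pow_two] using this
  have ipc : Integrable (fun ω => p k ω * c k ω * (S (k + 1) ω)⁻¹) P := by
    have : Integrable (fun ω => p k ω * (S (k + 1) ω)⁻¹ * c k ω) P :=
      (h.integrable_c k).mul_of_top_right ((h.memLp_p k).fun_mul_top (h.memLp_inv (k + 1)))
    exact this.congr (ae_of_all _ fun ω => by ring)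
  have hint := integral_mono_ae (ib.const_mul (1 / 2))
    ((integrable_condExp (f := fun ω => p k ω * c k ω * (S (k + 1) ω)⁻¹) (m := ℱ k)).add
      ((integrable_condExp (f := fun ω => a k ω ^ 2 / S (k + 1) ω * (S k ω)⁻¹)
        (m := ℱ k)).const_mul (K / 2))) hdrift
  simp only [Pi.add_apply] at hint
  rw [integral_add integrable_condExp (integrable_condExp.const_mul _), integral_const_mul,
    integral_const_mul, integral_condExp, integral_condExp] at hint
  have iV : ∀ j, Integrable (fun ω => (S j ω)⁻¹) P := fun j => top_int (h.memLp_inv j)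
  have iΦ : ∀ j, Integrable (fun ω => u j ω * (√(S j ω))⁻¹ + 2 * γ * (√(S j ω))⁻¹) P := fun j =>
    (top_int ((h.u_bdd j).fun_mul_top (h.memLp_inv_sqrt j))).add
      ((top_int (h.memLp_inv_sqrt j)).const_mul _)
  have hpt : ∀ ω, u (k + 1) ω * (√(S (k + 1) ω))⁻¹ + 2 * γ * (√(S (k + 1) ω))⁻¹
      ≤ u k ω * (√(S k ω))⁻¹ + 2 * γ * (√(S k ω))⁻¹
        - α * (p k ω * c k ω * (S (k + 1) ω)⁻¹) := by
    intro ω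
    have hW'0 : 0 ≤ (√(S (k + 1) ω))⁻¹ := inv_nonneg.2 (Real.sqrt_nonneg _)
    have hsq : (S (k + 1) ω)⁻¹ = (√(S (k + 1) ω))⁻¹ * (√(S (k + 1) ω))⁻¹ := by
      rw [← mul_inv, Real.mul_self_sqrt (h.S_pos _ ω).le]
    have hWW := h.inv_sqrt_succ_le k ω
    have h1 := mul_le_mul_of_nonneg_right (h.u_succ_le k ω) hW'0
    have h2 := mul_le_mul_of_nonneg_left hWW (h.u_nonneg k ω)
    have h3 := div_mul_inv_sqrt_le (h.S_pos k ω) (h.S_succ k ω)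
    have h4 : p k ω * (a k ω ^ 2 / S (k + 1) ω) * (√(S (k + 1) ω))⁻¹
        ≤ 1 * (a k ω ^ 2 / S (k + 1) ω) * (√(S k ω))⁻¹ := by
      have := h.ratio_nonneg k ω
      have := h.p_le_one k ω
      gcongr
    rw [one_mul] at h4
    have h5 := mul_le_mul_of_nonneg_left (h4.trans h3) h.γ_nonneg
    rw [hsq]
    nlinarith
  have hint2 := integral_mono (iΦ (k + 1)) ((iΦ k).sub (ipc.const_mul α)) hpt
  simp only [Pi.sub_apply] at hint2
  rw [integral_sub (iΦ k) (ipc.const_mul α), integral_const_mul] at hint2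
  have hVV : ∫ ω, a k ω ^ 2 / S (k + 1) ω * (S k ω)⁻¹ ∂P
      = ∫ ω, (S k ω)⁻¹ ∂P - ∫ ω, (S (k + 1) ω)⁻¹ ∂P := by
    rw [← integral_sub (iV k) (iV (k + 1))]
    exact integral_congr_ae (ae_of_all _ fun ω =>
      (inv_sub_inv_eq (h.S_pos k ω) (h.S_succ k ω)).symm)
  rw [integral_add (iΦ (k + 1)) ((iV (k + 1)).const_mul _), integral_const_mul,
    integral_add (iΦ k) ((iV k).const_mul _), integral_const_mul]
  rw [hVV] at hint
  have h7 := mul_le_mul_of_nonneg_left hint h.α_pos.le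
  linarith

end

theorem exists_sum_integral_p_sq_le [IsProbabilityMeasure P]
    (h : IsAdaGradPotential P ℱ u p b a c S α γ B σ₀ σ₁ s) :
    ∃ C, ∀ n, ∑ k ∈ Finset.range n, ∫ ω, p k ω * (S k ω)⁻¹ * b k ω ^ 2 ∂P ≤ C := by
  set Φ : ℕ → ℝ := fun k => ∫ ω, (u k ω * (√(S k ω))⁻¹ + 2 * γ * (√(S k ω))⁻¹
        + α * (B * σ₀ + σ₁) / 2 * (S k ω)⁻¹) ∂P with hΦ
  have hα := h.α_pos
  have hΦ0 : ∀ k, 0 ≤ Φ k := fun k => integral_nonneg fun ω => by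
    have := h.u_nonneg k ω
    have := (h.S_pos k ω).le
    have := h.γ_nonneg
    have := h.B_nonneg
    have := h.σ₀_nonneg
    have := h.σ₁_pos
    simp only [Pi.zero_apply]
    positivity
  have hind : ∀ n, α / 2 * ∑ k ∈ Finset.range n, ∫ ω, p k ω * (S k ω)⁻¹ * b k ω ^ 2 ∂P
      ≤ Φ 0 - Φ n := by
    intro n
    induction n with
    | zero => simp
    | succ n ih =>
      rw [Finset.sum_range_succ, mul_add]
      have := h.integral_p_sq_step n
      simp only [hΦ] at ih ⊢
      linarith
  refine ⟨Φ 0 / (α / 2), fun n => ?_⟩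
  rw [le_div_iff₀ (by positivity), mul_comm]
  linarith [hind n, hΦ0 n]

theorem ae_exists_le_add_of_excursion [IsProbabilityMeasure P]
    (h : IsAdaGradPotential P ℱ u p b a c S α γ B σ₀ σ₁ s) {δ : ℝ} (hδ : 0 < δ) :
    ∀ᵐ ω ∂P, ∃ C, ∀ m n, m ≤ n → (∀ j, m ≤ j → j < n → δ < b j ω) → u n ω ≤ u m ω + C := by
  have top_int : ∀ {f : Ω → ℝ}, MemLp f ⊤ P → Integrable f P := fun h => h.integrable le_top
  have hα := h.α_pos
  set K := B * σ₀ + σ₁ with hK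
  have hK0 : 0 ≤ K := by
    have := h.B_nonneg
    have := h.σ₀_nonneg
    have := h.σ₁_pos
    positivity
  obtain ⟨C₁, hC₁⟩ := h.exists_sum_integral_p_sq_le
  -- the multiplier restricted to the region where the gradient is bounded below
  set q : ℕ → Ω → ℝ := fun k => {ω | δ < b k ω}.indicator (p k) with hq
  have hset : ∀ k, MeasurableSet[ℱ k] {ω | δ < b k ω} := fun k =>
    measurableSet_lt measurable_const (h.meas_b k).measurable
  have hqm : ∀ k, StronglyMeasurable[ℱ k] (q k) := fun k => (h.meas_p k).indicator (hset k)
  have hq0 : ∀ k ω, 0 ≤ q k ω := fun k ω => Set.indicator_nonneg (fun _ _ => h.p_nonneg k _) _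
  have hqp : ∀ k ω, q k ω ≤ p k ω := fun k ω => by
    simp only [hq, Set.indicator_apply]
    split_ifs
    · exact le_rfl
    · exact h.p_nonneg k ω
  have hq1 : ∀ k ω, q k ω ≤ 1 := fun k ω => (hqp k ω).trans (h.p_le_one k ω)
  have hqB : ∀ k ω, q k ω * b k ω ^ 2 ≤ B := fun k ω =>
    (mul_le_mul_of_nonneg_right (hqp k ω) (sq_nonneg _)).trans (h.p_mul_sq_le k ω)
  have hqδ : ∀ k ω, q k ω * δ ^ 2 ≤ p k ω * b k ω ^ 2 := fun k ω => by
    simp only [hq, Set.indicator_apply]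
    split_ifs with hδb
    · have : δ < b k ω := hδb
      have := h.p_nonneg k ω
      gcongr
    · rw [zero_mul]; exact mul_nonneg (h.p_nonneg k ω) (sq_nonneg _)
  have hqt : ∀ k, MemLp (q k) ⊤ P := fun k =>
    memLp_top_of_bound ((hqm k).mono (ℱ.le _)).aestronglyMeasurable 1
      (ae_of_all _ fun ω => by rw [Real.norm_of_nonneg (hq0 k ω)]; exact hq1 k ω)
  set Γ : ℕ → Ω → ℝ := fun k ω => a k ω ^ 2 / S (k + 1) ω with hΓ
  have hdrift := fun k => half_mul_sq_le_condExp_add (P := P) (ℱ.le k)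
    (W := fun ω => (√(S k ω))⁻¹) (W' := fun ω => (√(S (k + 1) ω))⁻¹) (Γ := Γ k)
    h.σ₀_nonneg h.σ₁_pos (hqm k) (h.meas_b k) (h.meas_inv_sqrt k)
    (h.memLp_inv_sqrt (k + 1)).1 (h.memLp_ratio k).1 (hq0 k) (hq1 k) (hqB k)
    (h.b_bdd k) (h.memLp_inv_sqrt k) (h.integrable_c k) (h.integrable_sq k) (h.abs_c_le k)
    (h.ratio_nonneg k) (h.ratio_le_one k) (fun ω => inv_nonneg.2 (Real.sqrt_nonneg _))
    (h.inv_sqrt_succ_le k) (fun ω => inv_sqrt_sub_le (h.S_pos k ω) (h.S_succ k ω))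
    (h.condExp_c k) (h.condExp_sq_le k)
  set Y : ℕ → Ω → ℝ := fun k ω => q k ω * c k ω * (√(S (k + 1) ω))⁻¹ with hY
  set Q : ℕ → Ω → ℝ := fun k => P[fun ω => Γ k ω * (√(S k ω))⁻¹ | ℱ k] with hQ
  -- the predictable drift error is summable
  have iW : ∀ k, Integrable (fun ω => (√(S k ω))⁻¹) P := fun k => top_int (h.memLp_inv_sqrt k)
  have hQ0 : ∀ k, 0 ≤ᵐ[P] Q k := fun k => condExp_nonneg (ae_of_all _ fun ω =>
    mul_nonneg (h.ratio_nonneg k ω) (inv_nonneg.2 (Real.sqrt_nonneg _)))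
  have hQsum : ∀ n, ∑ k ∈ Finset.range n, ∫ ω, Q k ω ∂P ≤ 2 * ∫ ω, (√(S 0 ω))⁻¹ ∂P := by
    intro n
    have h0 : 0 ≤ ∫ ω, (√(S n ω))⁻¹ ∂P :=
      integral_nonneg fun ω => inv_nonneg.2 (Real.sqrt_nonneg _)
    suffices hs : ∑ k ∈ Finset.range n, ∫ ω, Q k ω ∂P
        ≤ 2 * ∫ ω, (√(S 0 ω))⁻¹ ∂P - 2 * ∫ ω, (√(S n ω))⁻¹ ∂P by linarith
    clear h0
    induction n with
    | zero => simp
    | succ n ih =>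
      have h1 : ∫ ω, Q n ω ∂P ≤ 2 * (∫ ω, (√(S n ω))⁻¹ ∂P - ∫ ω, (√(S (n + 1) ω))⁻¹ ∂P) := by
        rw [hQ, integral_condExp, ← integral_sub (iW n) (iW (n + 1)), ← integral_const_mul]
        exact integral_mono (top_int ((h.memLp_ratio n).fun_mul_top (h.memLp_inv_sqrt n)))
          (((iW n).sub (iW (n + 1))).const_mul 2)
          fun ω => div_mul_inv_sqrt_le (h.S_pos n ω) (h.S_succ n ω)
      rw [Finset.sum_range_succ]
      linarith
  have hQbdd := ae_bddAbove_partialSums_of_integral_le hQ0 (fun k => integrable_condExp) hQsum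
  -- the second-order error is summable
  have iqΓ : ∀ k, Integrable (fun ω => q k ω * Γ k ω) P := fun k =>
    top_int ((hqt k).fun_mul_top (h.memLp_ratio k))
  have hqΓ0 : ∀ k ω, 0 ≤ q k ω * Γ k ω := fun k ω => mul_nonneg (hq0 k ω) (h.ratio_nonneg k ω)
  have hqΓ1 : ∀ k, ∫ ω, q k ω * Γ k ω ∂P
      ≤ (σ₀ + σ₁ / δ ^ 2) * ∫ ω, p k ω * (S k ω)⁻¹ * b k ω ^ 2 ∂P := by
    intro k
    have hqV : MemLp (fun ω => q k ω * (S k ω)⁻¹) ⊤ P := (hqt k).fun_mul_top (h.memLp_inv k)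
    have hqVm : StronglyMeasurable[ℱ k] (fun ω => q k ω * (S k ω)⁻¹) := (hqm k).mul (h.meas_inv k)
    have ib : Integrable (fun ω => p k ω * (S k ω)⁻¹ * b k ω ^ 2) P := by
      have := top_int (((h.memLp_p k).fun_mul_top (h.memLp_inv k)).fun_mul_top
        ((h.b_bdd k).fun_mul_top (h.b_bdd k)))
      simpa only [pow_two] using this
    calc ∫ ω, q k ω * Γ k ω ∂P ≤ ∫ ω, q k ω * (S k ω)⁻¹ * a k ω ^ 2 ∂P := by
          refine integral_mono (iqΓ k) ((h.integrable_sq k).mul_of_top_right hqV) fun ω => ?_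
          have h1 := mul_le_mul_of_nonneg_left (h.inv_succ_le k ω)
            (mul_nonneg (hq0 k ω) (sq_nonneg (a k ω)))
          simp only [hΓ, div_eq_mul_inv]
          linarith
      _ = ∫ ω, q k ω * (S k ω)⁻¹ * (P[fun ω => a k ω ^ 2 | ℱ k]) ω ∂P :=
          (integral_mul_condExp_of_stronglyMeasurable (ℱ.le k) hqVm hqV (h.integrable_sq k)).symm
      _ ≤ ∫ ω, (σ₀ + σ₁ / δ ^ 2) * (p k ω * (S k ω)⁻¹ * b k ω ^ 2) ∂P := by
          refine integral_mono_ae (integrable_condExp.mul_of_top_right hqV) (ib.const_mul _) ?_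
          filter_upwards [h.condExp_sq_le k] with ω hω
          have hV0 : 0 ≤ (S k ω)⁻¹ := inv_nonneg.2 (h.S_pos k ω).le
          have h1 := mul_le_mul_of_nonneg_left hω (mul_nonneg (hq0 k ω) hV0)
          have h2 : q k ω * b k ω ^ 2 ≤ p k ω * b k ω ^ 2 :=
            mul_le_mul_of_nonneg_right (hqp k ω) (sq_nonneg _)
          have h3 : q k ω ≤ p k ω * b k ω ^ 2 / δ ^ 2 := by
            rw [le_div_iff₀ (by positivity)]; exact hqδ k ω
          have h4 : σ₀ * (q k ω * b k ω ^ 2) + σ₁ * q k ω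
              ≤ σ₀ * (p k ω * b k ω ^ 2) + σ₁ * (p k ω * b k ω ^ 2 / δ ^ 2) :=
            add_le_add (mul_le_mul_of_nonneg_left h2 h.σ₀_nonneg)
              (mul_le_mul_of_nonneg_left h3 h.σ₁_pos.le)
          calc _ ≤ _ := h1
            _ = (σ₀ * (q k ω * b k ω ^ 2) + σ₁ * q k ω) * (S k ω)⁻¹ := by ring
            _ ≤ _ := mul_le_mul_of_nonneg_right h4 hV0
            _ = _ := by ring
      _ = _ := integral_const_mul _ _
  have hqΓsum : ∀ n, ∑ k ∈ Finset.range n, ∫ ω, q k ω * Γ k ω ∂P ≤ (σ₀ + σ₁ / δ ^ 2) * C₁ := by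
    intro n
    have h0 : 0 ≤ σ₀ + σ₁ / δ ^ 2 := by
      have := h.σ₀_nonneg
      have := h.σ₁_pos
      positivity
    refine (Finset.sum_le_sum fun k _ => hqΓ1 k).trans ?_
    rw [← Finset.mul_sum]
    exact mul_le_mul_of_nonneg_left (hC₁ n) h0
  have hqΓbdd := ae_bddAbove_partialSums_of_integral_le
    (fun k => ae_of_all P (hqΓ0 k)) iqΓ hqΓsum
  -- the martingale part is bounded in `L²`
  have hYm : ∀ k, StronglyMeasurable[ℱ (k + 1)] (Y k) := fun k =>
    (((hqm k).mono (ℱ.mono k.le_succ)).mul (h.meas_c k)).mul (h.meas_inv_sqrt (k + 1))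
  have hYsq : ∀ k ω, Y k ω ^ 2 ≤ q k ω * b k ω ^ 2 * (q k ω * Γ k ω) := fun k ω => by
    have h1 : c k ω ^ 2 ≤ (b k ω * a k ω) ^ 2 := sq_le_sq' (abs_le.1 (h.abs_c_le k ω)).1
      (abs_le.1 (h.abs_c_le k ω)).2
    have h2 : (√(S (k + 1) ω))⁻¹ ^ 2 = (S (k + 1) ω)⁻¹ := by
      rw [inv_pow, Real.sq_sqrt (h.S_pos _ ω).le]
    have hV0 : 0 ≤ (S (k + 1) ω)⁻¹ := inv_nonneg.2 (h.S_pos _ ω).le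
    calc Y k ω ^ 2 = q k ω ^ 2 * (S (k + 1) ω)⁻¹ * c k ω ^ 2 := by
          simp only [hY, mul_pow, h2]; ring
      _ ≤ q k ω ^ 2 * (S (k + 1) ω)⁻¹ * (b k ω * a k ω) ^ 2 :=
          mul_le_mul_of_nonneg_left h1 (mul_nonneg (sq_nonneg _) hV0)
      _ = _ := by simp only [hΓ, div_eq_mul_inv]; ring
  have hYsq' : ∀ k ω, Y k ω ^ 2 ≤ B * (q k ω * Γ k ω) := fun k ω =>
    (hYsq k ω).trans (mul_le_mul_of_nonneg_right (hqB k ω) (hqΓ0 k ω))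
  have hYt : ∀ k, MemLp (Y k) ⊤ P := fun k =>
    memLp_top_of_bound ((hYm k).mono (ℱ.le _)).aestronglyMeasurable √B (ae_of_all _ fun ω => by
      refine Real.le_sqrt_of_sq_le ?_
      rw [Real.norm_eq_abs, sq_abs]
      refine (hYsq' k ω).trans (mul_le_of_le_one_right h.B_nonneg ?_)
      exact mul_le_one₀ (hq1 k ω) (h.ratio_nonneg k ω) (h.ratio_le_one k ω))
  have hYsum : ∀ n, ∑ k ∈ Finset.range n, ∫ ω, Y k ω ^ 2 ∂P
      ≤ B * ((σ₀ + σ₁ / δ ^ 2) * C₁) := by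
    intro n
    have h1 : ∀ k, ∫ ω, Y k ω ^ 2 ∂P ≤ B * ∫ ω, q k ω * Γ k ω ∂P := fun k => by
      rw [← integral_const_mul]
      refine integral_mono ?_ ((iqΓ k).const_mul B) (hYsq' k)
      have := top_int ((hYt k).fun_mul_top (hYt k))
      simpa only [pow_two] using this
    refine (Finset.sum_le_sum fun k _ => h1 k).trans ?_
    rw [← Finset.mul_sum]
    exact mul_le_mul_of_nonneg_left (hqΓsum n) h.B_nonneg
  have hYbdd := ae_bdd_sum_sub_condExp ℱ hYm hYt hYsum
  filter_upwards [hQbdd, hqΓbdd, hYbdd, ae_all_iff.2 hQ0, ae_all_iff.2 hdrift]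
    with ω ⟨B₁, hB₁⟩ ⟨B₂, hB₂⟩ ⟨B₃, hB₃⟩ hQω hdω
  set M : ℕ → ℝ := fun n => ∑ k ∈ Finset.range n, (Y k ω - (P[Y k | ℱ k]) ω) with hM
  set A : ℕ → ℝ := fun n => ∑ k ∈ Finset.range n, Q k ω with hA
  set D : ℕ → ℝ := fun n => ∑ k ∈ Finset.range n, q k ω * Γ k ω with hD
  have hA0 : ∀ n, 0 ≤ A n := fun n => Finset.sum_nonneg fun k _ => hQω k
  have hD0 : ∀ n, 0 ≤ D n := fun n => Finset.sum_nonneg fun k _ => hqΓ0 k ω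
  have hstep : ∀ m n, m ≤ n → (∀ j, m ≤ j → j < n → δ < b j ω) →
      u n ω ≤ u m ω - α * (M n - M m) + α * (K / 2) * (A n - A m) + γ * (D n - D m) := by
    intro m n hmn
    induction n, hmn using Nat.le_induction with
    | base => intro _; simp
    | succ n hmn ih =>
      intro hj
      have h1 := ih fun j h1 h2 => hj j h1 (h2.trans n.lt_succ_self)
      have hpq : q n ω = p n ω := by
        simp only [hq]
        have h0 : ω ∈ {ω | δ < b n ω} := hj n hmn n.lt_succ_self
        exact Set.indicator_of_mem h0 (p n)
      have h2 := h.u_succ_le n ω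
      rw [← hpq] at h2
      have hM1 : M (n + 1) = M n + (Y n ω - (P[Y n | ℱ n]) ω) := Finset.sum_range_succ _ _
      have hA1 : A (n + 1) = A n + Q n ω := Finset.sum_range_succ _ _
      have hD1 : D (n + 1) = D n + q n ω * Γ n ω := Finset.sum_range_succ _ _
      have h0 : 0 ≤ 1 / 2 * (q n ω * (√(S n ω))⁻¹ * b n ω ^ 2) := by
        have := hq0 n ω
        positivity
      have h3 : 0 ≤ (P[Y n | ℱ n]) ω + K / 2 * Q n ω := h0.trans (hdω n)
      have h4 := mul_nonneg hα.le h3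
      have h5 : u (n + 1) ω ≤ u n ω - α * Y n ω + γ * (q n ω * Γ n ω) := h2
      rw [hM1, hA1, hD1]
      linarith
  refine ⟨2 * α * B₃ + α * (K / 2) * B₁ + γ * B₂, fun m n hmn hj => ?_⟩
  have h1 := hstep m n hmn hj
  have h2 := abs_le.1 (hB₃ n)
  have h3 := abs_le.1 (hB₃ m)
  have h4 : α * (M m - M n) ≤ α * (2 * B₃) :=
    mul_le_mul_of_nonneg_left (by simp only [hM]; linarith [h2.1, h3.2]) hα.le
  have h5 : α * (K / 2) * (A n - A m) ≤ α * (K / 2) * B₁ :=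
    mul_le_mul_of_nonneg_left (by linarith [hB₁ n, hA0 m]) (by positivity)
  have h6 : γ * (D n - D m) ≤ γ * B₂ :=
    mul_le_mul_of_nonneg_left (by linarith [hB₂ n, hD0 m]) h.γ_nonneg
  linarith

end IsAdaGradPotential

section Gradient

variable {E : Type*} [NormedAddCommGroup E] [InnerProductSpace ℝ E] [CompleteSpace E]
  {g : E → ℝ} {L : ℝ}

theorem le_add_inner_gradient_add (hg : Differentiable ℝ g)
    (hL : ∀ x y, ‖gradient g x - gradient g y‖ ≤ L * ‖x - y‖) (x y : E) :
    g y ≤ g x + inner ℝ (gradient g x) (y - x) + L * ‖y - x‖ ^ 2 := by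
  obtain ⟨z, hz, hzxy⟩ := domain_mvt (s := Set.univ) (f := g)
    (f' := fun x => InnerProductSpace.toDual ℝ E (gradient g x))
    (fun x _ => (hg x).hasGradientAt.hasFDerivAt.hasFDerivWithinAt) convex_univ
    (Set.mem_univ x) (Set.mem_univ y)
  simp only [InnerProductSpace.toDual_apply_apply] at hzxy
  have hzx : ‖z - x‖ ≤ ‖y - x‖ := norm_sub_le_of_mem_segment hz
  have h1 : inner ℝ (gradient g z - gradient g x) (y - x) ≤ L * ‖y - x‖ ^ 2 := by
    refine (real_inner_le_norm _ _).trans ?_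
    have h0 : 0 ≤ ‖y - x‖ := norm_nonneg _
    rcases h0.eq_or_lt with h0 | h0
    · simp [← h0]
    · have hL0 : 0 ≤ L := by
        have := (norm_nonneg _).trans (hL y x)
        exact nonneg_of_mul_nonneg_left this h0
      calc _ ≤ L * ‖z - x‖ * ‖y - x‖ := by gcongr; exact hL z x
        _ ≤ L * ‖y - x‖ * ‖y - x‖ := by gcongr
        _ = _ := by ring
  rw [inner_sub_left] at h1
  linarith

theorem norm_gradient_sq_le (hL0 : 0 < L) (hg : Differentiable ℝ g) (hg0 : ∀ x, 0 ≤ g x)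
    (hL : ∀ x y, ‖gradient g x - gradient g y‖ ≤ L * ‖x - y‖) (x : E) :
    ‖gradient g x‖ ^ 2 ≤ 4 * L * g x := by
  have h1 := le_add_inner_gradient_add hg hL x (x - (1 / (2 * L)) • gradient g x)
  have h2 : x - (1 / (2 * L)) • gradient g x - x = -((1 / (2 * L)) • gradient g x) := by abel
  rw [h2, inner_neg_right, inner_smul_right, real_inner_self_eq_norm_sq, norm_neg, norm_smul,
    Real.norm_of_nonneg (by positivity)] at h1
  have h3 := (hg0 _).trans h1
  have h4 : g x + -(1 / (2 * L) * ‖gradient g x‖ ^ 2) + L * (1 / (2 * L) * ‖gradient g x‖) ^ 2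
      = (4 * L * g x - ‖gradient g x‖ ^ 2) / (4 * L) := by
    field_simp; ring
  rw [h4] at h3
  have h5 := mul_nonneg h3 (by positivity : (0 : ℝ) ≤ 4 * L)
  rw [div_mul_cancel₀ _ (by positivity)] at h5
  linarith

end Gradient

theorem log_one_add_le_add_mul {x y : ℝ} (hx : 0 ≤ x) (hy : 0 ≤ y) :
    Real.log (1 + y) ≤ Real.log (1 + x) + (1 + x)⁻¹ * (y - x) := by
  have hx1 : 0 < 1 + x := by linarith
  have hy1 : 0 < 1 + y := by linarith
  have h := Real.log_le_sub_one_of_pos (div_pos hy1 hx1)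
  rw [Real.log_div hy1.ne' hx1.ne'] at h
  have : (1 + y) / (1 + x) - 1 = (1 + x)⁻¹ * (y - x) := by field_simp; ring
  linarith

/-- Corollary 4.3 (Stability of iterates for AdaGrad-Norm): under coercivity of `g`,
`sup_{n≥1} ‖θ_n‖ < +∞` almost surely. -/
theorem adagrad_norm_iterate_stability
    {d : ℕ} {Ω : Type*} {m0 : MeasurableSpace Ω} (P : Measure Ω) [IsProbabilityMeasure P]
    (ℱ : Filtration ℕ m0)
    (g : EuclideanSpace ℝ (Fin d) → ℝ)
    (L σ₀ σ₁ α₀ S₀ δt : ℝ)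
    (hL : 0 < L) (hσ₀ : 0 ≤ σ₀) (hσ₁ : 0 ≤ σ₁) (hα₀ : 0 < α₀) (hS₀ : 0 < S₀)
    (hg_diff : ContDiff ℝ 1 g)
    (hg_nonneg : ∀ x, 0 ≤ g x)
    (hg_smooth : ∀ x y, ‖gradient g x - gradient g y‖ ≤ L * ‖x - y‖)
    (hδt : 0 < δt)
    (hflat : ∀ᶠ x in Bornology.cobounded (EuclideanSpace ℝ (Fin d)),
      δt < ‖gradient g x‖)
    (hg_coercive : Tendsto g (Bornology.cobounded (EuclideanSpace ℝ (Fin d))) atTop)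
    (θ₁ : EuclideanSpace ℝ (Fin d))
    (G θ : ℕ → Ω → EuclideanSpace ℝ (Fin d))
    (S : ℕ → Ω → ℝ)
    (hG_meas : ∀ n, 1 ≤ n → StronglyMeasurable[ℱ n] (G n))
    (hG_int : ∀ n, 1 ≤ n → Integrable (G n) P)
    (hG_sq_int : ∀ n, 1 ≤ n → Integrable (fun ω => ‖G n ω‖ ^ 2) P)
    (hθ_adapted : ∀ n, 1 ≤ n → StronglyMeasurable[ℱ (n - 1)] (θ n))
    (hθ_init : ∀ ω, θ 1 ω = θ₁)
    (hS_init : ∀ ω, S 0 ω = S₀)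
    (hS_rec : ∀ n, 1 ≤ n → ∀ ω, S n ω = S (n - 1) ω + ‖G n ω‖ ^ 2)
    (hθ_rec : ∀ n, 1 ≤ n → ∀ ω,
      θ (n + 1) ω = θ n ω - (α₀ / Real.sqrt (S n ω)) • G n ω)
    (hG_unbiased : ∀ n, 1 ≤ n →
      P[G n | ℱ (n - 1)] =ᵐ[P] fun ω => gradient g (θ n ω))
    (hG_var : ∀ n, 1 ≤ n → ∀ᵐ ω ∂P,
      (P[fun ω => ‖G n ω‖ ^ 2 | ℱ (n - 1)]) ω ≤ σ₀ * ‖gradient g (θ n ω)‖ ^ 2 + σ₁) :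
    ∀ᵐ ω ∂P, ∃ C : ℝ, ∀ n, 1 ≤ n → ‖θ n ω‖ ≤ C := by
  have hgc : Continuous g := hg_diff.continuous
  have hgradc : Continuous (gradient g) :=
    (LipschitzWith.of_dist_le' (K := L) fun x y => by
      simpa only [dist_eq_norm] using hg_smooth x y).continuous
  have hgd := hg_diff.differentiable one_ne_zero
  have hx : ∀ k, StronglyMeasurable[ℱ k] (θ (k + 1)) := fun k => hθ_adapted (k + 1) k.succ_pos
  have hSsucc : ∀ k ω, S (k + 1) ω = S k ω + ‖G (k + 1) ω‖ ^ 2 := fun k =>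
    hS_rec (k + 1) k.succ_pos
  have hSm : ∀ k, StronglyMeasurable[ℱ k] (S k) := by
    intro k
    induction k with
    | zero => rw [funext hS_init]; exact stronglyMeasurable_const
    | succ k ih =>
      rw [funext (hSsucc k)]
      exact (ih.mono (ℱ.mono k.le_succ)).add ((hG_meas (k + 1) k.succ_pos).norm.pow 2)
  have hSle : ∀ k ω, S₀ ≤ S k ω := by
    intro k ω
    induction k with
    | zero => exact (hS_init ω).ge
    | succ k ih => rw [hSsucc]; linarith [sq_nonneg ‖G (k + 1) ω‖]
  have hSpos : ∀ k ω, 0 < S k ω := fun k ω => hS₀.trans_le (hSle k ω)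
  have hstep : ∀ k ω, ‖θ (k + 2) ω‖ ≤ ‖θ (k + 1) ω‖ + α₀ := by
    intro k ω
    rw [hθ_rec (k + 1) k.succ_pos ω]
    refine (norm_sub_le _ _).trans (add_le_add_right ?_ _)
    have hs := Real.sqrt_pos.2 (hSpos (k + 1) ω)
    rw [norm_smul, Real.norm_of_nonneg (by positivity), div_mul_eq_mul_div, div_le_iff₀ hs]
    refine mul_le_mul_of_nonneg_left (Real.le_sqrt_of_sq_le ?_) hα₀.le
    rw [hSsucc]; linarith [hSpos k ω]
  have hball : ∀ (k : ℕ) ω, θ (k + 1) ω ∈ Metric.closedBall (0 : EuclideanSpace ℝ (Fin d))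
      (‖θ₁‖ + k * α₀) := by
    intro k ω
    rw [mem_closedBall_zero_iff]
    induction k with
    | zero => simp [hθ_init]
    | succ k ih => push_cast; linarith [hstep k ω]
  have hbdd : ∀ (f : EuclideanSpace ℝ (Fin d) → ℝ), Continuous f → ∀ k : ℕ,
      MemLp (fun ω => f (θ (k + 1) ω)) ⊤ P := by
    intro f hf k
    obtain ⟨C, hC⟩ := (isCompact_closedBall (0 : EuclideanSpace ℝ (Fin d))
      (‖θ₁‖ + k * α₀)).exists_bound_of_continuousOn hf.continuousOn
    exact memLp_top_of_bound (hf.comp_stronglyMeasurable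
      ((hx k).mono (ℱ.le k))).aestronglyMeasurable C (ae_of_all _ fun ω => hC _ (hball k ω))
  have hg1 : ∀ x, 0 < 1 + g x := fun x => by linarith [hg_nonneg x]
  have hlogc : Continuous fun x => Real.log (1 + g x) :=
    (continuous_const.add hgc).log fun x => (hg1 x).ne'
  have hcm : ∀ k, StronglyMeasurable[ℱ (k + 1)]
      (fun ω => inner ℝ (gradient g (θ (k + 1) ω)) (G (k + 1) ω)) := fun k =>
    ((hgradc.comp_stronglyMeasurable (hx k)).mono (ℱ.mono k.le_succ)).inner
      (hG_meas (k + 1) k.succ_pos)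
  have hci : ∀ k, Integrable
      (fun ω => inner ℝ (gradient g (θ (k + 1) ω)) (G (k + 1) ω)) P := fun k =>
    Integrable.mono (g := fun ω => ‖gradient g (θ (k + 1) ω)‖ * ‖G (k + 1) ω‖)
      ((hG_int (k + 1) k.succ_pos).norm.mul_of_top_right (hbdd _ hgradc.norm k))
      ((hcm k).mono (ℱ.le _)).aestronglyMeasurable
      (ae_of_all _ fun ω => by
        rw [Real.norm_eq_abs, Real.norm_of_nonneg (by positivity)]
        exact abs_real_inner_le_norm _ _)
  have main : IsAdaGradPotential P ℱ (fun k ω => Real.log (1 + g (θ (k + 1) ω)))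
      (fun k ω => (1 + g (θ (k + 1) ω))⁻¹) (fun k ω => ‖gradient g (θ (k + 1) ω)‖)
      (fun k ω => ‖G (k + 1) ω‖)
      (fun k ω => inner ℝ (gradient g (θ (k + 1) ω)) (G (k + 1) ω)) S
      α₀ (L * α₀ ^ 2) (4 * L) σ₀ (σ₁ + 1) S₀ :=
    { α_pos := hα₀
      γ_nonneg := by positivity
      B_nonneg := by positivity
      σ₀_nonneg := hσ₀
      σ₁_pos := by positivity
      s_pos := hS₀
      meas_p := fun k => ((continuous_const.add hgc).inv₀ fun x =>
        (hg1 x).ne').comp_stronglyMeasurable (hx k)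
      meas_b := fun k => hgradc.norm.comp_stronglyMeasurable (hx k)
      meas_S := hSm
      meas_a := fun k => (hG_meas (k + 1) k.succ_pos).norm
      meas_c := hcm
      u_bdd := hbdd _ hlogc
      b_bdd := hbdd _ hgradc.norm
      u_nonneg := fun k ω => Real.log_nonneg (by linarith [hg_nonneg (θ (k + 1) ω)])
      p_nonneg := fun k ω => inv_nonneg.2 (hg1 _).le
      p_le_one := fun k ω => inv_le_one_of_one_le₀ (by linarith [hg_nonneg (θ (k + 1) ω)])
      b_nonneg := fun k ω => norm_nonneg _
      p_mul_sq_le := fun k ω => by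
        rw [inv_mul_le_iff₀ (hg1 _)]
        nlinarith [norm_gradient_sq_le hL hgd hg_nonneg hg_smooth (θ (k + 1) ω)]
      a_nonneg := fun k ω => norm_nonneg _
      abs_c_le := fun k ω => abs_real_inner_le_norm _ _
      s_le := hSle
      S_succ := hSsucc
      u_succ_le := fun k ω => by
        have h1 := le_add_inner_gradient_add hgd hg_smooth (θ (k + 1) ω) (θ (k + 2) ω)
        have hsq : (α₀ / √(S (k + 1) ω)) ^ 2 = α₀ ^ 2 / S (k + 1) ω := by
          rw [div_pow, Real.sq_sqrt (hSpos _ ω).le]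
        have h2 : θ (k + 2) ω - θ (k + 1) ω = -((α₀ / √(S (k + 1) ω)) • G (k + 1) ω) := by
          rw [hθ_rec (k + 1) k.succ_pos ω]; abel
        rw [h2, inner_neg_right, inner_smul_right, norm_neg, norm_smul, mul_pow, Real.norm_eq_abs,
          sq_abs, hsq] at h1
        have h3 := log_one_add_le_add_mul (hg_nonneg (θ (k + 1) ω)) (hg_nonneg (θ (k + 2) ω))
        have h4 := mul_le_mul_of_nonneg_left h1 (inv_nonneg.2 (hg1 (θ (k + 1) ω)).le)
        simp only [div_eq_mul_inv] at h4 ⊢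
        linarith
      integrable_c := hci
      integrable_sq := fun k => hG_sq_int (k + 1) k.succ_pos
      condExp_c := fun k => by
        have h1 := condExp_bilin_of_stronglyMeasurable_left (innerSL ℝ)
          (hgradc.comp_stronglyMeasurable (hx k)) (hci k) (hG_int (k + 1) k.succ_pos)
        have h2 := hG_unbiased (k + 1) k.succ_pos
        rw [Nat.add_sub_cancel] at h2
        filter_upwards [h1, h2] with ω h1 h2
        refine h1.trans ?_
        rw [h2]
        exact real_inner_self_eq_norm_sq (gradient g (θ (k + 1) ω))
      condExp_sq_le := fun k => by
        have h2 := hG_var (k + 1) k.succ_pos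
        rw [Nat.add_sub_cancel] at h2
        filter_upwards [h2] with ω h2
        linarith }
  obtain ⟨R, -, hR⟩ := (hasBasis_cobounded_norm.eventually_iff).1 hflat
  obtain ⟨C₀, hC₀⟩ := (isCompact_closedBall (0 : EuclideanSpace ℝ (Fin d))
    (max (R + α₀) ‖θ₁‖)).exists_bound_of_continuousOn hlogc.continuousOn
  filter_upwards [main.ae_exists_le_add_of_excursion hδt] with ω ⟨C, hC⟩
  have hexc : ∀ n, ∃ m ≤ n, Real.log (1 + g (θ (m + 1) ω)) ≤ C₀ ∧
      ∀ j, m ≤ j → j < n → δt < ‖gradient g (θ (j + 1) ω)‖ := by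
    intro n
    induction n with
    | zero =>
      refine ⟨0, le_rfl, (le_abs_self _).trans (hC₀ _ ?_), fun j _ hj => absurd hj j.not_lt_zero⟩
      rw [mem_closedBall_zero_iff, zero_add, hθ_init]
      exact le_max_right _ _
    | succ n ih =>
      by_cases hb : δt < ‖gradient g (θ (n + 1) ω)‖
      · obtain ⟨m, hm, hm1, hm2⟩ := ih
        refine ⟨m, hm.trans n.le_succ, hm1, fun j h1 h2 => ?_⟩
        rcases (Nat.lt_succ_iff.1 h2).lt_or_eq with h3 | rfl
        · exact hm2 j h1 h3
        · exact hb
      · refine ⟨n + 1, le_rfl, (le_abs_self _).trans (hC₀ _ ?_),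
          fun j h1 h2 => absurd h1 h2.not_ge⟩
        have h1 : ‖θ (n + 1) ω‖ < R := by
          by_contra hlt
          exact hb (hR (not_lt.1 hlt))
        rw [mem_closedBall_zero_iff]
        exact ((hstep n ω).trans (by linarith)).trans (le_max_left _ _)
  obtain ⟨R', -, hR'⟩ := (hasBasis_cobounded_norm.eventually_iff).1
    (hg_coercive.eventually_gt_atTop (Real.exp (C₀ + C)))
  refine ⟨R', fun n hn => ?_⟩
  obtain ⟨k, rfl⟩ := Nat.exists_eq_add_of_le' hn
  obtain ⟨m, hmk, hm, hj⟩ := hexc k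
  have h1 : Real.log (1 + g (θ (k + 1) ω)) ≤ C₀ + C := (hC m k hmk hj).trans (by linarith)
  have h2 := (Real.log_le_iff_le_exp (hg1 _)).1 h1
  by_contra hlt
  have h3 := hR' (not_le.1 hlt).le
  linarith
end

section
/- Almost sure convergence of AdaGrad-Norm: for any deterministic initial point θ₁ ∈ ℝ^d and any S₀ > 0, almost surely lim_{n→∞} ‖∇g(θ_n)‖ = 0. -/
open MeasureTheory Filter Topology

section Deterministic

open InnerProductSpace

variable {E : Type*} [NormedAddCommGroup E] [InnerProductSpace ℝ E]

/-- A function whose gradient is `L`-Lipschitz lies below its quadratic model at every point. -/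
theorem le_quadratic_of_lipschitz_gradient [CompleteSpace E] {g : E → ℝ} {L : ℝ} (hL : 0 ≤ L)
    (hg : Differentiable ℝ g)
    (hlip : ∀ x y, ‖gradient g x - gradient g y‖ ≤ L * ‖x - y‖) (x y : E) :
    g y ≤ g x + inner ℝ (gradient g x) (y - x) + L * ‖y - x‖ ^ 2 := by
  have hd : ∀ z ∈ segment ℝ x y, ‖fderiv ℝ g z - fderiv ℝ g x‖ ≤ L * ‖y - x‖ := by
    intro z hz
    rw [← toDual_gradient, ← toDual_gradient, ← map_sub, LinearIsometryEquiv.norm_map]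
    refine (hlip z x).trans (mul_le_mul_of_nonneg_left ?_ hL)
    obtain ⟨t, ht, rfl⟩ := (segment_eq_image' ℝ x y ▸ hz : z ∈ _)
    simp only [add_sub_cancel_left, norm_smul, Real.norm_eq_abs, abs_of_nonneg ht.1]
    exact mul_le_of_le_one_left (norm_nonneg _) ht.2
  have h := (convex_segment x y).norm_image_sub_le_of_norm_fderiv_le' (𝕜 := ℝ)
    (fun z _ => hg z) hd (left_mem_segment ℝ x y) (right_mem_segment ℝ x y)
  have h2 := (le_abs_self _).trans h
  rw [← inner_gradient_left] at h2
  nlinarith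

/-- A trajectory of AdaGrad-Norm driven by the stochastic gradients `G`; `S n` is the accumulator
available before `G n` is observed. -/
structure AdaGradNormPath (α : ℝ) (G θ : ℕ → E) (S : ℕ → ℝ) : Prop where
  S_zero_pos : 0 < S 0
  S_succ : ∀ n, S (n + 1) = S n + ‖G n‖ ^ 2
  θ_succ : ∀ n, θ (n + 1) = θ n - (α / √(S (n + 1))) • G n

theorem one_div_sqrt_sub_nonneg {a x : ℝ} (ha : 0 < a) :
    0 ≤ 1 / √a - 1 / √(a + x ^ 2) := by
  rw [sub_nonneg]
  exact one_div_le_one_div_of_le (Real.sqrt_pos.2 ha) (Real.sqrt_le_sqrt (by nlinarith))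

theorem one_div_sqrt_sub_mul_le {a x : ℝ} (ha : 0 < a) :
    (1 / √a - 1 / √(a + x ^ 2)) * x ≤ x ^ 2 / a := by
  have hb : 0 < a + x ^ 2 := by positivity
  have hsa := Real.sqrt_pos.2 ha
  have hsb := Real.sqrt_pos.2 hb
  have ea := Real.sq_sqrt ha.le
  have eb := Real.sq_sqrt hb.le
  have hx : x ≤ √(a + x ^ 2) := Real.le_sqrt_of_sq_le (by linarith)
  set s := √a
  set t := √(a + x ^ 2)
  have hst : t ^ 2 - s ^ 2 = x ^ 2 := by rw [ea, eb]; ring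
  have key : (1 / s - 1 / t) * x = x ^ 2 * x / (s * t * (s + t)) := by
    rw [← hst]; field_simp; ring
  rw [key, ← ea, div_le_div_iff₀ (by positivity) (by positivity)]
  have h1 : x * s ^ 2 ≤ s * t * (s + t) := by
    nlinarith [mul_le_mul_of_nonneg_right hx (sq_nonneg s), mul_pos hsa (pow_pos hsb 2)]
  nlinarith [mul_le_mul_of_nonneg_left h1 (sq_nonneg x)]

namespace AdaGradNormPath

variable {α : ℝ} {G θ : ℕ → E} {S : ℕ → ℝ}

theorem S_mono (h : AdaGradNormPath α G θ S) : Monotone S :=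
  monotone_nat_of_le_succ fun n => by rw [h.S_succ]; nlinarith [sq_nonneg ‖G n‖]

theorem S_pos (h : AdaGradNormPath α G θ S) (n : ℕ) : 0 < S n :=
  h.S_zero_pos.trans_le (h.S_mono n.zero_le)

theorem sub_eq (h : AdaGradNormPath α G θ S) (n : ℕ) :
    θ (n + 1) - θ n = -(α / √(S (n + 1))) • G n := by
  rw [h.θ_succ, neg_smul]; abel

theorem norm_sub_sq (h : AdaGradNormPath α G θ S) (n : ℕ) :
    ‖θ (n + 1) - θ n‖ ^ 2 = α ^ 2 * (‖G n‖ ^ 2 / S (n + 1)) := by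
  rw [h.sub_eq, norm_smul, mul_pow, norm_neg, Real.norm_eq_abs, sq_abs, div_pow,
    Real.sq_sqrt (h.S_pos _).le]
  ring

theorem norm_sub_sq_le (h : AdaGradNormPath α G θ S) (n : ℕ) :
    ‖θ (n + 1) - θ n‖ ^ 2 ≤ α ^ 2 * (‖G n‖ ^ 2 / S n) := by
  rw [h.norm_sub_sq]
  have := h.S_pos n
  have := h.S_mono n.le_succ
  gcongr

theorem norm_sub_le (h : AdaGradNormPath α G θ S) (hα : 0 ≤ α) (n : ℕ) :
    ‖θ (n + 1) - θ n‖ ≤ α := by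
  have h1 := h.norm_sub_sq n
  have h2 : ‖G n‖ ^ 2 / S (n + 1) ≤ 1 := by
    rw [div_le_one (h.S_pos _), h.S_succ]
    linarith [h.S_pos n]
  refine abs_le_of_sq_le_sq' ?_ hα |>.2
  nlinarith [sq_nonneg α]

/-- One-step decrease of the objective, with the step size decorrelated from the current sample. -/
theorem objective_succ_le (h : AdaGradNormPath α G θ S) (hα : 0 ≤ α) {g : E → ℝ} {u : E → E}
    {L M : ℝ} (hL : 0 ≤ L)
    (hdesc : ∀ x y, g y ≤ g x + inner ℝ (u x) (y - x) + L * ‖y - x‖ ^ 2)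
    {n : ℕ} (hM : ‖u (θ n)‖ ≤ M) :
    g (θ (n + 1)) + α * (‖u (θ n)‖ ^ 2 / √(S n))
        + α * (inner ℝ (u (θ n)) (G n - u (θ n)) / √(S n))
      ≤ g (θ n) + (α * M + L * α ^ 2) * (‖G n‖ ^ 2 / S n) := by
  have h1 := hdesc (θ n) (θ (n + 1))
  have h2 := mul_le_mul_of_nonneg_left (h.norm_sub_sq_le n) hL
  have h3 := one_div_sqrt_sub_mul_le (x := ‖G n‖) (h.S_pos n)
  have h4 := one_div_sqrt_sub_nonneg (x := ‖G n‖) (h.S_pos n)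
  rw [← h.S_succ] at h3 h4
  have h5 : inner ℝ (u (θ n)) (θ (n + 1) - θ n)
      = -α * (‖u (θ n)‖ ^ 2 / √(S n)) - α * (inner ℝ (u (θ n)) (G n - u (θ n)) / √(S n))
        + α * ((1 / √(S n) - 1 / √(S (n + 1))) * inner ℝ (u (θ n)) (G n)) := by
    rw [h.sub_eq, inner_smul_right, inner_sub_right, real_inner_self_eq_norm_sq]
    ring
  have h6 : (1 / √(S n) - 1 / √(S (n + 1))) * inner ℝ (u (θ n)) (G n)
      ≤ M * (‖G n‖ ^ 2 / S n) := by
    calc _ ≤ (1 / √(S n) - 1 / √(S (n + 1))) * (M * ‖G n‖) := by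
          refine mul_le_mul_of_nonneg_left ((real_inner_le_norm _ _).trans ?_) h4
          gcongr
      _ = M * ((1 / √(S n) - 1 / √(S (n + 1))) * ‖G n‖) := by ring
      _ ≤ _ := mul_le_mul_of_nonneg_left h3 ((norm_nonneg _).trans hM)
  nlinarith [mul_le_mul_of_nonneg_left h6 hα]

/-- One-step displacement, with the step size decorrelated from the current sample. -/
theorem norm_succ_sub_add_le (h : AdaGradNormPath α G θ S) (hα : 0 ≤ α) (u : E → E) (n : ℕ) :
    ‖θ (n + 1) - θ n + α • ((1 / √(S n)) • (G n - u (θ n)))‖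
      ≤ α * (‖u (θ n)‖ / √(S n)) + α * (‖G n‖ ^ 2 / S n) := by
  have h3 := one_div_sqrt_sub_mul_le (x := ‖G n‖) (h.S_pos n)
  have h4 := one_div_sqrt_sub_nonneg (x := ‖G n‖) (h.S_pos n)
  rw [← h.S_succ] at h3 h4
  have e : θ (n + 1) - θ n + α • ((1 / √(S n)) • (G n - u (θ n)))
      = (α * (1 / √(S n) - 1 / √(S (n + 1)))) • G n - (α / √(S n)) • u (θ n) := by
    rw [h.sub_eq]; module
  rw [e]
  refine (_root_.norm_sub_le _ _).trans ?_
  rw [norm_smul, norm_smul, Real.norm_of_nonneg (mul_nonneg hα h4),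
    Real.norm_of_nonneg (by positivity)]
  have := mul_le_mul_of_nonneg_left h3 hα
  have e2 : α / √(S n) * ‖u (θ n)‖ = α * (‖u (θ n)‖ / √(S n)) := by ring
  rw [e2, mul_assoc]
  linarith

/-- While a trajectory stays in `A`, the objective decreases and the iterate moves at the rates of
gradient descent, up to errors that vanish along the trajectory. -/
theorem eventually_excursion_le (h : AdaGradNormPath α G θ S) (hα : 0 < α) {g : E → ℝ} {u : E → E}
    {L M : ℝ} (hL : 0 ≤ L)
    (hdesc : ∀ x y, g y ≤ g x + inner ℝ (u x) (y - x) + L * ‖y - x‖ ^ 2)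
    {A : Set E} (hM : ∀ x ∈ A, ‖u x‖ ≤ M)
    (hQ : Summable fun k => A.indicator (fun _ => (1 : ℝ)) (θ k) * (‖G k‖ ^ 2 / S k))
    (hV : CauchySeq fun n => ∑ k ∈ Finset.range n,
      A.indicator (fun _ => (1 : ℝ)) (θ k) • ((1 / √(S k)) • (G k - u (θ k))))
    (hP : CauchySeq fun n => ∑ k ∈ Finset.range n,
      inner ℝ (A.indicator u (θ k)) (G k - u (θ k)) / √(S k))
    {ε : ℝ} (hε : 0 < ε) :
    ∃ N, ∀ n m, N ≤ n → n ≤ m → (∀ k, n ≤ k → k < m → θ k ∈ A) →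
      g (θ m) + α * ∑ k ∈ Finset.Ico n m, ‖u (θ k)‖ ^ 2 / √(S k) ≤ g (θ n) + ε ∧
      ‖θ m - θ n‖ ≤ α * ∑ k ∈ Finset.Ico n m, ‖u (θ k)‖ / √(S k) + ε := by
  set Q : ℕ → ℝ := fun n => ∑ k ∈ Finset.range n,
    A.indicator (fun _ => (1 : ℝ)) (θ k) * (‖G k‖ ^ 2 / S k) with hQd
  set V : ℕ → E := fun n => ∑ k ∈ Finset.range n,
    A.indicator (fun _ => (1 : ℝ)) (θ k) • ((1 / √(S k)) • (G k - u (θ k))) with hVd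
  set R : ℕ → ℝ := fun n => ∑ k ∈ Finset.range n,
    inner ℝ (A.indicator u (θ k)) (G k - u (θ k)) / √(S k) with hRd
  have hQc : CauchySeq Q := hQ.hasSum.tendsto_sum_nat.cauchySeq
  set M' := max M 0
  have hM' : 0 ≤ M' := le_max_right _ _
  set C := α * M' + L * α ^ 2 + α + 1
  have hC : 0 < C := by positivity
  have main : ∀ n m, n ≤ m → (∀ k, n ≤ k → k < m → θ k ∈ A) →
      g (θ m) + α * ∑ k ∈ Finset.Ico n m, ‖u (θ k)‖ ^ 2 / √(S k) + α * (R m - R n)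
        ≤ g (θ n) + C * (Q m - Q n) ∧
      ‖θ m - θ n + α • (V m - V n)‖
        ≤ α * ∑ k ∈ Finset.Ico n m, ‖u (θ k)‖ / √(S k) + C * (Q m - Q n) := by
    intro n m hnm
    induction m, hnm using Nat.le_induction with
    | base => simp
    | succ m hnm ih =>
      intro hA
      obtain ⟨ih1, ih2⟩ := ih fun k h1 h2 => hA k h1 (by omega)
      have hmA := hA m hnm m.lt_succ_self
      have s1 := h.objective_succ_le hα.le hL hdesc ((hM _ hmA).trans (le_max_left M 0))
      have s2 := h.norm_succ_sub_add_le hα.le u m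
      have hq : 0 ≤ ‖G m‖ ^ 2 / S m := div_nonneg (sq_nonneg _) (h.S_pos m).le
      have eQ : Q (m + 1) = Q m + ‖G m‖ ^ 2 / S m := by
        simp [hQd, Finset.sum_range_succ, hmA]
      have eV : V (m + 1) = V m + (1 / √(S m)) • (G m - u (θ m)) := by
        simp [hVd, Finset.sum_range_succ, hmA]
      have eR : R (m + 1) = R m + inner ℝ (u (θ m)) (G m - u (θ m)) / √(S m) := by
        simp [hRd, Finset.sum_range_succ, hmA]
      rw [Finset.sum_Ico_succ_top hnm, Finset.sum_Ico_succ_top hnm, eQ, eV, eR]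
      have c1 : (α * M' + L * α ^ 2) * (‖G m‖ ^ 2 / S m) ≤ C * (‖G m‖ ^ 2 / S m) := by
        gcongr; simp only [C]; linarith
      have c2 : α * (‖G m‖ ^ 2 / S m) ≤ C * (‖G m‖ ^ 2 / S m) := by
        gcongr; simp only [C]; nlinarith [mul_nonneg hα.le hM', mul_nonneg hL (sq_nonneg α)]
      refine ⟨by linarith, ?_⟩
      have e : θ (m + 1) - θ n + α • (V m + (1 / √(S m)) • (G m - u (θ m)) - V n)
          = (θ m - θ n + α • (V m - V n))
            + (θ (m + 1) - θ m + α • ((1 / √(S m)) • (G m - u (θ m)))) := by module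
      rw [e]
      refine (norm_add_le _ _).trans ?_
      linarith
  set η := ε / (C + α) / 2
  have hη : 0 < η := by positivity
  have hηε : (C + α) * η ≤ ε := by
    have : (C + α) * η = ε / 2 := by simp only [η]; field_simp
    linarith
  obtain ⟨N1, hN1⟩ := Metric.cauchySeq_iff.1 hQc η hη
  obtain ⟨N2, hN2⟩ := Metric.cauchySeq_iff.1 hV η hη
  obtain ⟨N3, hN3⟩ := Metric.cauchySeq_iff.1 hP η hη
  refine ⟨max N1 (max N2 N3), fun n m hn hnm hA => ?_⟩
  simp only [max_le_iff] at hn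
  obtain ⟨m1, m2⟩ := main n m hnm hA
  have q := hN1 m (by omega) n (by omega)
  have v := hN2 m (by omega) n (by omega)
  have r := hN3 m (by omega) n (by omega)
  rw [Real.dist_eq] at q r
  rw [dist_eq_norm] at v
  have q' : C * (Q m - Q n) ≤ C * η := by gcongr; exact (le_abs_self _).trans q.le
  have r' : -(α * η) ≤ α * (R m - R n) := by
    rw [← mul_neg]; gcongr; linarith [neg_abs_le (R m - R n)]
  refine ⟨by linarith, ?_⟩
  have v' : ‖α • (V m - V n)‖ ≤ α * η := by
    rw [norm_smul, Real.norm_of_nonneg hα.le]; gcongr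
  have : ‖θ m - θ n‖ ≤ ‖θ m - θ n + α • (V m - V n)‖ + ‖α • (V m - V n)‖ :=
    norm_le_add_norm_add _ _
  linarith

end AdaGradNormPath

/-- If `p` and `q` both hold infinitely often, there are arbitrarily late passages from `p` to `q`
along which neither holds. -/
theorem exists_passage {p q : ℕ → Prop} (hp : ∃ᶠ n in atTop, p n) (hq : ∃ᶠ n in atTop, q n)
    (N : ℕ) : ∃ n m, N ≤ n ∧ n < m ∧ p n ∧ q m ∧ ∀ k, n < k → k < m → ¬ p k ∧ ¬ q k := by
  classical
  obtain ⟨n₀, hn₀, hpn₀⟩ := frequently_atTop.1 hp N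
  have hex : ∃ m, n₀ < m ∧ q m := by
    obtain ⟨m, hm, hqm⟩ := frequently_atTop.1 hq (n₀ + 1)
    exact ⟨m, hm, hqm⟩
  obtain ⟨hm1, hm2⟩ := Nat.find_spec hex
  set m := Nat.find hex
  have hle : n₀ ≤ m - 1 := by omega
  have hn1 : n₀ ≤ Nat.findGreatest p (m - 1) := Nat.le_findGreatest hle hpn₀
  refine ⟨Nat.findGreatest p (m - 1), m, hn₀.trans hn1, ?_, Nat.findGreatest_spec hle hpn₀, hm2,
    fun k hk hkm => ⟨Nat.findGreatest_is_greatest hk (by omega), fun hqk => ?_⟩⟩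
  · have := Nat.findGreatest_le (P := p) (m - 1); omega
  · exact Nat.find_min hex hkm ⟨by omega, hqk⟩

omit [InnerProductSpace ℝ E] in
theorem isCompact_sublevel_of_coercive [ProperSpace E] {g : E → ℝ} (hg : Continuous g)
    (hcoer : Tendsto g (Bornology.cobounded E) atTop) (c : ℝ) : IsCompact {x | g x ≤ c} := by
  refine Metric.isCompact_of_isClosed_isBounded (isClosed_le hg continuous_const) ?_
  rw [Bornology.isBounded_def]
  filter_upwards [hcoer.eventually_gt_atTop c] with x hx
  simpa using hx

/-- The region where the norm of the field `u` lies between `1 / (j + 1)` and `j`. -/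
def normShell (u : E → E) (j : ℕ) : Set E := {x | 1 / ((j : ℝ) + 1) ≤ ‖u x‖ ∧ ‖u x‖ ≤ j}

/-- The region where the norm of the field `u` is at least `1 / (j + 1)`. -/
def normFar (u : E → E) (j : ℕ) : Set E := {x | 1 / ((j : ℝ) + 1) ≤ ‖u x‖}

omit [InnerProductSpace ℝ E] in
theorem normShell_subset_normFar (u : E → E) (j : ℕ) : normShell u j ⊆ normFar u j :=
  fun _ hx => hx.1

theorem exists_one_div_le_and_le {δ M : ℝ} (hδ : 0 < δ) :
    ∃ j : ℕ, 1 / ((j : ℝ) + 1) ≤ δ ∧ M ≤ j := by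
  obtain ⟨j₁, hj₁⟩ := exists_nat_one_div_lt hδ
  obtain ⟨j₂, hj₂⟩ := exists_nat_ge M
  refine ⟨max j₁ j₂, (Nat.one_div_le_one_div (le_max_left _ _)).trans hj₁.le, hj₂.trans ?_⟩
  exact_mod_cast le_max_right _ _

/-- The objective cannot cross infinitely often a band of levels free of critical values. -/
theorem not_frequently_crossing_of_excursion_le {α : ℝ} {θ : ℕ → E} {S : ℕ → ℝ} (hα : 0 < α)
    {g : E → ℝ} {u : E → E}
    {L M a b : ℝ} {j : ℕ}
    (hdesc : ∀ x y, g y ≤ g x + inner ℝ (u x) (y - x) + L * ‖y - x‖ ^ 2)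
    (hstep : Tendsto (fun n => ‖θ (n + 1) - θ n‖) atTop (𝓝 0))
    (hexc : ∀ ε > 0, ∃ N, ∀ n m, N ≤ n → n ≤ m → (∀ k, n ≤ k → k < m → θ k ∈ normShell u j) →
      g (θ m) + α * ∑ k ∈ Finset.Ico n m, ‖u (θ k)‖ ^ 2 / √(S k) ≤ g (θ n) + ε ∧
      ‖θ m - θ n‖ ≤ α * ∑ k ∈ Finset.Ico n m, ‖u (θ k)‖ / √(S k) + ε)
    (hab : a < b) (hM : ∀ x, g x ≤ a → ‖u x‖ ≤ M)
    (hband : ∀ x, a ≤ g x → g x ≤ b → x ∈ normShell u j) :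
    ¬ ((∃ᶠ n in atTop, g (θ n) ≤ a) ∧ ∃ᶠ n in atTop, b ≤ g (θ n)) := by
  rintro ⟨hlo, hhi⟩
  obtain ⟨N₁, hN₁⟩ := hexc ((b - a) / 3) (by linarith)
  have hinc : Tendsto (fun n => M * ‖θ (n + 1) - θ n‖ + L * ‖θ (n + 1) - θ n‖ ^ 2)
      atTop (𝓝 0) := by
    simpa using (hstep.const_mul M).add ((hstep.pow 2).const_mul L)
  obtain ⟨N₂, hN₂⟩ := eventually_atTop.1
    (hinc.eventually_lt_const (show 0 < (b - a) / 3 by linarith))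
  obtain ⟨n, m, hn, hnm, hpn, hqm, hbet⟩ := exists_passage hlo hhi (max N₁ N₂)
  simp only [max_le_iff] at hn
  have h1 : g (θ (n + 1)) ≤ g (θ n) + (b - a) / 3 := by
    have := hdesc (θ n) (θ (n + 1))
    have h2 : inner ℝ (u (θ n)) (θ (n + 1) - θ n) ≤ M * ‖θ (n + 1) - θ n‖ :=
      (real_inner_le_norm _ _).trans (by gcongr; exact hM _ hpn)
    linarith [hN₂ n hn.2]
  have h2 := (hN₁ (n + 1) m (by omega) hnm fun k hk hkm =>
    hband _ (not_le.1 (hbet k hk hkm).1).le (not_le.1 (hbet k hk hkm).2).le).1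
  have h3 : 0 ≤ α * ∑ k ∈ Finset.Ico (n + 1) m, ‖u (θ k)‖ ^ 2 / √(S k) :=
    mul_nonneg hα.le (Finset.sum_nonneg fun k _ => by positivity)
  linarith

omit [InnerProductSpace ℝ E] in
/-- If the objective converges along the trajectory and the gradient is small infinitely often, then
the gradient tends to zero. -/
theorem not_frequently_ge_of_excursion_le {α : ℝ} {θ : ℕ → E} {S : ℕ → ℝ} (hα : 0 < α)
    {g : E → ℝ} {u : E → E}
    {L ε c : ℝ} {j : ℕ} (hL : 0 < L) (hlip : ∀ x y, ‖u x - u y‖ ≤ L * ‖x - y‖)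
    (hstep : Tendsto (fun n => ‖θ (n + 1) - θ n‖) atTop (𝓝 0))
    (hexc : ∀ ε > 0, ∃ N, ∀ n m, N ≤ n → n ≤ m → (∀ k, n ≤ k → k < m → θ k ∈ normShell u j) →
      g (θ m) + α * ∑ k ∈ Finset.Ico n m, ‖u (θ k)‖ ^ 2 / √(S k) ≤ g (θ n) + ε ∧
      ‖θ m - θ n‖ ≤ α * ∑ k ∈ Finset.Ico n m, ‖u (θ k)‖ / √(S k) + ε)
    (hlim : Tendsto (fun n => g (θ n)) atTop (𝓝 c))
    (hbdd : ∀ᶠ n in atTop, ‖u (θ n)‖ ≤ j)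
    (hfreq : ∃ᶠ n in atTop, ‖u (θ n)‖ < 1 / ((j : ℝ) + 1))
    (hj : 1 / ((j : ℝ) + 1) < ε) : ¬ ∃ᶠ n in atTop, ε ≤ ‖u (θ n)‖ := by
  intro hge
  set δ := 1 / ((j : ℝ) + 1) with hδd
  have hδ : 0 < δ := by positivity
  set r := (ε - δ) / L with hr
  have hr0 : 0 < r := div_pos (by linarith) hL
  have hLr : L * r = ε - δ := by rw [hr]; field_simp
  obtain ⟨N₁, hN₁⟩ := hexc (min (r / 4) (δ * r / 8)) (by positivity)
  obtain ⟨N₂, hN₂⟩ := eventually_atTop.1 (hstep.eventually_lt_const (show 0 < r / 4 by positivity))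
  obtain ⟨N₃, hN₃⟩ := Metric.cauchySeq_iff.1 hlim.cauchySeq (δ * r / 8) (by positivity)
  obtain ⟨N₄, hN₄⟩ := eventually_atTop.1 hbdd
  obtain ⟨n, m, hn, hnm, hpn, hqm, hbet⟩ :=
    exists_passage hfreq hge (max (max N₁ N₂) (max N₃ N₄))
  simp only [max_le_iff] at hn
  obtain ⟨e1, e2⟩ := hN₁ (n + 1) m (by omega) hnm fun k hk hkm =>
    ⟨not_lt.1 (hbet k hk hkm).1, hN₄ k (by omega)⟩
  have d1 : r ≤ ‖θ m - θ n‖ := by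
    have := hlip (θ m) (θ n)
    have := norm_sub_norm_le (u (θ m)) (u (θ n))
    refine le_of_mul_le_mul_left ?_ hL
    linarith
  have d2 : ‖θ m - θ n‖ ≤ ‖θ m - θ (n + 1)‖ + ‖θ (n + 1) - θ n‖ :=
    norm_sub_le_norm_sub_add_norm_sub _ _ _
  have d3 := hN₂ n (by omega)
  have d4 : δ * ∑ k ∈ Finset.Ico (n + 1) m, ‖u (θ k)‖ / √(S k)
      ≤ ∑ k ∈ Finset.Ico (n + 1) m, ‖u (θ k)‖ ^ 2 / √(S k) := by
    rw [Finset.mul_sum]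
    refine Finset.sum_le_sum fun k hk => ?_
    rw [Finset.mem_Ico] at hk
    have := not_lt.1 (hbet k hk.1 hk.2).1
    rw [← mul_div_assoc, sq]
    gcongr
  have d5 := hN₃ m (by omega) (n + 1) (by omega)
  rw [Real.dist_eq] at d5
  have d6 := neg_abs_le (g (θ m) - g (θ (n + 1)))
  have m1 := min_le_left (r / 4) (δ * r / 8)
  have m2 := min_le_right (r / 4) (δ * r / 8)
  have d7 := mul_le_mul_of_nonneg_left d4 hα.le
  have d8 : r / 2 ≤ α * ∑ k ∈ Finset.Ico (n + 1) m, ‖u (θ k)‖ / √(S k) := by linarith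
  have d9 := mul_le_mul_of_nonneg_left d8 hδ.le
  nlinarith [mul_pos hδ hr0]

namespace AdaGradNormPath

variable {α : ℝ} {G θ : ℕ → E} {S : ℕ → ℝ}

theorem S_le_exp (h : AdaGradNormPath α G θ S) (n : ℕ) :
    S n ≤ S 0 * Real.exp (∑ k ∈ Finset.range n, ‖G k‖ ^ 2 / S k) := by
  induction n with
  | zero => simp
  | succ n ih =>
    have hS := h.S_pos n
    have e : S (n + 1) = S n * (‖G n‖ ^ 2 / S n + 1) := by rw [h.S_succ]; field_simp; ring
    rw [e, Finset.sum_range_succ, Real.exp_add, ← mul_assoc]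
    have := Real.add_one_le_exp (‖G n‖ ^ 2 / S n)
    have := h.S_zero_pos
    gcongr

theorem tendsto_zero_of_bddAbove (h : AdaGradNormPath α G θ S) {u : E → E}
    (hU : Summable fun k => ‖u (θ k)‖ ^ 2 / S k) {B : ℝ} (hB : ∀ n, S n ≤ B) :
    Tendsto (fun n => ‖u (θ n)‖) atTop (𝓝 0) := by
  have h1 : Tendsto (fun n => ‖u (θ n)‖ ^ 2) atTop (𝓝 0) := by
    refine squeeze_zero (fun n => sq_nonneg _) (fun n => ?_)
      (by simpa using hU.tendsto_atTop_zero.const_mul B)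
    have hS := h.S_pos n
    calc ‖u (θ n)‖ ^ 2 = S n * (‖u (θ n)‖ ^ 2 / S n) := by field_simp
      _ ≤ _ := by gcongr; exact hB n
  simpa using h1.sqrt

theorem frequently_lt (h : AdaGradNormPath α G θ S) {u : E → E} {j : ℕ}
    (hQ : Summable fun k => (normFar u j).indicator (fun _ => (1 : ℝ)) (θ k) * (‖G k‖ ^ 2 / S k))
    (hS : Tendsto S atTop atTop) : ∃ᶠ n in atTop, ‖u (θ n)‖ < 1 / ((j : ℝ) + 1) := by
  intro hcon
  have hsum : Summable fun k => ‖G k‖ ^ 2 / S k := by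
    rw [summable_congr_atTop (g₁ := fun k => (normFar u j).indicator (fun _ => (1 : ℝ)) (θ k)
      * (‖G k‖ ^ 2 / S k))]
    · exact hQ
    · filter_upwards [hcon] with n hn
      have : θ n ∈ normFar u j := not_lt.1 hn
      simp [this]
  obtain ⟨n, hn⟩ := (hS.eventually_gt_atTop
    (S 0 * Real.exp (∑' k, ‖G k‖ ^ 2 / S k))).exists
  refine absurd (h.S_le_exp n) (not_le.2 (lt_of_le_of_lt ?_ hn))
  have := h.S_zero_pos
  gcongr
  exact hsum.sum_le_tsum _ fun k _ => div_nonneg (sq_nonneg _) (h.S_pos k).le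

theorem tendsto_norm_sub (h : AdaGradNormPath α G θ S) {u : E → E} {δ₀ δ₁ : ℝ}
    (hδ₀ : 0 < δ₀) (hsharp : ∀ n, ‖u (θ n)‖ ≤ δ₀ → ‖G n‖ ≤ δ₁)
    (hQ : ∀ j, Summable fun k =>
      (normFar u j).indicator (fun _ => (1 : ℝ)) (θ k) * (‖G k‖ ^ 2 / S k))
    (hS : Tendsto S atTop atTop) : Tendsto (fun n => ‖θ (n + 1) - θ n‖) atTop (𝓝 0) := by
  obtain ⟨j, hj⟩ := exists_nat_one_div_lt hδ₀
  have h1 : Tendsto (fun n => ‖θ (n + 1) - θ n‖ ^ 2) atTop (𝓝 0) := by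
    have hlim : Tendsto (fun n => α ^ 2 * ((normFar u j).indicator (fun _ => (1 : ℝ)) (θ n)
        * (‖G n‖ ^ 2 / S n) + δ₁ ^ 2 / S n)) atTop (𝓝 0) := by
      simpa using (((hQ j).tendsto_atTop_zero).add (hS.const_div_atTop (δ₁ ^ 2))).const_mul (α ^ 2)
    refine squeeze_zero (fun n => sq_nonneg _) (fun n => (h.norm_sub_sq_le n).trans ?_) hlim
    have hSn := h.S_pos n
    gcongr
    by_cases hn : θ n ∈ normFar u j
    · simp only [hn, Set.indicator_of_mem, one_mul]
      exact le_add_of_nonneg_right (by positivity)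
    · simp only [hn, not_false_eq_true, Set.indicator_of_notMem, zero_mul, zero_add]
      have : ‖G n‖ ≤ δ₁ := hsharp n ((not_le.1 hn).le.trans hj.le)
      gcongr
  simpa using h1.sqrt

theorem tendsto_norm_gradient_zero [ProperSpace E] (h : AdaGradNormPath α G θ S) (hα : 0 < α)
    {g : E → ℝ} {u : E → E} {L δt δ₀ δ₁ : ℝ} (hL : 0 < L) (hδt : 0 < δt) (hδ₀ : 0 < δ₀)
    (hg : Continuous g) (hg0 : ∀ x, 0 ≤ g x)
    (hdesc : ∀ x y, g y ≤ g x + inner ℝ (u x) (y - x) + L * ‖y - x‖ ^ 2)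
    (hlip : ∀ x y, ‖u x - u y‖ ≤ L * ‖x - y‖)
    (hflat : ∀ᶠ x in Bornology.cobounded E, δt < ‖u x‖)
    (hcoer : Tendsto g (Bornology.cobounded E) atTop)
    (hsard : interior (closure {y : ℝ | ∃ x : E, u x = 0 ∧ g x = y}) = ∅)
    (hsharp : ∀ n, ‖u (θ n)‖ ≤ δ₀ → ‖G n‖ ≤ δ₁)
    (hU : Summable fun k => ‖u (θ k)‖ ^ 2 / S k)
    (hQ : ∀ j, Summable fun k =>
      (normFar u j).indicator (fun _ => (1 : ℝ)) (θ k) * (‖G k‖ ^ 2 / S k))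
    (hV : ∀ j, CauchySeq fun n => ∑ k ∈ Finset.range n,
      (normShell u j).indicator (fun _ => (1 : ℝ)) (θ k) • ((1 / √(S k)) • (G k - u (θ k))))
    (hP : ∀ j, CauchySeq fun n => ∑ k ∈ Finset.range n,
      inner ℝ ((normShell u j).indicator u (θ k)) (G k - u (θ k)) / √(S k)) :
    Tendsto (fun n => ‖u (θ n)‖) atTop (𝓝 0) := by
  rcases tendsto_atTop_of_monotone h.S_mono with hS | ⟨l, hl⟩
  swap
  · exact h.tendsto_zero_of_bddAbove hU fun n => h.S_mono.ge_of_tendsto hl n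
  have huc : Continuous u :=
    (LipschitzWith.of_dist_le_mul (K := ⟨L, hL.le⟩) fun x y => by
      rw [dist_eq_norm, dist_eq_norm]; exact hlip x y).continuous
  have hstep := h.tendsto_norm_sub hδ₀ hsharp hQ hS
  have hexc : ∀ j, ∀ ε > 0, ∃ N, ∀ n m, N ≤ n → n ≤ m →
      (∀ k, n ≤ k → k < m → θ k ∈ normShell u j) →
      g (θ m) + α * ∑ k ∈ Finset.Ico n m, ‖u (θ k)‖ ^ 2 / √(S k) ≤ g (θ n) + ε ∧
      ‖θ m - θ n‖ ≤ α * ∑ k ∈ Finset.Ico n m, ‖u (θ k)‖ / √(S k) + ε := by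
    intro j ε hε
    refine h.eventually_excursion_le hα hL.le hdesc (M := j) (fun x hx => hx.2) ?_ (hV j) (hP j) hε
    refine (hQ j).of_nonneg_of_le (fun k => ?_) (fun k => ?_)
    · exact mul_nonneg (Set.indicator_nonneg (fun _ _ => zero_le_one) _)
        (div_nonneg (sq_nonneg _) (h.S_pos k).le)
    · refine mul_le_mul_of_nonneg_right ?_ (div_nonneg (sq_nonneg _) (h.S_pos k).le)
      exact Set.indicator_le_indicator_of_subset (normShell_subset_normFar u j)
        (fun _ => zero_le_one) _
  have hubd : ∀ c, ∃ M, ∀ x, g x ≤ c → ‖u x‖ ≤ M := fun c =>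
    (isCompact_sublevel_of_coercive hg hcoer c).exists_bound_of_continuousOn huc.continuousOn
  have hnocross : ∀ a b δ, a < b → 0 < δ → (∀ x, a ≤ g x → g x ≤ b → δ ≤ ‖u x‖) →
      ¬ ((∃ᶠ n in atTop, g (θ n) ≤ a) ∧ ∃ᶠ n in atTop, b ≤ g (θ n)) := by
    intro a b δ hab hδ hfar
    obtain ⟨M, hM⟩ := hubd b
    obtain ⟨j, hj1, hj2⟩ := exists_one_div_le_and_le (M := M) hδ
    exact not_frequently_crossing_of_excursion_le hα hdesc hstep (hexc j) hab
      (fun x hx => hM x (hx.trans hab.le))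
      fun x h1 h2 => ⟨hj1.trans (hfar x h1 h2), (hM x h2).trans hj2⟩
  obtain ⟨c₀, hc₀⟩ : ∃ c, ∀ x, ‖u x‖ ≤ δt → g x ≤ c := by
    have hbd : Bornology.IsBounded {x | ‖u x‖ ≤ δt} := by
      rw [Bornology.isBounded_def]
      filter_upwards [hflat] with x hx
      simpa using hx
    have hc : IsCompact {x | ‖u x‖ ≤ δt} :=
      Metric.isCompact_of_isClosed_isBounded (isClosed_le huc.norm continuous_const) hbd
    obtain ⟨c, hc⟩ := hc.exists_bound_of_continuousOn hg.continuousOn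
    exact ⟨c, fun x hx => (le_abs_self _).trans (hc x hx)⟩
  have hbddg : ∀ᶠ n in atTop, g (θ n) < c₀ + 2 := by
    have hlow : ∃ᶠ n in atTop, g (θ n) ≤ c₀ + 1 := by
      obtain ⟨j, hj⟩ := exists_nat_one_div_lt hδt
      refine (h.frequently_lt (hQ j) hS).mono fun n hn => ?_
      linarith [hc₀ _ (hn.le.trans hj.le)]
    have := hnocross (c₀ + 1) (c₀ + 2) δt (by linarith) hδt fun x h1 _ => by
      by_contra! hlt
      linarith [hc₀ x hlt.le]
    rw [not_and] at this
    simpa [not_frequently] using this hlow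
  obtain ⟨c, hc⟩ : ∃ c, Tendsto (fun n => g (θ n)) atTop (𝓝 c) := by
    refine tendsto_of_no_upcrossings dense_univ (fun a _ b _ hab hfr => ?_)
      ⟨c₀ + 2, (hbddg.mono fun n hn => hn.le)⟩ (isBoundedUnder_of ⟨0, fun n => hg0 _⟩)
    have hopen : ∃ y ∈ Set.Ioo a b, y ∉ closure {y : ℝ | ∃ x : E, u x = 0 ∧ g x = y} := by
      by_contra! hall
      have := interior_maximal hall isOpen_Ioo
      rw [hsard, Set.subset_empty_iff] at this
      exact (Set.nonempty_Ioo.2 hab).ne_empty this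
    obtain ⟨y, hy, hycl⟩ := hopen
    have hnhds : Set.Ioo a b ∩ (closure {y : ℝ | ∃ x : E, u x = 0 ∧ g x = y})ᶜ ∈ 𝓝 y :=
      inter_mem (isOpen_Ioo.mem_nhds hy) (isClosed_closure.isOpen_compl.mem_nhds hycl)
    obtain ⟨r, hr, hball⟩ := Metric.nhds_basis_closedBall.mem_iff.1 hnhds
    rw [Real.closedBall_eq_Icc] at hball
    have hband : ∃ δ > 0, ∀ x, y - r ≤ g x → g x ≤ y + r → δ ≤ ‖u x‖ := by
      have hK : IsCompact {x | g x ≤ y + r ∧ y - r ≤ g x} :=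
        (isCompact_sublevel_of_coercive hg hcoer (y + r)).inter_right
          (isClosed_le continuous_const hg)
      rcases Set.eq_empty_or_nonempty {x | g x ≤ y + r ∧ y - r ≤ g x} with he | hne
      · refine ⟨1, one_pos, fun x h1 h2 => ?_⟩
        exact absurd (show x ∈ {x | g x ≤ y + r ∧ y - r ≤ g x} from ⟨h2, h1⟩)
          (he ▸ Set.notMem_empty x)
      · obtain ⟨x₀, hx₀, hmin⟩ := hK.exists_isMinOn hne huc.norm.continuousOn
        refine ⟨‖u x₀‖, norm_pos_iff.2 fun h0 => ?_, fun x h1 h2 => hmin ⟨h2, h1⟩⟩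
        exact (hball ⟨hx₀.2, hx₀.1⟩).2 (subset_closure ⟨x₀, h0, rfl⟩)
    obtain ⟨δ, hδ, hfar⟩ := hband
    have ha := (hball (show y - r ∈ _ from ⟨le_rfl, by linarith⟩)).1.1
    have hb := (hball (show y + r ∈ _ from ⟨by linarith, le_rfl⟩)).1.2
    exact hnocross (y - r) (y + r) δ (by linarith) hδ hfar
      ⟨hfr.1.mono fun n hn => by linarith, hfr.2.mono fun n hn => by linarith⟩
  rw [Metric.tendsto_nhds]
  intro ε hε
  obtain ⟨M, hM⟩ := hubd (c₀ + 2)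
  obtain ⟨j, hj1, hj2⟩ := exists_one_div_le_and_le (M := M) (half_pos hε)
  have := not_frequently_ge_of_excursion_le hα hL hlip hstep (hexc j) hc
    (hbddg.mono fun n hn => (hM _ hn.le).trans hj2) (h.frequently_lt (hQ j) hS)
    (show 1 / ((j : ℝ) + 1) < ε by linarith)
  simpa [not_frequently] using this

end AdaGradNormPath

end Deterministic

section Martingale

variable {Ω : Type*} {m0 : MeasurableSpace Ω} {P : Measure Ω}

theorem ae_summable_of_sum_integral_le {F : ℕ → Ω → ℝ} (hF : ∀ n ω, 0 ≤ F n ω)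
    (hF_int : ∀ n, Integrable (F n) P) {C : ℝ}
    (hC : ∀ n, ∑ k ∈ Finset.range n, ∫ ω, F k ω ∂P ≤ C) :
    ∀ᵐ ω ∂P, Summable fun n => F n ω := by
  have hs : Summable fun n => ∫ ω, F n ω ∂P :=
    summable_of_sum_range_le (fun n => integral_nonneg (hF n)) hC
  have hfin : ∫⁻ ω, ∑' n, ENNReal.ofReal (F n ω) ∂P ≠ ⊤ := by
    rw [lintegral_tsum fun n => (hF_int n).1.aemeasurable.ennreal_ofReal]
    have e : ∀ n, ∫⁻ ω, ENNReal.ofReal (F n ω) ∂P = ENNReal.ofReal (∫ ω, F n ω ∂P) := fun n =>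
      (ofReal_integral_eq_lintegral_ofReal (hF_int n) (ae_of_all _ (hF n))).symm
    simp_rw [e]
    exact hs.tsum_ofReal_ne_top
  have hae := ae_lt_top' (AEMeasurable.tsum fun n =>
    (hF_int n).1.aemeasurable.ennreal_ofReal) hfin
  filter_upwards [hae] with ω hω
  have := ENNReal.summable_toReal hω.ne
  simpa [ENNReal.toReal_ofReal (hF _ ω)] using this

/-- A series of martingale differences with summable variances converges almost surely. -/
theorem ae_cauchySeq_sum_of_condExp_eq_zero [IsProbabilityMeasure P] {ℱ : Filtration ℕ m0}
    {D : ℕ → Ω → ℝ} (hmeas : ∀ n, StronglyMeasurable[ℱ (n + 1)] (D n))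
    (hL2 : ∀ n, MemLp (D n) 2 P) (hzero : ∀ n, P[D n | ℱ n] =ᵐ[P] 0) {C : ℝ}
    (hC : ∀ n, ∑ k ∈ Finset.range n, ∫ ω, D k ω ^ 2 ∂P ≤ C) :
    ∀ᵐ ω ∂P, CauchySeq fun n => ∑ k ∈ Finset.range n, D k ω := by
  set M : ℕ → Ω → ℝ := fun n ω => ∑ k ∈ Finset.range n, D k ω with hM
  have hMsucc : ∀ n, M (n + 1) = M n + D n := fun n => by
    ext ω; simp [hM, Finset.sum_range_succ]
  have hML2 : ∀ n, MemLp (M n) 2 P := fun n => memLp_finsetSum _ fun k _ => hL2 k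
  have hMint : ∀ n, Integrable (M n) P := fun n => (hML2 n).integrable one_le_two
  have hDint : ∀ n, Integrable (D n) P := fun n => (hL2 n).integrable one_le_two
  have hMmeas : StronglyAdapted ℱ M := fun n => by
    refine Finset.stronglyMeasurable_fun_sum _ fun k hk => ?_
    exact (hmeas k).mono (ℱ.mono (Finset.mem_range.1 hk))
  have hmart : Martingale M ℱ P := by
    refine martingale_nat hMmeas hMint fun n => ?_
    rw [hMsucc]
    have h1 := condExp_add (hMint n) (hDint n) (ℱ n)
    rw [condExp_of_stronglyMeasurable (ℱ.le n) (hMmeas n) (hMint n)] at h1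
    filter_upwards [h1, hzero n] with ω h2 h3
    simp [h2, h3]
  have horth : ∀ n, ∫ ω, M n ω * D n ω ∂P = 0 := fun n => by
    have hi : Integrable (M n * D n) P := (hML2 n).integrable_mul (hL2 n)
    have h1 := condExp_mul_of_stronglyMeasurable_left (hMmeas n) hi (hDint n)
    have h2 : P[M n * D n | ℱ n] =ᵐ[P] 0 := by
      filter_upwards [h1, hzero n] with ω h2 h3
      simp [h2, h3]
    calc ∫ ω, M n ω * D n ω ∂P = ∫ ω, (P[M n * D n | ℱ n]) ω ∂P :=
          (integral_condExp (ℱ.le n)).symm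
      _ = 0 := by rw [integral_congr_ae h2]; simp
  have hvar : ∀ n, ∫ ω, M n ω ^ 2 ∂P = ∑ k ∈ Finset.range n, ∫ ω, D k ω ^ 2 ∂P := by
    intro n
    induction n with
    | zero => simp [hM]
    | succ n ih =>
      rw [Finset.sum_range_succ, ← ih, hMsucc]
      have hi : Integrable (fun ω => M n ω * D n ω) P := (hML2 n).integrable_mul (hL2 n)
      have e : ∀ ω, (M n + D n) ω ^ 2 = M n ω ^ 2 + 2 * (M n ω * D n ω) + D n ω ^ 2 := fun ω => by
        simp only [Pi.add_apply]; ring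
      simp_rw [e]
      rw [integral_add (f := fun ω => M n ω ^ 2 + 2 * (M n ω * D n ω))
          ((hML2 n).integrable_sq.add (hi.const_mul 2)) (hL2 n).integrable_sq,
        integral_add (hML2 n).integrable_sq (hi.const_mul 2), integral_const_mul, horth]
      ring
  have hbdd : ∀ n, eLpNorm (M n) 1 P ≤ ((1 + C).toNNReal : ENNReal) := fun n => by
    rw [eLpNorm_one_eq_lintegral_enorm, ← ofReal_integral_norm_eq_lintegral_enorm (hMint n)]
    refine ENNReal.ofReal_le_ofReal ?_
    calc ∫ ω, ‖M n ω‖ ∂P ≤ ∫ ω, (1 + M n ω ^ 2) ∂P := by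
          refine integral_mono (hMint n).norm
            ((integrable_const _).add (hML2 n).integrable_sq) fun ω => ?_
          simp only [Real.norm_eq_abs]
          nlinarith [sq_nonneg (|M n ω| - 1), sq_abs (M n ω)]
      _ = 1 + ∫ ω, M n ω ^ 2 ∂P := by
          rw [integral_add (integrable_const _) (hML2 n).integrable_sq]; simp
      _ ≤ 1 + C := by rw [hvar]; linarith [hC n]
  filter_upwards [hmart.submartingale.exists_ae_tendsto_of_bdd hbdd] with ω ⟨c, hc⟩
  exact hc.cauchySeq

end Martingale

section Energy

theorem sq_div_mul_sqrt_le {a x : ℝ} (ha : 0 < a) :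
    x ^ 2 / ((a + x ^ 2) * √(a + x ^ 2)) ≤ 2 * (1 / √a - 1 / √(a + x ^ 2)) := by
  have hb : 0 < a + x ^ 2 := by positivity
  have hsa := Real.sqrt_pos.2 ha
  have hsb := Real.sqrt_pos.2 hb
  have ea := Real.sq_sqrt ha.le
  have eb := Real.sq_sqrt hb.le
  have hst : √a ≤ √(a + x ^ 2) := Real.sqrt_le_sqrt (by nlinarith)
  set s := √a
  set t := √(a + x ^ 2)
  have hx : x ^ 2 = t ^ 2 - s ^ 2 := by rw [ea, eb]; ring
  rw [← eb, hx]
  have e : 2 * (1 / s - 1 / t) - (t ^ 2 - s ^ 2) / (t ^ 2 * t)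
      = (t - s) * (2 * t ^ 2 - s * (t + s)) / (s * t ^ 3) := by field_simp; ring
  rw [← sub_nonneg, e]
  have : 0 ≤ t - s := by linarith
  have : 0 ≤ 2 * t ^ 2 - s * (t + s) := by nlinarith
  positivity

theorem sq_div_sq_le {a x : ℝ} (ha : 0 < a) :
    x ^ 2 / (a + x ^ 2) ^ 2 ≤ 1 / a - 1 / (a + x ^ 2) := by
  have hb : 0 < a + x ^ 2 := by positivity
  have e : 1 / a - 1 / (a + x ^ 2) - x ^ 2 / (a + x ^ 2) ^ 2 = x ^ 4 / (a * (a + x ^ 2) ^ 2) := by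
    field_simp; ring
  rw [← sub_nonneg, e]
  positivity

/-- Cost of replacing the accumulator `a + x ^ 2` by `a` in the cross term, in terms of
`A ≥ E[x ^ 2]`. -/
theorem mul_mul_one_div_sub_le {a x y A : ℝ} (ha : 0 < a) (hA : 0 < A) :
    y * x * (1 / a - 1 / (a + x ^ 2))
      ≤ y ^ 2 / (2 * A * a) * x ^ 2 + A / 2 * (1 / a - 1 / (a + x ^ 2)) := by
  have hb : 0 < a + x ^ 2 := by positivity
  set Γ := x ^ 2 / (a + x ^ 2) with hΓ
  have hΓ0 : 0 ≤ Γ := by positivity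
  have hΓ1 : Γ ≤ 1 := by rw [hΓ, div_le_one hb]; linarith
  have hD : 1 / a - 1 / (a + x ^ 2) = Γ / a := by rw [hΓ]; field_simp; ring
  rw [hD]
  have h1 : y * x * Γ ≤ y ^ 2 * x ^ 2 / (2 * A) + A / 2 * Γ := by
    have e : y ^ 2 * x ^ 2 / (2 * A) + A / 2 * Γ ^ 2 - y * x * Γ
        = (y * x - A * Γ) ^ 2 / (2 * A) := by field_simp; ring
    have : 0 ≤ (y * x - A * Γ) ^ 2 / (2 * A) := by positivity
    have : A / 2 * Γ ^ 2 ≤ A / 2 * Γ := by gcongr; nlinarith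
    linarith
  calc y * x * (Γ / a) = y * x * Γ / a := by ring
    _ ≤ (y ^ 2 * x ^ 2 / (2 * A) + A / 2 * Γ) / a := by gcongr
    _ = _ := by field_simp

theorem sq_mul_one_div_sub_le {a x y y' l η : ℝ} (ha : 0 < a) (hη : 0 < η) (hy' : 0 ≤ y')
    (hyy' : y' ≤ y + l * (x / √(a + x ^ 2))) :
    y ^ 2 * (1 / a - 1 / (a + x ^ 2)) ≤ y ^ 2 / a - y' ^ 2 / (a + x ^ 2) + η * (y ^ 2 / a)
      + (1 + 1 / η) * l ^ 2 * (1 / a - 1 / (a + x ^ 2)) := by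
  have hb : 0 < a + x ^ 2 := by positivity
  set r := x / √(a + x ^ 2) with hr
  have hr2 : r ^ 2 = x ^ 2 / (a + x ^ 2) := by rw [hr, div_pow, Real.sq_sqrt hb.le]
  have h1 : y' ^ 2 ≤ y ^ 2 + η * y ^ 2 + (1 + 1 / η) * l ^ 2 * r ^ 2 := by
    have h2 : y' ^ 2 ≤ (y + l * r) ^ 2 := by gcongr
    have e : y ^ 2 + η * y ^ 2 + (1 + 1 / η) * l ^ 2 * r ^ 2 - (y + l * r) ^ 2
        = (η * y - l * r) ^ 2 / η := by field_simp; ring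
    have : 0 ≤ (η * y - l * r) ^ 2 / η := by positivity
    linarith
  have h2 : y' ^ 2 / (a + x ^ 2) ≤ y ^ 2 / (a + x ^ 2) + η * (y ^ 2 / a)
      + (1 + 1 / η) * l ^ 2 * (1 / a - 1 / (a + x ^ 2)) := by
    calc y' ^ 2 / (a + x ^ 2)
        ≤ (y ^ 2 + η * y ^ 2 + (1 + 1 / η) * l ^ 2 * r ^ 2) / (a + x ^ 2) := by gcongr
      _ = y ^ 2 / (a + x ^ 2) + η * (y ^ 2 / (a + x ^ 2))
          + (1 + 1 / η) * l ^ 2 * (x ^ 2 / (a + x ^ 2) ^ 2) := by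
          rw [hr2]; field_simp
      _ ≤ _ := by
          have := sq_div_sq_le (x := x) ha
          have : y ^ 2 / (a + x ^ 2) ≤ y ^ 2 / a := by gcongr; nlinarith
          gcongr
  have e : y ^ 2 * (1 / a - 1 / (a + x ^ 2)) = y ^ 2 / a - y ^ 2 / (a + x ^ 2) := by ring
  linarith

/-- The Lyapunov function of AdaGrad-Norm: `v` is the objective, `y` the gradient norm and `a` the
accumulator. -/
noncomputable def adaGradEnergy (κ c₁ c₂ v y a : ℝ) : ℝ :=
  v / √a + κ * (y ^ 2 / a) + c₁ * (1 / √a) + c₂ * (1 / a)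

theorem adaGradEnergy_nonneg {κ c₁ c₂ v y a : ℝ} (hκ : 0 ≤ κ) (h₁ : 0 ≤ c₁) (h₂ : 0 ≤ c₂)
    (hv : 0 ≤ v) (ha : 0 ≤ a) : 0 ≤ adaGradEnergy κ c₁ c₂ v y a := by
  unfold adaGradEnergy; positivity

theorem AdaGradNormPath.exists_energy_succ_le {E : Type*} [NormedAddCommGroup E]
    [InnerProductSpace ℝ E] {α : ℝ} (hα : 0 < α) {g : E → ℝ} {u : E → E} {L σ₀ σ₁ : ℝ} (hL : 0 ≤ L)
    (hσ₀ : 0 ≤ σ₀) (hσ₁ : 0 ≤ σ₁) (hg0 : ∀ x, 0 ≤ g x)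
    (hdesc : ∀ x y, g y ≤ g x + inner ℝ (u x) (y - x) + L * ‖y - x‖ ^ 2)
    (hlip : ∀ x y, ‖u x - u y‖ ≤ L * ‖x - y‖) :
    ∃ κ c₁ c₂ : ℝ, 0 ≤ κ ∧ 0 ≤ c₁ ∧ 0 ≤ c₂ ∧ ∀ {G θ : ℕ → E} {S : ℕ → ℝ},
      AdaGradNormPath α G θ S → ∀ n,
      adaGradEnergy κ c₁ c₂ (g (θ (n + 1))) ‖u (θ (n + 1))‖ (S (n + 1))
          + α * inner ℝ ((1 / S n) • u (θ n)) (G n)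
        ≤ adaGradEnergy κ c₁ c₂ (g (θ n)) ‖u (θ n)‖ (S n)
          + α * (‖u (θ n)‖ ^ 2 / (2 * (σ₀ * ‖u (θ n)‖ ^ 2 + σ₁ + 1) * S n) * ‖G n‖ ^ 2)
          + α / 8 * (‖u (θ n)‖ ^ 2 / S n) := by
  set η : ℝ := 1 / (4 * (σ₀ + 1)) with hηd
  have hη : 0 < η := by positivity
  have hση : σ₀ * η ≤ 1 / 4 := by
    rw [hηd, mul_one_div, div_le_div_iff₀ (by positivity) (by norm_num)]; linarith
  refine ⟨α * σ₀ / 2, 2 * (L * α ^ 2),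
    α / 2 * (σ₁ + 1) + α * σ₀ / 2 * ((1 + 1 / η) * (L * α) ^ 2), by positivity, by positivity,
    by positivity, fun {G θ S} h n => ?_⟩
  have ha := h.S_pos n
  have hb := h.S_pos (n + 1)
  have hab := h.S_succ n
  have hstep : ‖u (θ (n + 1))‖ ≤ ‖u (θ n)‖ + L * α * (‖G n‖ / √(S (n + 1))) := by
    have h1 := norm_le_norm_add_norm_sub' (u (θ (n + 1))) (u (θ n))
    have h2 := hlip (θ (n + 1)) (θ n)
    rw [h.sub_eq, norm_smul, norm_neg, Real.norm_of_nonneg (by positivity)] at h2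
    have e : L * (α / √(S (n + 1)) * ‖G n‖) = L * α * (‖G n‖ / √(S (n + 1))) := by ring
    linarith
  set A := σ₀ * ‖u (θ n)‖ ^ 2 + σ₁ + 1 with hA
  have hA0 : 0 < A := by positivity
  have k1 := sq_div_mul_sqrt_le (x := ‖G n‖) ha
  have k2 := mul_mul_one_div_sub_le (x := ‖G n‖) (y := ‖u (θ n)‖) ha hA0
  rw [hab] at hstep
  have k3 := sq_mul_one_div_sub_le ha hη (norm_nonneg _) hstep
  rw [← hab] at k1 k2 k3
  have k4 : g (θ (n + 1)) / √(S (n + 1)) ≤ g (θ n) / √(S n)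
      - α * (inner ℝ (u (θ n)) (G n) / S (n + 1))
      + L * α ^ 2 * (‖G n‖ ^ 2 / (S (n + 1) * √(S (n + 1)))) := by
    have hd := hdesc (θ n) (θ (n + 1))
    rw [h.norm_sub_sq, h.sub_eq, inner_smul_right] at hd
    have hsb := Real.sqrt_pos.2 hb
    have e2 := Real.mul_self_sqrt hb.le
    calc g (θ (n + 1)) / √(S (n + 1))
        ≤ (g (θ n) + -(α / √(S (n + 1))) * inner ℝ (u (θ n)) (G n)
            + L * (α ^ 2 * (‖G n‖ ^ 2 / S (n + 1)))) / √(S (n + 1)) := by gcongr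
      _ = g (θ n) / √(S (n + 1))
          - α * (inner ℝ (u (θ n)) (G n) / (√(S (n + 1)) * √(S (n + 1))))
          + L * α ^ 2 * (‖G n‖ ^ 2 / (S (n + 1) * √(S (n + 1)))) := by field_simp; ring
      _ ≤ _ := by
          rw [e2]
          have : g (θ n) / √(S (n + 1)) ≤ g (θ n) / √(S n) := by
            have := hg0 (θ n)
            have := h.S_mono n.le_succ
            gcongr
          linarith
  have k5 : inner ℝ (u (θ n)) (G n) * (1 / S n - 1 / S (n + 1))
      ≤ ‖u (θ n)‖ * ‖G n‖ * (1 / S n - 1 / S (n + 1)) := by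
    refine mul_le_mul_of_nonneg_right (real_inner_le_norm _ _) ?_
    exact sub_nonneg.2 (one_div_le_one_div_of_le ha (h.S_mono n.le_succ))
  have k6 : 0 ≤ ‖u (θ n)‖ ^ 2 / S n := by positivity
  have k7 := mul_le_mul_of_nonneg_right hση k6
  have m1 := mul_le_mul_of_nonneg_left k1 (show 0 ≤ L * α ^ 2 by positivity)
  have m2 := mul_le_mul_of_nonneg_left (k5.trans k2) hα.le
  have m3 := mul_le_mul_of_nonneg_left k3 (show 0 ≤ α * σ₀ / 2 by positivity)
  have m4 := mul_le_mul_of_nonneg_left k7 (show 0 ≤ α / 2 by positivity)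
  rw [inner_smul_left]
  simp only [adaGradEnergy, conj_trivial]
  have eA : α * (A / 2 * (1 / S n - 1 / S (n + 1)))
      = α / 2 * (σ₁ + 1) * (1 / S n - 1 / S (n + 1))
        + α * σ₀ / 2 * (‖u (θ n)‖ ^ 2 * (1 / S n - 1 / S (n + 1))) := by rw [hA]; ring
  linear_combination k4 + m1 + m2 + m3 + m4 + eA

end Energy

section Stochastic

variable {Ω : Type*} {m0 : MeasurableSpace Ω} {P : Measure Ω}

/-- Bounded functions that are strongly measurable with respect to `m`. -/
structure BoundedMeasurable {F : Type*} [SeminormedAddCommGroup F] (m : MeasurableSpace Ω)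
    (f : Ω → F) : Prop where
  stronglyMeasurable : StronglyMeasurable[m] f
  bounded : ∃ C, ∀ ω, ‖f ω‖ ≤ C

namespace BoundedMeasurable

variable {F : Type*} [NormedAddCommGroup F] {m m' : MeasurableSpace Ω}

theorem mono {f : Ω → F} (hf : BoundedMeasurable m f) (hm : m ≤ m') : BoundedMeasurable m' f :=
  ⟨hf.1.mono hm, hf.2⟩

theorem add {f h : Ω → F} (hf : BoundedMeasurable m f) (hh : BoundedMeasurable m h) :
    BoundedMeasurable m fun ω => f ω + h ω := by
  obtain ⟨hfm, C, hC⟩ := hf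
  obtain ⟨hhm, K, hK⟩ := hh
  exact ⟨hfm.add hhm, C + K, fun ω => (norm_add_le _ _).trans (add_le_add (hC ω) (hK ω))⟩

theorem smul [NormedSpace ℝ F] {c : Ω → ℝ} {f : Ω → F} (hc : BoundedMeasurable m c)
    (hf : BoundedMeasurable m f) : BoundedMeasurable m fun ω => c ω • f ω := by
  obtain ⟨hcm, C, hC⟩ := hc
  obtain ⟨hfm, K, hK⟩ := hf
  refine ⟨hcm.smul hfm, C * K, fun ω => ?_⟩
  rw [norm_smul]
  exact mul_le_mul (hC ω) (hK ω) (norm_nonneg _) ((norm_nonneg _).trans (hC ω))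

theorem mul {c f : Ω → ℝ} (hc : BoundedMeasurable m c) (hf : BoundedMeasurable m f) :
    BoundedMeasurable m fun ω => c ω * f ω := hc.smul hf

theorem const_mul {f : Ω → ℝ} (hf : BoundedMeasurable m f) (c : ℝ) :
    BoundedMeasurable m fun ω => c * f ω :=
  BoundedMeasurable.mul ⟨stronglyMeasurable_const, ‖c‖, fun _ => le_rfl⟩ hf

theorem integrable [IsFiniteMeasure P] {f : Ω → F} (hf : BoundedMeasurable m f) (hm : m ≤ m0) :
    Integrable f P := by
  obtain ⟨hfm, C, hC⟩ := hf
  exact Integrable.of_bound (hfm.mono hm).aestronglyMeasurable C (ae_of_all _ hC)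

theorem integrable_mul {w Y : Ω → ℝ} (hw : BoundedMeasurable m w) (hm : m ≤ m0)
    (hY : Integrable Y P) : Integrable (fun ω => w ω * Y ω) P := by
  obtain ⟨hwm, C, hC⟩ := hw
  exact hY.bdd_mul (hwm.mono hm).aestronglyMeasurable (ae_of_all _ hC)

theorem integral_mul_le_of_condExp_le [IsProbabilityMeasure P] {w Y Z : Ω → ℝ}
    (hw : BoundedMeasurable m w) (hm : m ≤ m0) (hw0 : ∀ ω, 0 ≤ w ω) (hY : Integrable Y P)
    (hZ : Integrable Z P) (hYZ : P[Y | m] ≤ᵐ[P] Z) :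
    ∫ ω, w ω * Y ω ∂P ≤ ∫ ω, w ω * Z ω ∂P := by
  have hwY := hw.integrable_mul hm hY
  have h1 := condExp_mul_of_stronglyMeasurable_left hw.1 hwY hY
  rw [← integral_condExp hm]
  refine integral_mono_ae integrable_condExp (hw.integrable_mul hm hZ) ?_
  filter_upwards [h1, hYZ] with ω h2 h3
  exact h2.le.trans (mul_le_mul_of_nonneg_left h3 (hw0 ω))

variable {E : Type*} [NormedAddCommGroup E] [InnerProductSpace ℝ E]

theorem integrable_inner {X Y : Ω → E} (hX : BoundedMeasurable m X) (hm : m ≤ m0)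
    (hY : Integrable Y P) : Integrable (fun ω => inner ℝ (X ω) (Y ω)) P := by
  obtain ⟨hXm, C, hC⟩ := hX
  exact (innerSL ℝ).integrable_of_bilin_of_bdd_left C
    (hXm.mono hm).aestronglyMeasurable (ae_of_all _ hC) hY

theorem condExp_inner [CompleteSpace E] [IsProbabilityMeasure P] {X Y Z : Ω → E}
    (hX : BoundedMeasurable m X) (hm : m ≤ m0) (hY : Integrable Y P) (hYZ : P[Y | m] =ᵐ[P] Z) :
    P[fun ω => inner ℝ (X ω) (Y ω) | m] =ᵐ[P] fun ω => inner ℝ (X ω) (Z ω) := by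
  have h := condExp_bilin_of_stronglyMeasurable_left (innerSL ℝ) hX.1
    (hX.integrable_inner hm hY) hY
  filter_upwards [h, hYZ] with ω h1 h2
  rw [← h2]
  exact h1

theorem integral_inner_eq [CompleteSpace E] [IsProbabilityMeasure P] {X Y Z : Ω → E}
    (hX : BoundedMeasurable m X) (hm : m ≤ m0) (hY : Integrable Y P) (hYZ : P[Y | m] =ᵐ[P] Z) :
    ∫ ω, inner ℝ (X ω) (Y ω) ∂P = ∫ ω, inner ℝ (X ω) (Z ω) ∂P := by
  rw [← integral_condExp hm]
  exact integral_congr_ae (hX.condExp_inner hm hY hYZ)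

end BoundedMeasurable

variable {E : Type*} [NormedAddCommGroup E] [InnerProductSpace ℝ E]

/-- A stochastic AdaGrad-Norm process: `G n` is an unbiased estimate of `u (θ n)` given `ℱ n`, with
affine variance. -/
structure StochasticAdaGradNorm (P : Measure Ω) (ℱ : Filtration ℕ m0) (α σ₀ σ₁ s₀ : ℝ) (x₀ : E)
    (u : E → E) (G θ : ℕ → Ω → E) (S : ℕ → Ω → ℝ) : Prop where
  path : ∀ ω, AdaGradNormPath α (fun n => G n ω) (fun n => θ n ω) fun n => S n ω
  S_zero : ∀ ω, S 0 ω = s₀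
  θ_zero : ∀ ω, θ 0 ω = x₀
  stronglyMeasurable_G : ∀ n, StronglyMeasurable[ℱ (n + 1)] (G n)
  stronglyMeasurable_θ : ∀ n, StronglyMeasurable[ℱ n] (θ n)
  integrable_G : ∀ n, Integrable (G n) P
  integrable_sq_G : ∀ n, Integrable (fun ω => ‖G n ω‖ ^ 2) P
  condExp_G : ∀ n, P[G n | ℱ n] =ᵐ[P] fun ω => u (θ n ω)
  condExp_sq_G_le : ∀ n,
    P[fun ω => ‖G n ω‖ ^ 2 | ℱ n] ≤ᵐ[P] fun ω => σ₀ * ‖u (θ n ω)‖ ^ 2 + σ₁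

namespace StochasticAdaGradNorm

variable {ℱ : Filtration ℕ m0} {α σ₀ σ₁ s₀ : ℝ} {x₀ : E} {u : E → E} {G θ : ℕ → Ω → E}
  {S : ℕ → Ω → ℝ}

theorem stronglyMeasurable_S (h : StochasticAdaGradNorm P ℱ α σ₀ σ₁ s₀ x₀ u G θ S) (n : ℕ) :
    StronglyMeasurable[ℱ n] (S n) := by
  induction n with
  | zero =>
    rw [show S 0 = fun _ => s₀ from funext h.S_zero]
    exact stronglyMeasurable_const
  | succ n ih =>
    rw [show S (n + 1) = fun ω => S n ω + ‖G n ω‖ ^ 2 from funext fun ω => (h.path ω).S_succ n]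
    exact (ih.mono (ℱ.mono n.le_succ)).add ((h.stronglyMeasurable_G n).norm.pow 2)

theorem le_S (h : StochasticAdaGradNorm P ℱ α σ₀ σ₁ s₀ x₀ u G θ S) (n : ℕ) (ω : Ω) :
    s₀ ≤ S n ω := by
  rw [← h.S_zero ω]
  exact (h.path ω).S_mono n.zero_le

theorem S_pos (h : StochasticAdaGradNorm P ℱ α σ₀ σ₁ s₀ x₀ u G θ S) (n : ℕ) (ω : Ω) : 0 < S n ω :=
  (h.path ω).S_pos n

theorem boundedMeasurable_one_div_S (h : StochasticAdaGradNorm P ℱ α σ₀ σ₁ s₀ x₀ u G θ S)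
    (hs₀ : 0 < s₀) (n : ℕ) : BoundedMeasurable (ℱ n) fun ω => 1 / S n ω := by
  refine ⟨(measurable_const.div (h.stronglyMeasurable_S n).measurable).stronglyMeasurable,
    1 / s₀, fun ω => ?_⟩
  rw [Real.norm_of_nonneg (one_div_nonneg.2 (h.S_pos n ω).le)]
  exact one_div_le_one_div_of_le hs₀ (h.le_S n ω)

theorem boundedMeasurable_one_div_sqrt_S (h : StochasticAdaGradNorm P ℱ α σ₀ σ₁ s₀ x₀ u G θ S)
    (hs₀ : 0 < s₀) (n : ℕ) : BoundedMeasurable (ℱ n) fun ω => 1 / √(S n ω) := by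
  refine ⟨(measurable_const.div (h.stronglyMeasurable_S n).measurable.sqrt).stronglyMeasurable,
    1 / √s₀, fun ω => ?_⟩
  rw [Real.norm_of_nonneg (by positivity)]
  exact one_div_le_one_div_of_le (Real.sqrt_pos.2 hs₀) (Real.sqrt_le_sqrt (h.le_S n ω))

theorem norm_sub_le (h : StochasticAdaGradNorm P ℱ α σ₀ σ₁ s₀ x₀ u G θ S) (hα : 0 ≤ α) (n : ℕ)
    (ω : Ω) : ‖θ n ω - x₀‖ ≤ n * α := by
  induction n with
  | zero => simp [h.θ_zero]
  | succ n ih =>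
    have h1 := (h.path ω).norm_sub_le hα n
    have h2 := norm_sub_le_norm_sub_add_norm_sub (θ (n + 1) ω) (θ n ω) x₀
    push_cast
    linarith

theorem boundedMeasurable_comp {F : Type*} [NormedAddCommGroup F] [ProperSpace E]
    (h : StochasticAdaGradNorm P ℱ α σ₀ σ₁ s₀ x₀ u G θ S) (hα : 0 ≤ α) {φ : E → F}
    (hφ : Continuous φ) (n : ℕ) : BoundedMeasurable (ℱ n) fun ω => φ (θ n ω) := by
  obtain ⟨C, hC⟩ := (isCompact_closedBall x₀ (n * α)).exists_bound_of_continuousOn hφ.continuousOn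
  refine ⟨hφ.comp_stronglyMeasurable (h.stronglyMeasurable_θ n), C, fun ω => hC _ ?_⟩
  rw [mem_closedBall_iff_norm]
  exact h.norm_sub_le hα n ω

theorem boundedMeasurable_sq_div [ProperSpace E]
    (h : StochasticAdaGradNorm P ℱ α σ₀ σ₁ s₀ x₀ u G θ S) (hα : 0 ≤ α) (hs₀ : 0 < s₀)
    (hu : Continuous u) (n : ℕ) : BoundedMeasurable (ℱ n) fun ω => ‖u (θ n ω)‖ ^ 2 / S n ω := by
  have := (h.boundedMeasurable_comp (φ := fun x => ‖u x‖ ^ 2) hα (by fun_prop) n).mul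
    (h.boundedMeasurable_one_div_S hs₀ n)
  simpa only [mul_one_div] using this

variable [IsProbabilityMeasure P]

theorem exists_sum_integral_sq_div_le [ProperSpace E] [CompleteSpace E]
    (h : StochasticAdaGradNorm P ℱ α σ₀ σ₁ s₀ x₀ u G θ S) (hα : 0 < α) (hs₀ : 0 < s₀)
    {g : E → ℝ} {L : ℝ} (hL : 0 ≤ L) (hσ₀ : 0 ≤ σ₀) (hσ₁ : 0 ≤ σ₁) (hg : Continuous g)
    (hu : Continuous u) (hg0 : ∀ x, 0 ≤ g x)
    (hdesc : ∀ x y, g y ≤ g x + inner ℝ (u x) (y - x) + L * ‖y - x‖ ^ 2)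
    (hlip : ∀ x y, ‖u x - u y‖ ≤ L * ‖x - y‖) :
    ∃ C, ∀ n, ∑ k ∈ Finset.range n, ∫ ω, ‖u (θ k ω)‖ ^ 2 / S k ω ∂P ≤ C := by
  obtain ⟨κ, c₁, c₂, hκ, hc₁, hc₂, henergy⟩ :=
    AdaGradNormPath.exists_energy_succ_le hα hL hσ₀ hσ₁ hg0 hdesc hlip
  set I : ℕ → ℝ := fun n => ∫ ω, ‖u (θ n ω)‖ ^ 2 / S n ω ∂P with hI
  set Φ : ℕ → Ω → ℝ := fun n ω => adaGradEnergy κ c₁ c₂ (g (θ n ω)) ‖u (θ n ω)‖ (S n ω) with hΦ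
  have hΦ_int : ∀ n, Integrable (Φ n) P := fun n => by
    have hs := h.boundedMeasurable_one_div_S hs₀ n
    have hr := h.boundedMeasurable_one_div_sqrt_S hs₀ n
    have hb := ((((h.boundedMeasurable_comp hα.le hg n).mul hr).add
      ((h.boundedMeasurable_sq_div hα.le hs₀ hu n).const_mul κ)).add (hr.const_mul c₁)).add
      (hs.const_mul c₂)
    simp only [mul_one_div (g _)] at hb
    exact hb.integrable (ℱ.le n)
  have hstep : ∀ n, ∫ ω, Φ (n + 1) ω ∂P + 3 * α / 8 * I n ≤ ∫ ω, Φ n ω ∂P := fun n => by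
    set ψ : E → ℝ := fun x => ‖u x‖ ^ 2 / (2 * (σ₀ * ‖u x‖ ^ 2 + σ₁ + 1)) with hψ
    have hψc : Continuous ψ := by
      have : ∀ x, 2 * (σ₀ * ‖u x‖ ^ 2 + σ₁ + 1) ≠ 0 := fun x => by positivity
      exact (hu.norm.pow 2).div (by fun_prop) this
    have hX := (h.boundedMeasurable_one_div_S hs₀ n).smul (h.boundedMeasurable_comp hα.le hu n)
    have hw := (h.boundedMeasurable_comp hα.le hψc n).mul (h.boundedMeasurable_one_div_S hs₀ n)
    have hZ := h.boundedMeasurable_comp hα.le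
      (show Continuous fun x => σ₀ * ‖u x‖ ^ 2 + σ₁ by fun_prop) n
    have hq := h.boundedMeasurable_sq_div hα.le hs₀ hu n
    have hq_int := hq.integrable (P := P) (ℱ.le n)
    have h1 : ∫ ω, inner ℝ ((1 / S n ω) • u (θ n ω)) (G n ω) ∂P = I n := by
      rw [hX.integral_inner_eq (ℱ.le n) (h.integrable_G n) (h.condExp_G n)]
      refine integral_congr_ae (ae_of_all _ fun ω => ?_)
      simp only [inner_smul_left, conj_trivial, real_inner_self_eq_norm_sq]
      ring
    have h2 : ∫ ω, ψ (θ n ω) * (1 / S n ω) * ‖G n ω‖ ^ 2 ∂P ≤ 1 / 2 * I n := by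
      refine (hw.integral_mul_le_of_condExp_le (ℱ.le n) (fun ω => ?_) (h.integrable_sq_G n)
        (hZ.integrable (ℱ.le n)) (h.condExp_sq_G_le n)).trans ?_
      · have := h.S_pos n ω
        positivity
      rw [hI, ← integral_const_mul]
      refine integral_mono (hw.integrable_mul (ℱ.le n) (hZ.integrable (ℱ.le n)))
        (hq_int.const_mul _) fun ω => ?_
      have hS := h.S_pos n ω
      have e : ψ (θ n ω) * (σ₀ * ‖u (θ n ω)‖ ^ 2 + σ₁) ≤ 1 / 2 * ‖u (θ n ω)‖ ^ 2 := by
        rw [hψ, div_mul_eq_mul_div, div_le_iff₀ (by positivity)]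
        nlinarith [sq_nonneg ‖u (θ n ω)‖]
      calc ψ (θ n ω) * (1 / S n ω) * (σ₀ * ‖u (θ n ω)‖ ^ 2 + σ₁)
          = ψ (θ n ω) * (σ₀ * ‖u (θ n ω)‖ ^ 2 + σ₁) / S n ω := by ring
        _ ≤ 1 / 2 * ‖u (θ n ω)‖ ^ 2 / S n ω := by gcongr
        _ = 1 / 2 * (‖u (θ n ω)‖ ^ 2 / S n ω) := by ring
    have hXG := hX.integrable_inner (ℱ.le n) (h.integrable_G n)
    have hwG := hw.integrable_mul (ℱ.le n) (h.integrable_sq_G n)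
    have h3 : ∫ ω, (Φ (n + 1) ω + α * inner ℝ ((1 / S n ω) • u (θ n ω)) (G n ω)) ∂P
        ≤ ∫ ω, (Φ n ω + α * (ψ (θ n ω) * (1 / S n ω) * ‖G n ω‖ ^ 2)
          + α / 8 * (‖u (θ n ω)‖ ^ 2 / S n ω)) ∂P := by
      refine integral_mono ((hΦ_int _).add (hXG.const_mul α))
        (((hΦ_int n).add (hwG.const_mul α)).add (hq_int.const_mul _)) fun ω => ?_
      have := henergy (h.path ω) n
      have e : ψ (θ n ω) * (1 / S n ω)
          = ‖u (θ n ω)‖ ^ 2 / (2 * (σ₀ * ‖u (θ n ω)‖ ^ 2 + σ₁ + 1) * S n ω) := by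
        rw [hψ, div_mul_div_comm, mul_one]
      simp only [e]
      exact this
    rw [integral_add (hΦ_int _) (hXG.const_mul α), integral_const_mul, h1,
      integral_add (f := fun ω => Φ n ω + α * (ψ (θ n ω) * (1 / S n ω) * ‖G n ω‖ ^ 2))
        ((hΦ_int n).add (hwG.const_mul α)) (hq_int.const_mul _),
      integral_add (hΦ_int n) (hwG.const_mul α), integral_const_mul, integral_const_mul] at h3
    have h4 := mul_le_mul_of_nonneg_left h2 hα.le
    change _ ≤ _ + _ + α / 8 * I n at h3
    linarith
  have hΦ0 : ∀ n, 0 ≤ ∫ ω, Φ n ω ∂P := fun n => integral_nonneg fun ω =>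
    adaGradEnergy_nonneg hκ hc₁ hc₂ (hg0 _) (h.S_pos n ω).le
  have hsum : ∀ n, ∫ ω, Φ n ω ∂P + 3 * α / 8 * ∑ k ∈ Finset.range n, I k ≤ ∫ ω, Φ 0 ω ∂P := by
    intro n
    induction n with
    | zero => simp
    | succ n ih =>
      rw [Finset.sum_range_succ]
      linarith [hstep n]
  refine ⟨(∫ ω, Φ 0 ω ∂P) / (3 * α / 8), fun n => ?_⟩
  rw [le_div_iff₀ (by positivity)]
  linarith [hsum n, hΦ0 n]

theorem integral_far_sq_div_le [ProperSpace E] [MeasurableSpace E] [BorelSpace E]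
    (h : StochasticAdaGradNorm P ℱ α σ₀ σ₁ s₀ x₀ u G θ S) (hα : 0 < α) (hs₀ : 0 < s₀)
    (hσ₁ : 0 ≤ σ₁) (hσ₀ : 0 ≤ σ₀) (hu : Continuous u) (j n : ℕ) :
    Integrable (fun ω => (normFar u j).indicator (fun _ => (1 : ℝ)) (θ n ω)
      * (‖G n ω‖ ^ 2 / S n ω)) P ∧
    ∫ ω, (normFar u j).indicator (fun _ => (1 : ℝ)) (θ n ω) * (‖G n ω‖ ^ 2 / S n ω) ∂P
      ≤ (σ₀ + σ₁ * (j + 1) ^ 2) * ∫ ω, ‖u (θ n ω)‖ ^ 2 / S n ω ∂P := by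
  set χ : E → ℝ := (normFar u j).indicator fun _ => 1 with hχ
  have hfar : MeasurableSet (normFar u j) := (isClosed_le continuous_const hu.norm).measurableSet
  have hχ0 : ∀ x, 0 ≤ χ x := fun x => Set.indicator_nonneg (fun _ _ => zero_le_one) x
  have hχm : BoundedMeasurable (ℱ n) fun ω => χ (θ n ω) := by
    refine ⟨((measurable_const.indicator hfar).comp
      (h.stronglyMeasurable_θ n).measurable).stronglyMeasurable, 1, fun ω => ?_⟩
    rw [Real.norm_of_nonneg (hχ0 _)]
    exact Set.indicator_le_self' (fun _ _ => zero_le_one) _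
  have hw := hχm.mul (h.boundedMeasurable_one_div_S hs₀ n)
  have hZ := (h.boundedMeasurable_comp hα.le
    (show Continuous fun x => σ₀ * ‖u x‖ ^ 2 + σ₁ by fun_prop) n).integrable (P := P) (ℱ.le n)
  have e : ∀ ω, χ (θ n ω) * (‖G n ω‖ ^ 2 / S n ω)
      = χ (θ n ω) * (1 / S n ω) * ‖G n ω‖ ^ 2 := fun ω => by ring
  simp_rw [e]
  refine ⟨hw.integrable_mul (ℱ.le n) (h.integrable_sq_G n),
    (hw.integral_mul_le_of_condExp_le (ℱ.le n) (fun ω => ?_) (h.integrable_sq_G n) hZ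
      (h.condExp_sq_G_le n)).trans ?_⟩
  · exact mul_nonneg (hχ0 _) (one_div_nonneg.2 (h.S_pos n ω).le)
  rw [← integral_const_mul]
  refine integral_mono (hw.integrable_mul (ℱ.le n) hZ)
    (((h.boundedMeasurable_sq_div hα.le hs₀ hu n).integrable (ℱ.le n)).const_mul _) fun ω => ?_
  have hS := h.S_pos n ω
  have h1 : χ (θ n ω) * (σ₀ * ‖u (θ n ω)‖ ^ 2 + σ₁)
      ≤ (σ₀ + σ₁ * (j + 1) ^ 2) * ‖u (θ n ω)‖ ^ 2 := by
    by_cases hx : θ n ω ∈ normFar u j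
    · have h2 : 1 ≤ (j + 1 : ℝ) * ‖u (θ n ω)‖ := by
        have : 1 / ((j : ℝ) + 1) ≤ ‖u (θ n ω)‖ := hx
        rwa [div_le_iff₀' (by positivity)] at this
      have h3 : 1 ≤ (j + 1 : ℝ) ^ 2 * ‖u (θ n ω)‖ ^ 2 := by
        rw [← mul_pow]; exact one_le_pow₀ h2
      rw [hχ, Set.indicator_of_mem hx]
      nlinarith
    · rw [hχ, Set.indicator_of_notMem hx, zero_mul]
      positivity
  calc χ (θ n ω) * (1 / S n ω) * (σ₀ * ‖u (θ n ω)‖ ^ 2 + σ₁)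
      = χ (θ n ω) * (σ₀ * ‖u (θ n ω)‖ ^ 2 + σ₁) / S n ω := by ring
    _ ≤ (σ₀ + σ₁ * (j + 1) ^ 2) * ‖u (θ n ω)‖ ^ 2 / S n ω := by gcongr
    _ = (σ₀ + σ₁ * (j + 1) ^ 2) * (‖u (θ n ω)‖ ^ 2 / S n ω) := by ring

theorem ae_cauchySeq_sum_inner [FiniteDimensional ℝ E] [MeasurableSpace E] [BorelSpace E]
    (h : StochasticAdaGradNorm P ℱ α σ₀ σ₁ s₀ x₀ u G θ S) (hα : 0 < α) (hs₀ : 0 < s₀)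
    (hσ₁ : 0 ≤ σ₁) (hσ₀ : 0 ≤ σ₀) (hu : Continuous u) {j : ℕ} {K C : ℝ} {φ : E → E}
    (hφ : Measurable φ) (hφK : ∀ x, ‖φ x‖ ≤ K * (normFar u j).indicator (fun _ => 1) x)
    (hC : ∀ n, ∑ k ∈ Finset.range n, ∫ ω, ‖u (θ k ω)‖ ^ 2 / S k ω ∂P ≤ C) :
    ∀ᵐ ω ∂P, CauchySeq fun n => ∑ k ∈ Finset.range n,
      inner ℝ ((1 / √(S k ω)) • φ (θ k ω)) (G k ω - u (θ k ω)) := by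
  have : ProperSpace E := FiniteDimensional.proper ℝ E
  have : CompleteSpace E := FiniteDimensional.complete ℝ E
  set χ : E → ℝ := (normFar u j).indicator fun _ => 1 with hχ
  have hχ0 : ∀ x, 0 ≤ χ x := fun x => Set.indicator_nonneg (fun _ _ => zero_le_one) x
  have hχ1 : ∀ x, χ x ≤ 1 := fun x => Set.indicator_le_self' (fun _ _ => zero_le_one) _
  have hχsq : ∀ x, χ x ^ 2 = χ x := fun x => by
    by_cases hx : x ∈ normFar u j <;> simp [hχ, hx]
  have hX : ∀ n, BoundedMeasurable (ℱ n) fun ω => (1 / √(S n ω)) • φ (θ n ω) := fun n => by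
    refine (h.boundedMeasurable_one_div_sqrt_S hs₀ n).smul
      ⟨(hφ.comp (h.stronglyMeasurable_θ n).measurable).stronglyMeasurable, |K|, fun ω => ?_⟩
    calc ‖φ (θ n ω)‖ ≤ K * χ (θ n ω) := hφK _
      _ ≤ |K| * 1 := mul_le_mul (le_abs_self K) (hχ1 _) (hχ0 _) (abs_nonneg K)
      _ = |K| := mul_one _
  have huθ := fun n => h.boundedMeasurable_comp hα.le hu n
  have huint := fun n => (huθ n).integrable (P := P) (ℱ.le n)
  set D : ℕ → Ω → ℝ := fun n ω =>
    inner ℝ ((1 / √(S n ω)) • φ (θ n ω)) (G n ω - u (θ n ω)) with hD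
  have hYm : ∀ n, StronglyMeasurable[ℱ (n + 1)] fun ω => G n ω - u (θ n ω) := fun n =>
    (h.stronglyMeasurable_G n).sub ((huθ n).1.mono (ℱ.mono n.le_succ))
  have hDm : ∀ n, StronglyMeasurable[ℱ (n + 1)] (D n) := fun n =>
    ((hX n).1.mono (ℱ.mono n.le_succ)).inner (hYm n)
  have hYL2 : ∀ n, MemLp (fun ω => G n ω - u (θ n ω)) 2 P := fun n => by
    obtain ⟨hm, B, hB⟩ := huθ n
    refine MemLp.sub ?_ (MemLp.of_bound (hm.mono (ℱ.le n)).aestronglyMeasurable B (ae_of_all _ hB))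
    exact (memLp_two_iff_integrable_sq_norm (h.integrable_G n).1).2 (h.integrable_sq_G n)
  have hDL2 : ∀ n, MemLp (D n) 2 P := fun n => by
    obtain ⟨-, B, hB⟩ := hX n
    refine (hYL2 n).of_le_mul (c := B) ((hDm n).mono (ℱ.le _)).aestronglyMeasurable
      (ae_of_all _ fun ω => ?_)
    exact (norm_inner_le_norm _ _).trans (mul_le_mul_of_nonneg_right (hB ω) (norm_nonneg _))
  refine ae_cauchySeq_sum_of_condExp_eq_zero (ℱ := ℱ) hDm hDL2 (fun n => ?_)
    (C := 2 * K ^ 2 * (σ₀ + σ₁ * (j + 1) ^ 2 + 1) * C) fun n => ?_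
  · have h0 : P[fun ω => G n ω - u (θ n ω) | ℱ n] =ᵐ[P] 0 := by
      have h1 := condExp_sub (h.integrable_G n) (huint n) (ℱ n)
      rw [condExp_of_stronglyMeasurable (ℱ.le n) (huθ n).1 (huint n)] at h1
      filter_upwards [h1, h.condExp_G n] with ω h2 h3
      refine h2.trans ?_
      simp [h3]
    refine ((hX n).condExp_inner (ℱ.le n) ((h.integrable_G n).sub (huint n)) h0).trans ?_
    exact ae_of_all _ fun ω => by simp
  · have hk : ∀ k, ∫ ω, D k ω ^ 2 ∂P ≤ 2 * K ^ 2 * (σ₀ + σ₁ * (j + 1) ^ 2 + 1)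
        * ∫ ω, ‖u (θ k ω)‖ ^ 2 / S k ω ∂P := fun k => by
      obtain ⟨hi, hle⟩ := h.integral_far_sq_div_le hα hs₀ hσ₁ hσ₀ hu j k
      have hq := (h.boundedMeasurable_sq_div hα.le hs₀ hu k).integrable (P := P) (ℱ.le k)
      calc ∫ ω, D k ω ^ 2 ∂P
          ≤ ∫ ω, 2 * K ^ 2 * (χ (θ k ω) * (‖G k ω‖ ^ 2 / S k ω)
              + ‖u (θ k ω)‖ ^ 2 / S k ω) ∂P := by
            refine integral_mono (hDL2 k).integrable_sq ((hi.add hq).const_mul _) fun ω => ?_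
            have hS := h.S_pos k ω
            have h1 : |D k ω| ≤ 1 / √(S k ω) * (K * χ (θ k ω)) * ‖G k ω - u (θ k ω)‖ := by
              refine (abs_real_inner_le_norm _ _).trans ?_
              rw [norm_smul, Real.norm_of_nonneg (by positivity)]
              gcongr
              exact hφK _
            have h2 : ‖G k ω - u (θ k ω)‖ ^ 2 ≤ 2 * (‖G k ω‖ ^ 2 + ‖u (θ k ω)‖ ^ 2) := by
              have h3 := pow_le_pow_left₀ (norm_nonneg _) (_root_.norm_sub_le (G k ω) (u (θ k ω))) 2
              nlinarith [sq_nonneg (‖G k ω‖ - ‖u (θ k ω)‖)]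
            have hsq := Real.sq_sqrt hS.le
            calc D k ω ^ 2 = |D k ω| ^ 2 := (sq_abs _).symm
              _ ≤ (1 / √(S k ω) * (K * χ (θ k ω)) * ‖G k ω - u (θ k ω)‖) ^ 2 := by gcongr
              _ = K ^ 2 * χ (θ k ω) / S k ω * ‖G k ω - u (θ k ω)‖ ^ 2 := by
                  rw [mul_pow, mul_pow, mul_pow, div_pow, hsq, hχsq]; ring
              _ ≤ K ^ 2 * χ (θ k ω) / S k ω * (2 * (‖G k ω‖ ^ 2 + ‖u (θ k ω)‖ ^ 2)) := by
                  have := hχ0 (θ k ω)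
                  gcongr
              _ = 2 * K ^ 2 * (χ (θ k ω) * (‖G k ω‖ ^ 2 / S k ω)
                  + χ (θ k ω) * (‖u (θ k ω)‖ ^ 2 / S k ω)) := by ring
              _ ≤ _ := by
                  have : χ (θ k ω) * (‖u (θ k ω)‖ ^ 2 / S k ω) ≤ ‖u (θ k ω)‖ ^ 2 / S k ω :=
                    mul_le_of_le_one_left (by positivity) (hχ1 _)
                  gcongr
        _ = 2 * K ^ 2 * (∫ ω, χ (θ k ω) * (‖G k ω‖ ^ 2 / S k ω) ∂P
              + ∫ ω, ‖u (θ k ω)‖ ^ 2 / S k ω ∂P) := by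
            rw [integral_const_mul, integral_add hi hq]
        _ ≤ 2 * K ^ 2 * ((σ₀ + σ₁ * (j + 1) ^ 2) * ∫ ω, ‖u (θ k ω)‖ ^ 2 / S k ω ∂P
              + ∫ ω, ‖u (θ k ω)‖ ^ 2 / S k ω ∂P) := by gcongr
        _ = _ := by ring
    refine (Finset.sum_le_sum fun k _ => hk k).trans ?_
    rw [← Finset.mul_sum]
    gcongr
    exact hC n

theorem ae_tendsto_norm_gradient_zero [FiniteDimensional ℝ E] [MeasurableSpace E] [BorelSpace E]
    (h : StochasticAdaGradNorm P ℱ α σ₀ σ₁ s₀ x₀ u G θ S) (hα : 0 < α) (hs₀ : 0 < s₀)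
    (hσ₀ : 0 ≤ σ₀) (hσ₁ : 0 ≤ σ₁) {g : E → ℝ} {L δt δ₀ δ₁ : ℝ} (hL : 0 < L) (hδt : 0 < δt)
    (hδ₀ : 0 < δ₀) (hg : Continuous g) (hg0 : ∀ x, 0 ≤ g x)
    (hdesc : ∀ x y, g y ≤ g x + inner ℝ (u x) (y - x) + L * ‖y - x‖ ^ 2)
    (hlip : ∀ x y, ‖u x - u y‖ ≤ L * ‖x - y‖)
    (hflat : ∀ᶠ x in Bornology.cobounded E, δt < ‖u x‖)
    (hcoer : Tendsto g (Bornology.cobounded E) atTop)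
    (hsard : interior (closure {y : ℝ | ∃ x : E, u x = 0 ∧ g x = y}) = ∅)
    (hsharp : ∀ᵐ ω ∂P, ∀ n, ‖u (θ n ω)‖ ≤ δ₀ → ‖G n ω‖ ≤ δ₁) :
    ∀ᵐ ω ∂P, Tendsto (fun n => ‖u (θ n ω)‖) atTop (𝓝 0) := by
  have : ProperSpace E := FiniteDimensional.proper ℝ E
  have hu : Continuous u :=
    (LipschitzWith.of_dist_le_mul (K := ⟨L, hL.le⟩) fun x y => by
      rw [dist_eq_norm, dist_eq_norm]; exact hlip x y).continuous
  obtain ⟨C, hC⟩ := h.exists_sum_integral_sq_div_le hα hs₀ hL.le hσ₀ hσ₁ hg hu hg0 hdesc hlip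
  have hfar0 : ∀ j x, 0 ≤ (normFar u j).indicator (fun _ => (1 : ℝ)) x := fun j x =>
    Set.indicator_nonneg (fun _ _ => zero_le_one) x
  have hshell : ∀ j, MeasurableSet (normShell u j) := fun j =>
    ((isClosed_le continuous_const hu.norm).inter
      (isClosed_le hu.norm continuous_const)).measurableSet
  have hU := ae_summable_of_sum_integral_le (P := P) (F := fun k ω => ‖u (θ k ω)‖ ^ 2 / S k ω)
    (fun n ω => div_nonneg (sq_nonneg _) (h.S_pos n ω).le)
    (fun n => (h.boundedMeasurable_sq_div hα.le hs₀ hu n).integrable (ℱ.le n)) hC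
  have hQ : ∀ᵐ ω ∂P, ∀ j, Summable fun k =>
      (normFar u j).indicator (fun _ => (1 : ℝ)) (θ k ω) * (‖G k ω‖ ^ 2 / S k ω) := by
    refine ae_all_iff.2 fun j => ae_summable_of_sum_integral_le
      (C := (σ₀ + σ₁ * (j + 1) ^ 2) * C)
      (fun n ω => mul_nonneg (hfar0 j _) (div_nonneg (sq_nonneg _) (h.S_pos n ω).le))
      (fun n => (h.integral_far_sq_div_le hα hs₀ hσ₁ hσ₀ hu j n).1) fun n => ?_
    refine (Finset.sum_le_sum fun k _ =>
      (h.integral_far_sq_div_le hα hs₀ hσ₁ hσ₀ hu j k).2).trans ?_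
    rw [← Finset.mul_sum]
    gcongr
    exact hC n
  have hindicator : ∀ j {K : ℝ} {φ : E → E}, 0 ≤ K → (∀ x ∈ normShell u j, ‖φ x‖ ≤ K) → ∀ x,
      ‖(normShell u j).indicator φ x‖ ≤ K * (normFar u j).indicator (fun _ => 1) x := by
    intro j K φ hK hφ x
    by_cases hx : x ∈ normShell u j
    · rw [Set.indicator_of_mem hx, Set.indicator_of_mem (normShell_subset_normFar u j hx), mul_one]
      exact hφ x hx
    · rw [Set.indicator_of_notMem hx, norm_zero]
      exact mul_nonneg hK (hfar0 j x)
  have hP : ∀ᵐ ω ∂P, ∀ j, CauchySeq fun n => ∑ k ∈ Finset.range n,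
      inner ℝ ((normShell u j).indicator u (θ k ω)) (G k ω - u (θ k ω)) / √(S k ω) := by
    refine ae_all_iff.2 fun j => ?_
    filter_upwards [h.ae_cauchySeq_sum_inner hα hs₀ hσ₁ hσ₀ hu (j := j)
      (hu.measurable.indicator (hshell j))
      (hindicator j (Nat.cast_nonneg j) fun x hx => hx.2) hC] with ω hω
    convert hω using 4 with n k
    rw [inner_smul_left, conj_trivial]
    ring
  let b := stdOrthonormalBasis ℝ E
  have hV : ∀ᵐ ω ∂P, ∀ j, CauchySeq fun n => ∑ k ∈ Finset.range n,
      (normShell u j).indicator (fun _ => (1 : ℝ)) (θ k ω) •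
        ((1 / √(S k ω)) • (G k ω - u (θ k ω))) := by
    refine ae_all_iff.2 fun j => ?_
    have hb : ∀ᵐ ω ∂P, ∀ i, CauchySeq fun n => ∑ k ∈ Finset.range n,
        inner ℝ ((1 / √(S k ω)) • (normShell u j).indicator (fun _ => b i) (θ k ω))
          (G k ω - u (θ k ω)) := by
      refine ae_all_iff.2 fun i => h.ae_cauchySeq_sum_inner hα hs₀ hσ₁ hσ₀ hu (j := j)
        (measurable_const.indicator (hshell j))
        (hindicator j zero_le_one fun x _ => (b.orthonormal.1 i).le) hC
    filter_upwards [hb] with ω hω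
    choose c hc using fun i => cauchySeq_tendsto_of_complete (hω i)
    refine (Tendsto.congr (fun n => ?_)
      (tendsto_finsetSum Finset.univ fun i _ => (hc i).smul_const (b i))).cauchySeq
    simp_rw [Finset.sum_smul]
    rw [Finset.sum_comm]
    refine Finset.sum_congr rfl fun k _ => ?_
    rw [← b.sum_repr' ((normShell u j).indicator (fun _ => (1 : ℝ)) (θ k ω) •
        ((1 / √(S k ω)) • (G k ω - u (θ k ω))))]
    refine Finset.sum_congr rfl fun i _ => ?_
    congr 1
    by_cases hx : θ k ω ∈ normShell u j <;> simp [hx, inner_smul_left, inner_smul_right]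
  filter_upwards [hU, hQ, hP, hV, hsharp] with ω h1 h2 h3 h4 h5
  exact (h.path ω).tendsto_norm_gradient_zero hα hL hδt hδ₀ hg hg0 hdesc hlip hflat hcoer hsard h5
    h1 h2 h4 h3

end StochasticAdaGradNorm

end Stochastic

/-- Theorem 5.2 (Almost sure convergence of AdaGrad-Norm):
`lim_{n→∞} ‖∇g(θ_n)‖ = 0` almost surely. -/
theorem adagrad_norm_almost_sure_convergence
    {d : ℕ} {Ω : Type*} {m0 : MeasurableSpace Ω} (P : Measure Ω) [IsProbabilityMeasure P]
    (ℱ : Filtration ℕ m0)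
    (g : EuclideanSpace ℝ (Fin d) → ℝ)
    (L σ₀ σ₁ α₀ S₀ δt δ₀ δ₁ : ℝ)
    (hL : 0 < L) (hσ₀ : 0 ≤ σ₀) (hσ₁ : 0 ≤ σ₁) (hα₀ : 0 < α₀) (hS₀ : 0 < S₀)
    (hδ₀ : 0 < δ₀) (hδ₁ : 0 < δ₁)
    (hg_diff : ContDiff ℝ 1 g)
    (hg_nonneg : ∀ x, 0 ≤ g x)
    (hg_smooth : ∀ x y, ‖gradient g x - gradient g y‖ ≤ L * ‖x - y‖)
    (hδt : 0 < δt)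
    (hflat : ∀ᶠ x in Bornology.cobounded (EuclideanSpace ℝ (Fin d)),
      δt < ‖gradient g x‖)
    (hg_coercive : Tendsto g (Bornology.cobounded (EuclideanSpace ℝ (Fin d))) atTop)
    (hg_sard : interior (closure {y : ℝ |
      ∃ x : EuclideanSpace ℝ (Fin d), gradient g x = 0 ∧ g x = y}) = ∅)
    (θ₁ : EuclideanSpace ℝ (Fin d))
    (G θ : ℕ → Ω → EuclideanSpace ℝ (Fin d))
    (S : ℕ → Ω → ℝ)
    (hG_meas : ∀ n, 1 ≤ n → StronglyMeasurable[ℱ n] (G n))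
    (hG_int : ∀ n, 1 ≤ n → Integrable (G n) P)
    (hG_sq_int : ∀ n, 1 ≤ n → Integrable (fun ω => ‖G n ω‖ ^ 2) P)
    (hθ_adapted : ∀ n, 1 ≤ n → StronglyMeasurable[ℱ (n - 1)] (θ n))
    (hθ_init : ∀ ω, θ 1 ω = θ₁)
    (hS_init : ∀ ω, S 0 ω = S₀)
    (hS_rec : ∀ n, 1 ≤ n → ∀ ω, S n ω = S (n - 1) ω + ‖G n ω‖ ^ 2)
    (hθ_rec : ∀ n, 1 ≤ n → ∀ ω,
      θ (n + 1) ω = θ n ω - (α₀ / Real.sqrt (S n ω)) • G n ω)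
    (hG_unbiased : ∀ n, 1 ≤ n →
      P[G n | ℱ (n - 1)] =ᵐ[P] fun ω => gradient g (θ n ω))
    (hG_var : ∀ n, 1 ≤ n → ∀ᵐ ω ∂P,
      (P[fun ω => ‖G n ω‖ ^ 2 | ℱ (n - 1)]) ω ≤ σ₀ * ‖gradient g (θ n ω)‖ ^ 2 + σ₁)
    (hG_sharp : ∀ᵐ ω ∂P, ∀ n, 1 ≤ n →
      ‖gradient g (θ n ω)‖ ≤ δ₀ → ‖G n ω‖ ≤ δ₁) :
    ∀ᵐ ω ∂P, Tendsto (fun n => ‖gradient g (θ n ω)‖) atTop (𝓝 0) := by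
  have hdesc := le_quadratic_of_lipschitz_gradient hL.le (hg_diff.differentiable one_ne_zero)
    hg_smooth
  have h : StochasticAdaGradNorm P ℱ α₀ σ₀ σ₁ S₀ θ₁ (gradient g) (fun n => G (n + 1))
      (fun n => θ (n + 1)) S :=
    { path := fun ω =>
        { S_zero_pos := by rw [hS_init]; exact hS₀
          S_succ := fun n => hS_rec (n + 1) n.succ_pos ω
          θ_succ := fun n => hθ_rec (n + 1) n.succ_pos ω }
      S_zero := hS_init
      θ_zero := hθ_init
      stronglyMeasurable_G := fun n => hG_meas (n + 1) n.succ_pos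
      stronglyMeasurable_θ := fun n => hθ_adapted (n + 1) n.succ_pos
      integrable_G := fun n => hG_int (n + 1) n.succ_pos
      integrable_sq_G := fun n => hG_sq_int (n + 1) n.succ_pos
      condExp_G := fun n => hG_unbiased (n + 1) n.succ_pos
      condExp_sq_G_le := fun n => hG_var (n + 1) n.succ_pos }
  have hsharp : ∀ᵐ ω ∂P, ∀ n, ‖gradient g (θ (n + 1) ω)‖ ≤ δ₀ → ‖G (n + 1) ω‖ ≤ δ₁ :=
    hG_sharp.mono fun ω hω n => hω (n + 1) n.succ_pos
  filter_upwards [h.ae_tendsto_norm_gradient_zero hα₀ hS₀ hσ₀ hσ₁ hL hδt hδ₀ hg_diff.continuous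
    hg_nonneg hdesc hg_smooth hflat hg_coercive hg_sard hsharp] with ω hω
  exact (tendsto_add_atTop_iff_nat 1).1 hω
end
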